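/- arXiv:2509.05055 — 3 statements merged into one kernel-verified Lean document; each statement's English description precedes it below -/
import Mathlib

section
/- There exists an absolute constant C > 0 such that for every integer d ≥ 1, the oriented hypercube Q⃗_d satisfies r⃗(Q⃗_d) ≤ C · d³ · 17^d. -/
/-- A tournament: a digraph in which every pair of distinct vertices is joined
by an edge in exactly one direction, and there are no loops. -/
def Digraph.IsTournament {V : Type*} (T : Digraph V) : Prop :=
  (∀ v : V, ¬ T.Adj v v) ∧ ∀ u v : V, u ≠ v → (T.Adj u v ↔ ¬ T.Adj v u)

/-- `T` contains a copy of `G`: an injective map preserving directed edges. -/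
def Digraph.ContainsCopy {V W : Type*} (T : Digraph W) (G : Digraph V) : Prop :=
  ∃ φ : V → W, Function.Injective φ ∧ ∀ u v : V, G.Adj u v → T.Adj (φ u) (φ v)

/-- The oriented Ramsey number of `G`: the least `N` such that every tournament on `N`
vertices contains a copy of `G`. -/
noncomputable def orientedRamsey {V : Type*} (G : Digraph V) : ℕ :=
  sInf {N : ℕ | ∀ T : Digraph (Fin N), T.IsTournament → T.ContainsCopy G}

/-- The oriented hypercube `Q⃗_d` on vertex set `{0,1}^d`: there is an edge from `u` to `v`
iff `v` differs from `u` in exactly one coordinate, which is `0` in `u` and `1` in `v`. -/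
def hypercubeDigraph (d : ℕ) : Digraph (Fin d → Bool) where
  Adj u v := ∃ i : Fin d, u i = false ∧ v i = true ∧ ∀ j : Fin d, j ≠ i → v j = u j

open Classical in
/-- Derandomised random greedy choice of an injective map. -/
lemma greedy_choice {X ι : Type*} [DecidableEq X] (M : ℕ) (hM : 0 < M) (Nb : X → Finset ℕ)
    (I : Finset ι) (P : ι → Finset X) (τ : ι → X → ℕ) (S : Finset X) :
    ∀ (D : Finset X) (φ₀ : X → ℕ), Disjoint D S → Set.InjOn φ₀ D →
    (∀ x ∈ S, D.card + S.card + M ≤ (Nb x).card) →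
    (∑ i ∈ I, (if ∀ x ∈ P i, x ∉ S → φ₀ x = τ i x then ((1:ℝ) / M) ^ (P i ∩ S).card else 0)) < 1 →
    ∃ φ : X → ℕ, (∀ x ∉ S, φ x = φ₀ x) ∧ (∀ x ∈ S, φ x ∈ Nb x) ∧
      Set.InjOn φ (D ∪ S : Finset X) ∧ ∀ i ∈ I, ∃ x ∈ P i, φ x ≠ τ i x := by
  induction S using Finset.induction_on with
  | empty =>
    intro D φ₀ _ hinj _ hsum
    refine ⟨φ₀, by simp, by simp, by simpa using hinj, ?_⟩
    intro i hi
    by_contra! hcon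
    have h1 := Finset.single_le_sum (f := fun i => (if ∀ x ∈ P i, x ∉ (∅ : Finset X) → φ₀ x = τ i x then ((1:ℝ) / M) ^ (P i ∩ ∅).card else 0)) (fun j _ => by positivity) hi
    have h2 : ∀ x ∈ P i, x ∉ (∅ : Finset X) → φ₀ x = τ i x := fun x hx _ => hcon x hx
    refine absurd (lt_of_le_of_lt h1 hsum) ?_
    beta_reduce
    rw [if_pos h2]
    simp
  | insert x S hx ih =>
    intro D φ₀ hdis hinj hcard hsum
    set A := Nb x \ D.image φ₀ with hA
    have hMR : (0:ℝ) < M := by exact_mod_cast hM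
    have hAc : M ≤ A.card := by
      have h1 := hcard x (by simp)
      have h2 : (Nb x).card - (D.image φ₀).card ≤ A.card := Finset.le_card_sdiff (D.image φ₀) (Nb x)
      have h3 := Finset.card_image_le (s := D) (f := φ₀)
      omega
    have hxD : x ∉ D := fun h => (Finset.disjoint_left.1 hdis h) (by simp)
    have key : ∃ v ∈ A, (∑ i ∈ I, (if ∀ y ∈ P i, y ∉ S → Function.update φ₀ x v y = τ i y then ((1:ℝ) / M) ^ (P i ∩ S).card else 0)) < 1 := by
      apply Finset.exists_lt_of_sum_lt (s := A) (g := fun _ => (1:ℝ))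
      rw [Finset.sum_comm]
      have hb : ∀ i ∈ I, (∑ v ∈ A, (if ∀ y ∈ P i, y ∉ S → Function.update φ₀ x v y = τ i y then ((1:ℝ) / M) ^ (P i ∩ S).card else 0)) ≤ A.card * (if ∀ y ∈ P i, y ∉ insert x S → φ₀ y = τ i y then ((1:ℝ) / M) ^ (P i ∩ insert x S).card else 0) := by
        intro i _
        by_cases hag : ∀ y ∈ P i, y ∉ insert x S → φ₀ y = τ i y
        · rw [if_pos hag]
          by_cases hxP : x ∈ P i
          · have hc : (P i ∩ insert x S).card = (P i ∩ S).card + 1 := by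
              rw [Finset.inter_insert_of_mem hxP, Finset.card_insert_of_notMem (by simp [hx])]
            rw [hc, pow_succ]
            calc _ ≤ ∑ v ∈ A, (if v = τ i x then ((1:ℝ) / M) ^ (P i ∩ S).card else 0) := by
                  apply Finset.sum_le_sum
                  intro v _
                  by_cases h : ∀ y ∈ P i, y ∉ S → Function.update φ₀ x v y = τ i y
                  · have := h x hxP hx
                    simp at this
                    rw [if_pos h, if_pos this]
                  · rw [if_neg h]; positivity
              _ ≤ ((1:ℝ) / M) ^ (P i ∩ S).card := by
                  rw [Finset.sum_ite_eq']
                  split_ifs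
                  · exact le_rfl
                  · positivity
              _ ≤ _ := by
                  have : (1:ℝ) ≤ A.card * (1 / M) := by
                    rw [mul_one_div, le_div_iff₀ hMR, one_mul]; exact_mod_cast hAc
                  have h0 : (0:ℝ) ≤ ((1:ℝ) / M) ^ (P i ∩ S).card := by positivity
                  nlinarith
          · rw [Finset.inter_insert_of_notMem hxP, ← nsmul_eq_mul]
            apply Finset.sum_le_card_nsmul
            intro v _
            split_ifs
            · exact le_rfl
            · positivity
        · rw [if_neg hag, mul_zero]
          apply le_of_eq
          apply Finset.sum_eq_zero
          intro v _
          rw [if_neg]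
          intro h
          apply hag
          intro y hy hyS
          simp only [Finset.mem_insert, not_or] at hyS
          have := h y hy hyS.2
          rwa [Function.update_of_ne hyS.1] at this
      refine (Finset.sum_le_sum hb).trans_lt ?_
      rw [← Finset.mul_sum]
      simp only [Finset.sum_const, nsmul_eq_mul, mul_one]
      have hApos : (0:ℝ) < A.card := by exact_mod_cast (hM.trans_le hAc)
      nlinarith
    obtain ⟨v, hv, hlt⟩ := key
    rw [hA, Finset.mem_sdiff] at hv
    obtain ⟨φ, h1, h2, h3, h4⟩ := ih (insert x D) (Function.update φ₀ x v) (by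
        rw [Finset.disjoint_insert_left]
        exact ⟨hx, hdis.mono_right (Finset.subset_insert _ _)⟩) (by
        intro a ha b hb hab
        simp only [Finset.coe_insert, Set.mem_insert_iff, Finset.mem_coe] at ha hb
        have hne : ∀ c ∈ D, φ₀ c ≠ v := fun c hc h => hv.2 (Finset.mem_image.2 ⟨c, hc, h⟩)
        have hnx : ∀ c ∈ D, c ≠ x := fun c hc h => hxD (h ▸ hc)
        rcases ha with rfl | ha <;> rcases hb with rfl | hb
        · rfl
        · rw [Function.update_self, Function.update_of_ne (hnx b hb)] at hab
          exact absurd hab.symm (hne b hb)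
        · rw [Function.update_self, Function.update_of_ne (hnx a ha)] at hab
          exact absurd hab (hne a ha)
        · rw [Function.update_of_ne (hnx a ha), Function.update_of_ne (hnx b hb)] at hab
          exact hinj ha hb hab) (by
        intro y hy
        have := hcard y (by simp [hy])
        rw [Finset.card_insert_of_notMem hx] at this
        rw [Finset.card_insert_of_notMem hxD]
        omega) hlt
    refine ⟨φ, ?_, ?_, ?_, h4⟩
    · intro y hy
      simp only [Finset.mem_insert, not_or] at hy
      rw [h1 y hy.2, Function.update_of_ne hy.1]
    · intro y hy
      rcases Finset.mem_insert.1 hy with rfl | hy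
      · rw [h1 y hx, Function.update_self]; exact hv.1
      · exact h2 y hy
    · convert h3 using 2
      ext; simp

open Classical in
/-- Dependent random choice. -/
lemma drc_step (R : ℕ → ℕ → Prop) (W S : Finset ℕ) (δ : ℝ) (hδ : 0 < δ) (t q h : ℕ)
    (hW : W.Nonempty) (hS : S.Nonempty) (hh : 0 < h)
    (he : δ * W.card * S.card ≤ ∑ w ∈ W, ((S.filter (fun s => R w s)).card : ℝ)) :
    ∃ U ⊆ W, δ ^ t * W.card / 2 ≤ U.card ∧
      (((Fintype.piFinset (fun _ : Fin q => U)).filter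
        (fun τ => (S.filter (fun v => ∀ j, R (τ j) v)).card < h)).card : ℝ) * δ ^ t
        ≤ 2 * W.card ^ q * ((h : ℝ) / S.card) ^ t := by
  have hWp : (0:ℝ) < W.card := by exact_mod_cast hW.card_pos
  have hSp : (0:ℝ) < S.card := by exact_mod_cast hS.card_pos
  have hhp : (0:ℝ) < h := by exact_mod_cast hh
  set Ω := Fintype.piFinset (fun _ : Fin t => S) with hΩ
  have hΩc : (Ω.card : ℝ) = (S.card : ℝ) ^ t := by
    rw [hΩ, Fintype.card_piFinset]; simp
  have hΩne : Ω.Nonempty := by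
    rw [← Finset.card_pos]
    have : (0:ℝ) < Ω.card := by rw [hΩc]; positivity
    exact_mod_cast this
  set U : (Fin t → ℕ) → Finset ℕ := fun T => W.filter (fun w => ∀ j, R w (T j)) with hU
  set B : (Fin t → ℕ) → Finset (Fin q → ℕ) := fun T =>
    (Fintype.piFinset (fun _ : Fin q => U T)).filter
        (fun τ => (S.filter (fun v => ∀ j, R (τ j) v)).card < h) with hB
  have hX : (S.card : ℝ) ^ t * (δ ^ t * W.card) ≤ ∑ T ∈ Ω, ((U T).card : ℝ) := by
    have e1 : ∑ T ∈ Ω, ((U T).card : ℝ) = ∑ w ∈ W, ((S.filter (fun s => R w s)).card : ℝ) ^ t := by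
      simp only [hU, Finset.card_filter]
      push_cast
      rw [Finset.sum_comm]
      apply Finset.sum_congr rfl
      intro w _
      have : (Fintype.piFinset (fun _ : Fin t => S.filter (fun s => R w s))) = Ω.filter (fun T => ∀ j, R w (T j)) := by
        ext T; simp [hΩ, Fintype.mem_piFinset, forall_and]
      have h2 := congrArg Finset.card this
      rw [Fintype.card_piFinset] at h2
      simp only [Finset.prod_const, Finset.card_univ, Fintype.card_fin] at h2
      have h3 : ((S.filter (fun s => R w s)).card : ℝ) ^ t = ((Ω.filter (fun T => ∀ j, R w (T j))).card : ℝ) := by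
        exact_mod_cast h2
      simp only [Finset.card_filter] at h3
      push_cast at h3
      exact h3.symm
    rw [e1]
    rcases t with _ | t
    · simp
    · have h1 := pow_sum_div_card_le_sum_pow (s := W) (f := fun w => ((S.filter (fun s => R w s)).card : ℝ)) (fun _ _ => by positivity) t
      refine le_trans ?_ h1
      rw [le_div_iff₀ (by positivity)]
      calc _ = (δ * W.card * S.card) ^ (t+1) := by ring
        _ ≤ _ := pow_le_pow_left₀ (by positivity) he _
  have hY : ∑ T ∈ Ω, ((B T).card : ℝ) ≤ (W.card : ℝ) ^ q * (h : ℝ) ^ t := by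
    set Z := (Fintype.piFinset (fun _ : Fin q => W)).filter
        (fun τ => (S.filter (fun v => ∀ j, R (τ j) v)).card < h) with hZ
    have hZc : Z.card ≤ W.card ^ q := by
      refine (Finset.card_filter_le _ _).trans ?_
      rw [Fintype.card_piFinset]; simp
    have e1 : ∀ T ∈ Ω, B T = Z.filter (fun τ => ∀ i j, R (τ i) (T j)) := by
      intro T _
      ext τ
      simp only [hB, hU, hZ, Finset.mem_filter, Fintype.mem_piFinset]
      grind
    have e2 : ∑ T ∈ Ω, (B T).card = ∑ τ ∈ Z, (Ω.filter (fun T => ∀ i j, R (τ i) (T j))).card := by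
      rw [Finset.sum_congr rfl (fun T hT => by rw [e1 T hT])]
      simp only [Finset.card_filter]
      rw [Finset.sum_comm]
    have e3 : ∑ T ∈ Ω, (B T).card ≤ W.card ^ q * h ^ t := by
      rw [e2]
      refine (Finset.sum_le_card_nsmul Z _ (h ^ t) ?_).trans ?_
      · intro τ hτ
        have : Ω.filter (fun T => ∀ i j, R (τ i) (T j)) = Fintype.piFinset (fun _ : Fin t => S.filter (fun v => ∀ j, R (τ j) v)) := by
          ext T; simp only [hΩ, Fintype.mem_piFinset, Finset.mem_filter]; grind
        rw [this, Fintype.card_piFinset]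
        simp only [Finset.prod_const, Finset.card_univ, Fintype.card_fin]
        exact Nat.pow_le_pow_left (Finset.mem_filter.1 hτ).2.le _
      · rw [smul_eq_mul]; exact Nat.mul_le_mul_right _ hZc
    exact_mod_cast e3
  set c : ℝ := δ ^ t * W.card / (2 * W.card ^ q * ((h : ℝ) / S.card) ^ t) with hc
  have hcp : 0 < c := by positivity
  have hex : ∃ T ∈ Ω, δ ^ t * W.card / 2 ≤ ((U T).card : ℝ) - c * (B T).card := by
    apply Finset.exists_le_of_sum_le hΩne
    rw [Finset.sum_const, nsmul_eq_mul, hΩc, Finset.sum_sub_distrib, ← Finset.mul_sum]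
    have h1 : c * ∑ T ∈ Ω, ((B T).card : ℝ) ≤ c * ((W.card : ℝ) ^ q * (h : ℝ) ^ t) :=
      mul_le_mul_of_nonneg_left hY hcp.le
    have h2 : c * ((W.card : ℝ) ^ q * (h : ℝ) ^ t) = (S.card : ℝ) ^ t * (δ ^ t * W.card) / 2 := by
      rw [hc, div_pow]; field_simp
    linarith
  obtain ⟨T, _, hT⟩ := hex
  have hUW : U T ⊆ W := Finset.filter_subset _ _
  refine ⟨U T, hUW, ?_, ?_⟩
  · have : 0 ≤ c * (B T).card := by positivity
    linarith
  · have h1 : c * (B T).card ≤ W.card := by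
      have : ((U T).card : ℝ) ≤ W.card := by exact_mod_cast Finset.card_le_card hUW
      have : 0 ≤ δ ^ t * W.card / 2 := by positivity
      linarith
    have h2 : c * (B T).card = ((B T).card * δ ^ t) * W.card / (2 * W.card ^ q * ((h : ℝ) / S.card) ^ t) := by
      rw [hc]; ring
    rw [h2, div_le_iff₀ (by positivity)] at h1
    have h3 : ((B T).card * δ ^ t) * W.card ≤ (2 * W.card ^ q * ((h : ℝ) / S.card) ^ t) * W.card := by linarith
    exact le_of_mul_le_mul_right h3 hWp
/-- Number of forward edges of a list. -/
def fwdEdges {V : Type*} (R : V → V → Bool) : List V → ℕ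
  | [] => 0
  | x :: l => l.countP (R x) + fwdEdges R l

lemma fwdEdges_append_perm {V : Type*} (R : V → V → Bool) (A X Y : List V) (h : X.Perm Y) :
    fwdEdges R (A ++ X) + fwdEdges R Y = fwdEdges R (A ++ Y) + fwdEdges R X := by
  induction A with
  | nil => simp [add_comm]
  | cons a A ih =>
    simp only [List.cons_append, fwdEdges]
    have : (A ++ X).countP (R a) = (A ++ Y).countP (R a) := (h.append_left A).countP_eq _
    omega

lemma fwdEdges_move {V : Type*} (R : V → V → Bool) (B C : List V) (v : V) :
    fwdEdges R (B ++ v :: C) + B.countP (R v) = fwdEdges R (v :: (B ++ C)) + B.countP (fun b => R b v) := by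
  induction B with
  | nil => simp
  | cons b B ih =>
    simp only [List.cons_append, fwdEdges, List.countP_cons, List.countP_append] at ih ⊢
    omega

open Classical in
lemma exists_median_list (N : ℕ) (T : Digraph (Fin N)) (hT : T.IsTournament) :
    ∃ l : List (Fin N), l.Nodup ∧ l.length = N ∧ ∀ A B v C, l = A ++ (B ++ v :: C) →
      B.length ≤ 2 * B.countP (fun b => decide (T.Adj b v)) := by
  set R : Fin N → Fin N → Bool := fun a b => decide (T.Adj a b) with hR
  have hne : (List.finRange N).permutations.toFinset.Nonempty :=
    ⟨List.finRange N, by simp⟩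
  obtain ⟨l, hl, hmax⟩ := Finset.exists_max_image _ (fwdEdges R) hne
  have hp : l.Perm (List.finRange N) := by simpa using hl
  have hnd : l.Nodup := hp.nodup_iff.2 (List.nodup_finRange N)
  refine ⟨l, hnd, by rw [hp.length_eq]; simp, ?_⟩
  intro A B v C h
  have hperm : (B ++ v :: C).Perm (v :: (B ++ C)) := List.perm_middle
  have h1 := hmax (A ++ v :: (B ++ C)) (by
    simp only [List.mem_toFinset, List.mem_permutations]
    refine List.Perm.trans ?_ hp
    rw [h]
    exact hperm.symm.append_left A)
  rw [h] at h1
  have h2 := fwdEdges_append_perm R A _ _ hperm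
  have h3 := fwdEdges_move R B C v
  have h4 : B.length = B.countP (fun b => R b v) + B.countP (R v) := by
    rw [List.length_eq_countP_add_countP (fun b => R b v)]
    congr 1
    apply List.countP_congr
    intro b hb
    have hbv : b ≠ v := by
      rintro rfl
      rw [h] at hnd
      have := (List.nodup_append.1 hnd).2.1
      have := (List.nodup_append.1 this).2.2 b hb b (by simp)
      exact this rfl
    have := hT.2 b v hbv
    simp [hR]
    tauto
  change B.length ≤ 2 * B.countP (fun b => R b v)
  omega

open Classical in
/-- Median orders, indexed by natural numbers. -/
lemma exists_median_fun (N : ℕ) (hN : 0 < N) (T : Digraph (Fin N)) (hT : T.IsTournament) :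
    ∃ σ : ℕ → Fin N, (∀ a < N, ∀ b < N, σ a = σ b → a = b) ∧ ∀ i j, i ≤ j → j < N →
      j - i ≤ 2 * ((Finset.Ico i j).filter (fun x => T.Adj (σ x) (σ j))).card := by
  obtain ⟨l, hnd, hlen, hmed⟩ := exists_median_list N T hT
  set σ : ℕ → Fin N := fun i => l.getD i ⟨0, hN⟩ with hσ
  have hlσ : l = (List.range N).map σ := by
    apply List.ext_getElem
    · simp [hlen]
    · intro i h1 h2
      simp [hσ, h1]
  refine ⟨σ, ?_, ?_⟩
  · rw [hlσ] at hnd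
    have := List.inj_on_of_nodup_map hnd
    intro a ha b hb hab
    exact this (by simpa using ha) (by simpa using hb) hab
  · intro i j hij hj
    have hr : List.range N = List.range' 0 i ++ (List.range' i (j - i) ++ j :: List.range' (j+1) (N - (j + 1))) := by
      have e1 : j :: List.range' (j+1) (N - (j + 1)) = List.range' j (N - j) := by
        rw [show N - j = (N - (j+1)) + 1 by omega, List.range'_succ]
      have e2 : List.range' i (j - i) ++ List.range' j (N - j) = List.range' i (N - i) := by
        have := List.range'_append_1 (s := i) (m := j - i) (n := N - j)
        rw [show i + (j - i) = j by omega, show (j - i) + (N - j) = N - i by omega] at this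
        exact this
      have e3 : List.range' 0 i ++ List.range' i (N - i) = List.range' 0 N := by
        have := List.range'_append_1 (s := 0) (m := i) (n := N - i)
        rw [show 0 + i = i by omega, show i + (N - i) = N by omega] at this
        exact this
      rw [e1, e2, e3, List.range_eq_range']
    have h := hmed ((List.range' 0 i).map σ) ((List.range' i (j - i)).map σ) (σ j) ((List.range' (j+1) (N - (j + 1))).map σ) (by
      rw [hlσ, hr]; simp)
    rw [List.length_map, List.length_range', List.countP_map] at h
    convert h using 2
    rw [Finset.card_def, Finset.filter_val]
    change (Multiset.filter _ (↑(List.range' i (j - i)) : Multiset ℕ)).card = _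
    rw [Multiset.filter_coe, Multiset.coe_card, List.countP_eq_length_filter]
    rfl

open Classical in
/-- A set inside a window of a median order receives many edges from some earlier window. -/
lemma dense_window (R : ℕ → ℕ → Prop) (N : ℕ) (hR : ∀ i j, i ≤ j → j < N →
      j - i ≤ 2 * ((Finset.Ico i j).filter (fun x => R x j)).card)
    (L r a : ℕ) (hr : 0 < r) (ha : r * L ≤ a) (haN : a + L ≤ N) (S : Finset ℕ)
    (hS : S ⊆ Finset.Ico a (a + L)) :
    ∃ b, b + L ≤ a ∧ a ≤ b + r * L ∧
      (r - 1) * L * S.card ≤ 2 * r * ∑ w ∈ Finset.Ico b (b + L), (S.filter (fun s => R w s)).card := by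
  set a0 := a - r * L with ha0
  set f : ℕ → ℕ := fun w => (S.filter (fun s => R w s)).card with hf
  have hsplit : ∀ n, ∑ i ∈ Finset.range n, ∑ w ∈ Finset.Ico (a0 + i * L) (a0 + i * L + L), f w = ∑ w ∈ Finset.Ico a0 (a0 + n * L), f w := by
    intro n
    induction n with
    | zero => simp
    | succ n ih =>
      rw [Finset.sum_range_succ, ih, show a0 + (n+1) * L = a0 + n * L + L by ring]
      exact Finset.sum_Ico_consecutive f (by omega) (by omega)
  have htot : (r - 1) * L * S.card ≤ 2 * ∑ w ∈ Finset.Ico a0 a, f w := by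
    have e1 : ∑ w ∈ Finset.Ico a0 a, f w = ∑ s ∈ S, ((Finset.Ico a0 a).filter (fun w => R w s)).card := by
      simp only [hf, Finset.card_filter]
      rw [Finset.sum_comm]
    rw [e1, Finset.mul_sum, mul_comm _ S.card, ← smul_eq_mul S.card]
    apply Finset.card_nsmul_le_sum
    intro s hs
    have hs' := Finset.mem_Ico.1 (hS hs)
    have h1 := hR a0 s (by omega) (by omega)
    have h2 : ((Finset.Ico a0 s).filter (fun w => R w s)).card ≤ ((Finset.Ico a0 a).filter (fun w => R w s)).card + (s - a) := by
      have : Finset.Ico a0 s = Finset.Ico a0 a ∪ Finset.Ico a s := (Finset.Ico_union_Ico_eq_Ico (by omega) (by omega)).symm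
      rw [this, Finset.filter_union]
      refine (Finset.card_union_le _ _).trans ?_
      have := Finset.card_filter_le (Finset.Ico a s) (fun w => R w s)
      rw [Nat.card_Ico] at this
      omega
    have h3 : (r - 1) * L + L = r * L := by
      obtain ⟨r, rfl⟩ : ∃ k, r = k + 1 := ⟨r - 1, by omega⟩
      simp; ring
    omega
  have hex : ∃ i ∈ Finset.range r, (r - 1) * L * S.card ≤ 2 * r * ∑ w ∈ Finset.Ico (a0 + i * L) (a0 + i * L + L), f w := by
    apply Finset.exists_le_of_sum_le (by simpa using hr.ne')
    rw [Finset.sum_const, ← Finset.mul_sum, hsplit, show a0 + r * L = a by omega, smul_eq_mul, Finset.card_range]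
    nlinarith
  obtain ⟨i, hi, h⟩ := hex
  have hi' : i < r := Finset.mem_range.1 hi
  have h5 : (i + 1) * L ≤ r * L := Nat.mul_le_mul_right _ hi'
  have h6 : (i+1) * L = i * L + L := by ring
  exact ⟨a0 + i * L, by omega, by omega, h⟩

open Classical in
/-- Tuples with few common out-neighbours. -/
noncomputable def badTuples (R : ℕ → ℕ → Prop) (q h : ℕ) (U S : Finset ℕ) : Finset (Fin q → ℕ) :=
  (Fintype.piFinset (fun _ : Fin q => U)).filter
        (fun τ => (S.filter (fun v => ∀ j, R (τ j) v)).card < h)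

lemma choose_mul_pow_le (d q : ℕ) (hq : q ≤ d) : d.choose q * 16 ^ q ≤ 17 ^ d := by
  have h := add_pow (16:ℕ) 1 d
  have h2 := Finset.single_le_sum (f := fun m => (16:ℕ) ^ m * 1 ^ (d - m) * (d.choose m)) (s := Finset.range (d+1)) (fun _ _ => Nat.zero_le _) (Finset.mem_range.2 (Nat.lt_succ_of_le hq))
  simp only [Nat.cast_id] at h
  rw [← h] at h2
  simp only [one_pow, mul_one] at h2
  rw [mul_comm]; exact h2

/-- The final numerical estimate. -/
lemma numeric_small (d q : ℕ) (hq1 : 1 ≤ q) (hq : q ≤ d) :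
    8 * (d.choose q : ℝ) * ((16:ℝ) ^ q * d.choose q / (64 * 17 ^ d)) ^ q < 1 := by
  have hm : (d.choose q : ℝ) * 16 ^ q ≤ 17 ^ d := by exact_mod_cast choose_mul_pow_le d q hq
  have hm2 : (d.choose q : ℝ) ≤ 2 ^ d := by exact_mod_cast Nat.choose_le_two_pow d q
  have hm0 : (0:ℝ) ≤ d.choose q := by positivity
  have hbase : (16:ℝ) ^ q * d.choose q / (64 * 17 ^ d) ≤ 1 / 64 := by
    rw [div_le_div_iff₀ (by positivity) (by positivity)]
    linarith
  rcases le_total d (2 * q) with h | h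
  · calc 8 * (d.choose q : ℝ) * ((16:ℝ) ^ q * d.choose q / (64 * 17 ^ d)) ^ q
        ≤ 8 * 4 ^ q * (1 / 64) ^ q := by
          have : (d.choose q : ℝ) ≤ 4 ^ q := by
            refine hm2.trans ?_
            rw [show (4:ℝ) = 2 ^ 2 by norm_num, ← pow_mul]
            exact pow_le_pow_right₀ (by norm_num) h
          gcongr
      _ = 8 * (1/16) ^ q := by rw [mul_assoc, ← mul_pow]; norm_num
      _ ≤ 8 * (1/16) ^ 1 := by
          gcongr 8 * ?_
          exact pow_le_pow_of_le_one (by norm_num) (by norm_num) hq1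
      _ < 1 := by norm_num
  · have h16 : (16:ℝ) ^ q ≤ 4 ^ d := by
      rw [show (16:ℝ) = 4 ^ 2 by norm_num, ← pow_mul]
      exact pow_le_pow_right₀ (by norm_num) h
    calc 8 * (d.choose q : ℝ) * ((16:ℝ) ^ q * d.choose q / (64 * 17 ^ d)) ^ q
        ≤ 8 * (d.choose q : ℝ) * ((16:ℝ) ^ q * d.choose q / (64 * 17 ^ d)) := by
          gcongr 8 * (d.choose q : ℝ) * ?_
          exact pow_le_of_le_one (by positivity) (hbase.trans (by norm_num)) (by omega)
      _ ≤ 8 * 2 ^ d * (4 ^ d * 2 ^ d / (64 * 17 ^ d)) := by gcongr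
      _ = (16 / 17) ^ d / 8 := by
          rw [div_pow, show (16:ℝ) = 2 * 4 * 2 by norm_num, mul_pow, mul_pow]
          field_simp
          norm_num
      _ < 1 := by
          have : ((16:ℝ) / 17) ^ d ≤ 1 := pow_le_one₀ (by norm_num) (by norm_num)
          linarith

lemma numeric_bad (d k : ℕ) (hk : k < d) (L s Y δt : ℝ) (hL : L = 2 ^ 20 * d * 17 ^ d)
    (hs : L / (32 * 4 ^ (k + 1)) ≤ s) (hY0 : 0 ≤ Y) (hδ : 1 / (4 * 4 ^ (k + 1)) ≤ δt)
    (hY : Y * δt ≤ 2 * L ^ (k + 1) * (((2 * d.choose (k + 1) : ℕ) : ℝ) / s) ^ (2 * (k + 1))) :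
    (d.choose (k + 1) : ℝ) * Y < (d.choose k : ℝ) ^ (k + 1) := by
  set m : ℝ := ((d.choose (k + 1) : ℕ) : ℝ) with hm
  set p : ℝ := ((d.choose k : ℕ) : ℝ) with hp
  have hd : (0:ℝ) < d := by exact_mod_cast (by omega : 0 < d)
  have hLp : 0 < L := by rw [hL]; positivity
  have hpp : 0 < p := by rw [hp]; exact_mod_cast Nat.choose_pos hk.le
  have hmp : 0 < m := by rw [hm]; exact_mod_cast Nat.choose_pos hk
  have hmd : m ≤ d * p := by
    have h1 := Nat.choose_succ_right_eq d k
    have h2 : d.choose (k+1) ≤ d * d.choose k := by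
      calc d.choose (k+1) ≤ d.choose (k+1) * (k+1) := Nat.le_mul_of_pos_right _ (by omega)
        _ = d.choose k * (d - k) := h1
        _ ≤ d.choose k * d := Nat.mul_le_mul_left _ (by omega)
        _ = _ := mul_comm _ _
    rw [hm, hp]; exact_mod_cast h2
  have hsp : 0 < s := lt_of_lt_of_le (by positivity) hs
  set q := k + 1 with hq
  have h1 : ((2 * d.choose q : ℕ) : ℝ) / s ≤ 64 * 4 ^ q * m / L := by
    push_cast
    rw [div_le_div_iff₀ hsp hLp]
    rw [div_le_iff₀ (by positivity)] at hs
    have : 2 * m * L ≤ 2 * m * (s * (32 * 4 ^ q)) := by gcongr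
    linarith
  have h2 : Y / (4 * 4 ^ q) ≤ 2 * (2 ^ 12 * 16 ^ q * m ^ 2 / L) ^ q := by
    calc Y / (4 * 4 ^ q) = Y * (1 / (4 * 4 ^ q)) := by ring
      _ ≤ Y * δt := by gcongr
      _ ≤ _ := hY
      _ ≤ 2 * L ^ q * (64 * 4 ^ q * m / L) ^ (2 * q) := by gcongr
      _ = 2 * (L * (64 * 4 ^ q * m / L) ^ 2) ^ q := by rw [pow_mul, mul_pow]; ring
      _ = _ := by
        have h16 : (16:ℝ) ^ q = 4 ^ q * 4 ^ q := by rw [← mul_pow]; norm_num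
        congr 2
        rw [h16]
        field_simp
        ring
  have h3 : Y ≤ 8 * (2 ^ 14 * 16 ^ q * m ^ 2 / L) ^ q := by
    rw [div_le_iff₀ (by positivity)] at h2
    refine h2.trans (le_of_eq ?_)
    rw [show (2:ℝ) ^ 14 * 16 ^ q * m ^ 2 / L = 4 * (2 ^ 12 * 16 ^ q * m ^ 2 / L) by ring, mul_pow 4]
    ring
  have h4 : 2 ^ 14 * 16 ^ q * m ^ 2 / L ≤ p * (16 ^ q * m / (64 * 17 ^ d)) := by
    rw [div_le_iff₀ hLp, hL]
    have : p * (16 ^ q * m / (64 * 17 ^ d)) * (2 ^ 20 * d * 17 ^ d) = 2 ^ 14 * 16 ^ q * m * (d * p) := by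
      field_simp; norm_num
    rw [this, pow_two, ← mul_assoc]
    gcongr
  calc m * Y ≤ m * (8 * (p * (16 ^ q * m / (64 * 17 ^ d))) ^ q) := by
        gcongr
        refine h3.trans ?_
        gcongr
    _ = (8 * m * (16 ^ q * m / (64 * 17 ^ d)) ^ q) * p ^ q := by rw [mul_pow]; ring
    _ < 1 * p ^ q := by
        gcongr
        exact numeric_small d q (by omega) (by omega)
    _ = p ^ q := one_mul _

lemma numeric_delta (d q : ℕ) (hd : 0 < d) (hq : q ≤ d) :
    1 / (4 * 4 ^ q) ≤ ((1 - 1 / (2 * (d:ℝ))) / 2) ^ (2 * q) := by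
  have hdR : (1:ℝ) ≤ d := by exact_mod_cast hd
  have h0 : (0:ℝ) ≤ 1 - 1 / (2 * d) := by
    rw [sub_nonneg, div_le_iff₀ (by positivity)]; linarith
  have h01 : (1:ℝ) - 1 / (2 * d) ≤ 1 := by
    have : (0:ℝ) ≤ 1 / (2 * d) := by positivity
    linarith
  have h1 := one_add_mul_le_pow (a := -(1 / (2 * (d:ℝ)))) (by linarith) d
  have h2 : (1:ℝ) / 2 ≤ (1 - 1 / (2 * d)) ^ d := by
    have : 1 + (d:ℝ) * -(1 / (2 * d)) = 1 / 2 := by field_simp; norm_num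
    rw [this] at h1
    rwa [sub_eq_add_neg]
  have h3 : (1:ℝ) / 2 ≤ (1 - 1 / (2 * d)) ^ q := h2.trans (pow_le_pow_of_le_one h0 h01 hq)
  have h4 : ((1 - 1 / (2 * (d:ℝ))) / 2) ^ (2 * q) = ((1 - 1 / (2 * (d:ℝ))) ^ q) ^ 2 / 4 ^ q := by
    rw [div_pow, pow_mul 2, mul_comm 2 q, pow_mul]; norm_num
  rw [h4]
  calc (1:ℝ) / (4 * 4 ^ q) = (1/2)^2 / 4 ^ q := by rw [← div_div]; norm_num
    _ ≤ _ := by gcongr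

open Classical in
lemma chain_step (R : ℕ → ℕ → Prop) (N : ℕ) (hR : ∀ i j, i ≤ j → j < N →
      j - i ≤ 2 * ((Finset.Ico i j).filter (fun x => R x j)).card)
    (d k L a : ℕ) (hk : k < d) (hL : L = 2 ^ 20 * d * 17 ^ d) (ha : 2 * d * L ≤ a)
    (haN : a + L ≤ N) (S : Finset ℕ) (hS : S ⊆ Finset.Ico a (a + L))
    (hSc : (L : ℝ) / (32 * 4 ^ (k + 1)) ≤ S.card) :
    ∃ b U, b + L ≤ a ∧ a ≤ b + 2 * d * L ∧ U ⊆ Finset.Ico b (b + L) ∧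
      (L : ℝ) / (32 * 4 ^ k) ≤ U.card ∧
      d.choose (k + 1) * (badTuples R (k + 1) (2 * d.choose (k + 1)) U S).card < d.choose k ^ (k + 1) := by
  have hd : 0 < d := by omega
  have hdR : (1:ℝ) ≤ d := by exact_mod_cast hd
  have hLp : 0 < L := by rw [hL]; positivity
  have hLR : (0:ℝ) < L := by exact_mod_cast hLp
  obtain ⟨b, hb1, hb2, hb3⟩ := dense_window R N hR L (2 * d) a (by omega) ha haN S hS
  have hSp : (0:ℝ) < S.card := lt_of_lt_of_le (by positivity) hSc
  have hδ0 : (0:ℝ) < (1 - 1 / (2 * (d:ℝ))) / 2 := by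
    have : 1 / (2 * (d:ℝ)) < 1 := by rw [div_lt_one (by positivity)]; linarith
    linarith
  have hWc : (Finset.Ico b (b + L)).card = L := by simp
  have hδ := numeric_delta d (k + 1) hd hk
  obtain ⟨U, hUW, hUc, hUb⟩ := drc_step R (Finset.Ico b (b + L)) S ((1 - 1 / (2 * (d:ℝ))) / 2) hδ0
    (2 * (k + 1)) (k + 1) (2 * d.choose (k + 1)) (by simpa using hLp)
    (Finset.card_pos.1 (by exact_mod_cast hSp))
    (Nat.mul_pos (by norm_num) (Nat.choose_pos hk)) (by
      rw [hWc]
      have h1 : (((2 * d - 1 : ℕ) : ℝ)) * L * S.card ≤ 2 * (2 * d) * ∑ w ∈ Finset.Ico b (b + L), ((S.filter (fun s => R w s)).card : ℝ) := by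
        exact_mod_cast hb3
      rw [Nat.cast_sub (by omega)] at h1
      push_cast at h1
      have h2 : (1 - 1 / (2 * (d:ℝ))) / 2 * L * S.card = ((2 * (d:ℝ) - 1) * L * S.card) / (2 * (2 * d)) := by
        field_simp
      rw [h2, div_le_iff₀ (by positivity)]
      linarith)
  rw [hWc] at hUc hUb
  refine ⟨b, U, hb1, hb2, hUW, ?_, ?_⟩
  · refine le_trans ?_ hUc
    calc (L : ℝ) / (32 * 4 ^ k) = 1 / (4 * 4 ^ (k + 1)) * L / 2 := by
          rw [pow_succ]; field_simp; norm_num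
      _ ≤ _ := by gcongr
  · have := numeric_bad d k hk L S.card _ _ (by rw [hL]; push_cast; ring) hSc (by positivity) hδ hUb
    exact_mod_cast this

lemma chain_exists (R : ℕ → ℕ → Prop) (N d L : ℕ) (hd : 0 < d) (hR : ∀ i j, i ≤ j → j < N →
      j - i ≤ 2 * (open Classical in (Finset.Ico i j).filter (fun x => R x j)).card)
    (hL : L = 2 ^ 20 * d * 17 ^ d) (hN : N = d * (2 * d * L) + L) :
    ∃ (V : ℕ → Finset ℕ) (a : ℕ → ℕ), (∀ k ≤ d, V k ⊆ Finset.Ico (a k) (a k + L) ∧ a k + L ≤ N) ∧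
      (∀ k < d, a k + L ≤ a (k + 1)) ∧ 2 ≤ (V 0).card ∧
      ∀ k ≤ d, d.choose (k + 1) * (badTuples R (k + 1) (2 * d.choose (k + 1)) (V k) (V (k + 1))).card
        < d.choose k ^ (k + 1) := by
  have step : ∀ (k : ℕ) (st : ℕ × Finset ℕ), k < d →
      ((k + 1) * (2 * d * L) ≤ st.1 ∧ st.1 + L ≤ N ∧ st.2 ⊆ Finset.Ico st.1 (st.1 + L) ∧
        (L : ℝ) / (32 * 4 ^ (k + 1)) ≤ st.2.card) →
      ∃ st' : ℕ × Finset ℕ, (k * (2 * d * L) ≤ st'.1 ∧ st'.1 + L ≤ N ∧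
        st'.2 ⊆ Finset.Ico st'.1 (st'.1 + L) ∧ (L : ℝ) / (32 * 4 ^ k) ≤ st'.2.card) ∧
        st'.1 + L ≤ st.1 ∧
        d.choose (k + 1) * (badTuples R (k + 1) (2 * d.choose (k + 1)) st'.2 st.2).card
          < d.choose k ^ (k + 1) := by
    rintro k ⟨a, S⟩ hk ⟨h1, h2, h3, h4⟩
    dsimp only at h1 h2 h3 h4
    have h5 : (k + 1) * (2 * d * L) = k * (2 * d * L) + 2 * d * L := by ring
    obtain ⟨b, U, g1, g2, g3, g4, g5⟩ := chain_step R N hR d k L a hk hL (by omega) h2 S h3 h4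
    exact ⟨(b, U), ⟨by dsimp only; omega, by dsimp only; omega, g3, g4⟩, g1, g5⟩
  choose! g hg1 hg2 hg3 using step
  let f : ℕ → ℕ × Finset ℕ := fun j =>
    Nat.rec (d * (2 * d * L), Finset.Ico (d * (2 * d * L)) (d * (2 * d * L) + L))
      (fun j st => g (d - 1 - j) st) j
  have hf0 : f 0 = (d * (2 * d * L), Finset.Ico (d * (2 * d * L)) (d * (2 * d * L) + L)) := rfl
  have hfs : ∀ j, f (j + 1) = g (d - 1 - j) (f j) := fun j => rfl
  have hval : ∀ j ≤ d, ((d - j) * (2 * d * L) ≤ (f j).1 ∧ (f j).1 + L ≤ N ∧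
      (f j).2 ⊆ Finset.Ico (f j).1 ((f j).1 + L) ∧
        (L : ℝ) / (32 * 4 ^ (d - j)) ≤ (f j).2.card) := by
    intro j
    induction j with
    | zero =>
      intro _
      rw [hf0]
      refine ⟨by simp, by simp [hN], Finset.Subset.refl _, ?_⟩
      simp only [Nat.card_Ico, add_tsub_cancel_left]
      apply div_le_self (by positivity)
      have : (1:ℝ) ≤ 4 ^ (d - 0) := one_le_pow₀ (by norm_num)
      linarith
    | succ j ih =>
      intro hj
      have h1 := ih (by omega)
      rw [show d - j = (d - 1 - j) + 1 by omega] at h1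
      have := hg1 (d - 1 - j) (f j) (by omega) h1
      rw [hfs, show d - (j + 1) = d - 1 - j by omega]
      exact this
  have hstep : ∀ k < d, f (d - k) = g k (f (d - (k + 1))) ∧ ((k + 1) * (2 * d * L) ≤ (f (d - (k+1))).1 ∧ (f (d - (k+1))).1 + L ≤ N ∧ (f (d - (k+1))).2 ⊆ Finset.Ico (f (d - (k+1))).1 ((f (d - (k+1))).1 + L) ∧
        (L : ℝ) / (32 * 4 ^ (k + 1)) ≤ (f (d - (k+1))).2.card) := by
    intro k hk
    constructor
    · rw [show d - k = (d - (k + 1)) + 1 by omega, hfs]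
      congr 1; omega
    · have := hval (d - (k + 1)) (by omega)
      rwa [show d - (d - (k+1)) = k + 1 by omega] at this
  refine ⟨fun k => (f (d - k)).2, fun k => (f (d - k)).1, ?_, ?_, ?_, ?_⟩
  · intro k _
    have := hval (d - k) (by omega)
    exact ⟨this.2.2.1, this.2.1⟩
  · intro k hk
    obtain ⟨e, hv⟩ := hstep k hk
    dsimp only
    rw [e]
    exact hg2 k _ hk hv
  · have h := (hval d le_rfl).2.2.2
    have h2 : (2:ℝ) ≤ (L : ℝ) / (32 * 4 ^ (d - d)) := by
      have h17 : 1 ≤ 17 ^ d := Nat.one_le_pow _ _ (by norm_num)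
      have : 64 ≤ L := by rw [hL]; nlinarith
      have : (64:ℝ) ≤ L := by exact_mod_cast this
      simp
      linarith
    simp only [Nat.sub_zero]
    exact_mod_cast h2.trans h
  · intro k hk
    rcases hk.lt_or_eq with hk | rfl
    · obtain ⟨e, hv⟩ := hstep k hk
      dsimp only
      rw [e]
      exact hg3 k _ hk hv
    · simp

open Classical in
lemma embed_cube (R : ℕ → ℕ → Prop) (d : ℕ) (hd : 0 < d) (V : ℕ → Finset ℕ) (h0 : 2 ≤ (V 0).card)
    (hbad : ∀ k ≤ d, d.choose (k + 1) * (badTuples R (k + 1) (2 * d.choose (k + 1)) (V k) (V (k + 1))).card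
        < d.choose k ^ (k + 1)) :
    ∃ φ : Finset (Fin d) → ℕ, (∀ x, φ x ∈ V x.card) ∧
      (∀ x y, x.card = y.card → φ x = φ y → x = y) ∧
      ∀ y, ∀ i ∈ y, R (φ (y.erase i)) (φ y) := by
  have : Nonempty (Fin d) := ⟨⟨0, hd⟩⟩
  have main : ∀ k ≤ d + 1, ∃ φ : Finset (Fin d) → ℕ, (∀ x : Finset (Fin d), x.card < k → φ x ∈ V x.card) ∧
      (∀ x y : Finset (Fin d), x.card < k → x.card = y.card → φ x = φ y → x = y) ∧
      (∀ y : Finset (Fin d), y.card < k → ∀ i ∈ y, R (φ (y.erase i)) (φ y)) ∧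
      ∀ y : Finset (Fin d), y.card = k → 2 * d.choose k ≤ ((V k).filter (fun v => ∀ i ∈ y, R (φ (y.erase i)) v)).card := by
    intro k
    induction k with
    | zero =>
      intro _
      refine ⟨fun _ => 0, by simp, by simp, by simp, ?_⟩
      intro y hy
      rw [Finset.card_eq_zero] at hy
      subst hy
      simpa using h0
    | succ k ih =>
      intro hk
      obtain ⟨φ, p1, p2, p3, p4⟩ := ih (by omega)
      have hkd : k ≤ d := by omega
      have hbk := hbad k hkd
      set Bd := badTuples R (k + 1) (2 * d.choose (k + 1)) (V k) (V (k + 1)) with hBd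
      have hM : 0 < d.choose k := Nat.choose_pos hkd
      have hMR : (0:ℝ) < d.choose k := by exact_mod_cast hM
      have hen : ∀ z : Finset (Fin d), z.card = k + 1 → ∃ e : Fin (k + 1) → Fin d,
          Function.Injective e ∧ ∀ i, i ∈ z ↔ ∃ j, e j = i := by
        intro z hz
        refine ⟨z.orderEmbOfFin hz, (z.orderEmbOfFin hz).injective, ?_⟩
        intro i
        have := z.range_orderEmbOfFin hz
        rw [← Finset.mem_coe, ← this]; rfl
      choose! e he1 he2 using hen
      have hmem : ∀ z : Finset (Fin d), z.card = k + 1 → ∀ j, e z j ∈ z := fun z hz j => (he2 z hz _).2 ⟨j, rfl⟩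
      have hpinj : ∀ z : Finset (Fin d), z.card = k + 1 → Function.Injective (fun j => z.erase (e z j)) := by
        intro z hz i j hij
        by_contra hne
        have h1 : e z i ∈ z.erase (e z j) := Finset.mem_erase.2 ⟨fun h => hne (he1 z hz h), hmem z hz i⟩
        dsimp only at hij
        rw [← hij] at h1
        simp at h1
      set S : Finset (Finset (Fin d)) := Finset.powersetCard k Finset.univ with hS
      have hSc : S.card = d.choose k := by simp [hS]
      have hSm : ∀ x, x ∈ S ↔ x.card = k := by intro x; simp [hS, Finset.mem_powersetCard]
      set Nb : Finset (Fin d) → Finset ℕ := fun y => (V k).filter (fun v => ∀ i ∈ y, R (φ (y.erase i)) v) with hNb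
      set P : Finset (Fin d) × (Fin (k+1) → ℕ) → Finset (Finset (Fin d)) := fun zt =>
        Finset.univ.image (fun j => zt.1.erase (e zt.1 j)) with hP
      set τ : Finset (Fin d) × (Fin (k+1) → ℕ) → Finset (Fin d) → ℕ := fun zt =>
        Function.extend (fun j => zt.1.erase (e zt.1 j)) zt.2 (fun _ => 0) with hτ
      obtain ⟨ψ, q1, q2, q3, q4⟩ := greedy_choice (d.choose k) hM Nb
        (Finset.powersetCard (k+1) Finset.univ ×ˢ Bd) P τ S ∅ φ (by simp) (by simp) (by
          intro x hx
          have := p4 x ((hSm x).1 hx)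
          rw [hSc, Finset.card_empty]
          simp only [hNb]
          omega) (by
          refine (Finset.sum_le_card_nsmul _ _ (((1:ℝ) / d.choose k) ^ (k+1)) ?_).trans_lt ?_
          · rintro ⟨z, t⟩ hz
            have hzc : z.card = k + 1 := by
              have := (Finset.mem_product.1 hz).1
              simpa [Finset.mem_powersetCard] using this
            have hPS : P (z, t) ∩ S = P (z, t) := by
              rw [Finset.inter_eq_left]
              intro x hx
              simp only [hP, Finset.mem_image, Finset.mem_univ, true_and] at hx
              obtain ⟨j, rfl⟩ := hx
              rw [hSm, Finset.card_erase_of_mem (hmem z hzc j), hzc]; rfl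
            have hPc : (P (z, t)).card = k + 1 := by
              simp only [hP]
              rw [Finset.card_image_of_injective _ (hpinj z hzc)]; simp
            rw [hPS, hPc]
            split_ifs
            · exact le_rfl
            · positivity
          · rw [nsmul_eq_mul, Finset.card_product, one_div, inv_pow, ← div_eq_mul_inv, div_lt_one (by positivity)]
            simp only [Finset.card_powersetCard, Finset.card_univ, Fintype.card_fin]
            exact_mod_cast hbk)
      have hcard_erase : ∀ (y : Finset (Fin d)) (i : Fin d), y.card = k → i ∈ y → y.erase i ∉ S := by
        intro y i hy hi
        rw [hSm, Finset.card_erase_of_mem hi]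
        have := Finset.card_pos.2 ⟨i, hi⟩
        omega
      have hψlt : ∀ x : Finset (Fin d), x.card < k → ψ x = φ x := by
        intro x hx; apply q1; rw [hSm]; omega
      have hψk : ∀ x : Finset (Fin d), x.card = k → ψ x ∈ V k := by
        intro x hx
        exact (Finset.mem_filter.1 (q2 x ((hSm x).2 hx))).1
      refine ⟨ψ, ?_, ?_, ?_, ?_⟩
      · intro x hx
        rcases Nat.lt_succ_iff_lt_or_eq.1 hx with h | h
        · rw [hψlt x h]; exact p1 x h
        · rw [h]; exact hψk x h
      · intro x y hx hxy hxy2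
        rcases Nat.lt_succ_iff_lt_or_eq.1 hx with h | h
        · rw [hψlt x h, hψlt y (hxy ▸ h)] at hxy2
          exact p2 x y h hxy hxy2
        · have hx' : x ∈ S := (hSm x).2 h
          have hy' : y ∈ S := (hSm y).2 (hxy ▸ h)
          exact q3 (by simpa using hx') (by simpa using hy') hxy2
      · intro y hy i hi
        rcases Nat.lt_succ_iff_lt_or_eq.1 hy with h | h
        · rw [hψlt y h, hψlt (y.erase i) (lt_of_le_of_lt Finset.card_erase_le h)]
          exact p3 y h i hi
        · rw [q1 _ (hcard_erase y i h hi)]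
          exact (Finset.mem_filter.1 (q2 y ((hSm y).2 h))).2 i hi
      · intro z hz
        by_contra! hcon
        have hfil : (V (k+1)).filter (fun v => ∀ i ∈ z, R (ψ (z.erase i)) v) = (V (k+1)).filter (fun v => ∀ j, R (ψ (z.erase (e z j))) v) := by
          apply Finset.filter_congr
          intro v _
          constructor
          · intro h j; exact h _ (hmem z hz j)
          · intro h i hi
            obtain ⟨j, rfl⟩ := (he2 z hz i).1 hi
            exact h j
        rw [hfil] at hcon
        have hB : (fun j => ψ (z.erase (e z j))) ∈ Bd := by
          rw [hBd, badTuples, Finset.mem_filter, Fintype.mem_piFinset]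
          refine ⟨fun j => hψk _ ?_, hcon⟩
          rw [Finset.card_erase_of_mem (hmem z hz j), hz]; rfl
        obtain ⟨x, hx, hne⟩ := q4 (z, fun j => ψ (z.erase (e z j))) (by
          rw [Finset.mem_product]
          exact ⟨by simp [Finset.mem_powersetCard, hz], hB⟩)
        simp only [hP, Finset.mem_image, Finset.mem_univ, true_and] at hx
        obtain ⟨j, rfl⟩ := hx
        apply hne
        simp only [hτ]
        exact ((hpinj z hz).extend_apply (fun j => ψ (z.erase (e z j))) _ j).symm
  obtain ⟨φ, p1, p2, p3, _⟩ := main (d + 1) le_rfl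
  have hc : ∀ x : Finset (Fin d), x.card < d + 1 := by
    intro x
    have := Finset.card_le_univ x
    simp at this
    omega
  exact ⟨φ, fun x => p1 x (hc x), fun x y => p2 x y (hc x), fun y => p3 y (hc y)⟩

lemma tournament_contains_cube (d L N : ℕ) (hd : 0 < d) (hL : L = 2 ^ 20 * d * 17 ^ d)
    (hN : N = d * (2 * d * L) + L) (T : Digraph (Fin N)) (hT : T.IsTournament) :
    T.ContainsCopy (hypercubeDigraph d) := by
  have hLp : 0 < L := by rw [hL]; positivity
  obtain ⟨σ, hσ, hmed⟩ := exists_median_fun N (by omega) T hT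
  obtain ⟨V, a, hV, ha, hV0, hbad⟩ := chain_exists (fun x y => T.Adj (σ x) (σ y)) N d L hd hmed hL hN
  obtain ⟨φ, f1, f2, f3⟩ := embed_cube _ d hd V hV0 hbad
  have hmono : ∀ k l, k < l → l ≤ d → a k + L ≤ a l := by
    intro k l hkl
    induction l, hkl using Nat.le_induction with
    | base => intro h; exact ha k h
    | succ l hl ih =>
      intro h
      have := ih (by omega)
      have := ha l (by omega)
      omega
  have hcd : ∀ x : Finset (Fin d), x.card ≤ d := fun x => by
    simpa using Finset.card_le_univ x
  have hr : ∀ x, a x.card ≤ φ x ∧ φ x < a x.card + L ∧ φ x < N := by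
    intro x
    have h1 := hV x.card (hcd x)
    have h2 := Finset.mem_Ico.1 (h1.1 (f1 x))
    exact ⟨h2.1, h2.2, by omega⟩
  have hφ : Function.Injective φ := by
    intro x y hxy
    have hx := hr x
    have hy := hr y
    rcases lt_trichotomy x.card y.card with h | h | h
    · have := hmono _ _ h (hcd y); omega
    · exact f2 x y h hxy
    · have := hmono _ _ h (hcd x); omega
  refine ⟨fun u => σ (φ (Finset.univ.filter (fun i => u i = true))), ?_, ?_⟩
  · intro u v huv
    have h1 := hφ (hσ _ (hr _).2.2 _ (hr _).2.2 huv)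
    funext i
    have h2 : i ∈ Finset.univ.filter (fun i => u i = true) ↔ i ∈ Finset.univ.filter (fun i => v i = true) := by rw [h1]
    simp only [Finset.mem_filter, Finset.mem_univ, true_and] at h2
    exact Bool.eq_iff_iff.2 h2
  · rintro u v ⟨i, hu, hv, huv⟩
    have h := f3 (Finset.univ.filter (fun i => v i = true)) i (by simp [hv])
    have he : (Finset.univ.filter (fun i => v i = true)).erase i = Finset.univ.filter (fun i => u i = true) := by
      ext j
      simp only [Finset.mem_erase, Finset.mem_filter, Finset.mem_univ, true_and]
      by_cases hj : j = i
      · subst hj; simp [hu]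
      · rw [huv j hj]; simp [hj]
    rw [he] at h
    exact h

/-- There is an absolute constant `C > 0` such that
`r⃗(Q⃗_d) ≤ C · d³ · 17^d` for all `d ≥ 1`. -/
theorem hypercube_oriented_ramsey :
    ∃ C : ℝ, 0 < C ∧ ∀ d : ℕ, 1 ≤ d →
      (orientedRamsey (hypercubeDigraph d) : ℝ) ≤ C * d ^ 3 * 17 ^ d := by
  refine ⟨3 * 2 ^ 20, by norm_num, ?_⟩
  intro d hd
  have h1 : orientedRamsey (hypercubeDigraph d) ≤
      d * (2 * d * (2 ^ 20 * d * 17 ^ d)) + 2 ^ 20 * d * 17 ^ d :=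
    Nat.sInf_le (fun T hT => tournament_contains_cube d _ _ hd rfl rfl T hT)
  have h2 : (orientedRamsey (hypercubeDigraph d) : ℝ) ≤
      d * (2 * d * (2 ^ 20 * d * 17 ^ d)) + 2 ^ 20 * d * 17 ^ d := by exact_mod_cast h1
  refine h2.trans ?_
  have hdR : (1:ℝ) ≤ d := by exact_mod_cast hd
  have h3 : (d:ℝ) ≤ d ^ 3 := le_self_pow₀ hdR (by norm_num)
  have h4 : (2:ℝ) ^ 20 * d * 17 ^ d ≤ 2 ^ 20 * d ^ 3 * 17 ^ d := by gcongr
  calc _ ≤ (d:ℝ) * (2 * d * (2 ^ 20 * d * 17 ^ d)) + 2 ^ 20 * d ^ 3 * 17 ^ d := by linarith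
    _ = _ := by ring
end

section
/- There exist constants c > 1 and Δ₀ such that for all integers Δ ≥ Δ₀, n ≥ Δ and H ≥ 2, there exists a graded digraph G with maximum degree at most Δ and a graded partition V(G) = V_1 ∪ ⋯ ∪ V_H with |V_i| ≤ n for all i ∈ [H], such that r⃗(G) > c^Δ · H · n; in particular r⃗(G) > c^Δ · |V(G)|. -/
/-- The degree of a vertex in the underlying undirected graph of a digraph. -/
noncomputable def Digraph.degree {V : Type*} (G : Digraph V) (v : V) : ℕ :=
  Nat.card {u : V | G.Adj v u ∨ G.Adj u v}

open Classical in
lemma exists_large_outdeg {W : Type*} (T : Digraph W) (hT : T.IsTournament) (A : Finset W)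
    (q : ℕ) (hq : 1 ≤ q) (hA : 2 * q ≤ A.card) :
    ∃ v ∈ A, q ≤ (A.filter (fun u => T.Adj v u)).card := by
  by_contra! hcon
  have h1 : ∑ v ∈ A, (A.filter (fun u => T.Adj v u)).card
      = ∑ v ∈ A, (A.filter (fun u => T.Adj u v)).card :=
    Finset.sum_card_bipartiteAbove_eq_sum_card_bipartiteBelow (fun u v => T.Adj u v)
  have h2 : ∀ v ∈ A, A.card = (A.filter (fun u => T.Adj v u)).card
      + (A.filter (fun u => T.Adj u v)).card + 1 := by
    intro v hv
    have e1 : A.filter (fun u => T.Adj v u) ∪ A.filter (fun u => T.Adj u v) = A.erase v := by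
      ext u
      simp only [Finset.mem_union, Finset.mem_filter, Finset.mem_erase]
      constructor
      · rintro (⟨h, h'⟩ | ⟨h, h'⟩)
        · exact ⟨fun e => hT.1 v (e ▸ h'), h⟩
        · exact ⟨fun e => hT.1 v (by subst e; exact h'), h⟩
      · rintro ⟨h, h'⟩
        have := hT.2 u v h
        tauto
    have e2 : Disjoint (A.filter (fun u => T.Adj v u)) (A.filter (fun u => T.Adj u v)) := by
      rw [Finset.disjoint_left]
      intro u hu hu'
      simp only [Finset.mem_filter] at hu hu'
      have hne : u ≠ v := fun e => hT.1 v (by have := hu.2; subst e; exact this)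
      exact (hT.2 u v hne).1 hu'.2 hu.2
    rw [← Finset.card_union_of_disjoint e2, e1, Finset.card_erase_add_one hv]
  have h3 : ∑ v ∈ A, A.card = ∑ v ∈ A, ((A.filter (fun u => T.Adj v u)).card
      + (A.filter (fun u => T.Adj u v)).card + 1) := Finset.sum_congr rfl h2
  rw [Finset.sum_add_distrib, Finset.sum_add_distrib, ← h1] at h3
  have h4 : ∑ v ∈ A, (A.filter (fun u => T.Adj v u)).card ≤ ∑ v ∈ A, (q - 1) :=
    Finset.sum_le_sum (fun v hv => by have := hcon v hv; omega)
  simp only [Finset.sum_const, smul_eq_mul] at h3 h4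
  obtain ⟨p, rfl⟩ : ∃ p, q = p + 1 := ⟨q - 1, by omega⟩
  simp only [Nat.add_sub_cancel] at h4
  nlinarith

open Classical in
lemma exists_chain {W : Type*} (T : Digraph W) (hT : T.IsTournament) (M : ℕ) :
    ∀ A : Finset W, 2 ^ M ≤ A.card → ∃ g : Fin M → W, (∀ i, g i ∈ A) ∧
      ∀ i j, i < j → T.Adj (g i) (g j) := by
  induction M with
  | zero => intro A _; exact ⟨fun i => i.elim0, fun i => i.elim0, fun i => i.elim0⟩
  | succ M ih =>
    intro A hA
    obtain ⟨v, hv, hv'⟩ := exists_large_outdeg T hT A (2 ^ M) Nat.one_le_two_pow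
      (by rw [pow_succ] at hA; omega)
    obtain ⟨g, hg, hg'⟩ := ih _ hv'
    simp only [Finset.mem_filter] at hg
    refine ⟨Fin.cons v g, ?_, ?_⟩
    · intro i
      refine Fin.cases ?_ ?_ i
      · simpa using hv
      · intro i; simpa using (hg i).1
    · intro i j
      refine Fin.cases ?_ ?_ i
      · refine Fin.cases ?_ ?_ j
        · simp
        · intro j _; simpa using (hg j).2
      · intro i
        refine Fin.cases ?_ ?_ j
        · intro h; simp at h
        · intro j h; simpa using hg' i j (by simpa using h)

lemma ramsey_gt {M : ℕ} (G : Digraph (Fin M)) (f : Fin M → ℕ)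
    (hf : ∀ u v, G.Adj u v → f u < f v) {W : Type*} [Fintype W] (T : Digraph W)
    (hT : T.IsTournament) (hG : ¬ T.ContainsCopy G) : Fintype.card W < orientedRamsey G := by
  have hne : {N : ℕ | ∀ T : Digraph (Fin N), T.IsTournament → T.ContainsCopy G}.Nonempty := by
    refine ⟨2 ^ M, fun T hT => ?_⟩
    obtain ⟨g, -, hg⟩ := exists_chain T hT M Finset.univ (by simp)
    have hgi : Function.Injective g := by
      intro i j hij
      by_contra hne
      rcases lt_or_gt_of_ne hne with h | h
      · have := hg _ _ h; rw [hij] at this; exact hT.1 _ this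
      · have := hg _ _ h; rw [hij] at this; exact hT.1 _ this
    refine ⟨fun v => g ((Tuple.sort f).symm v), hgi.comp (Equiv.injective _), ?_⟩
    intro u v huv
    apply hg
    by_contra! hle
    have := Tuple.monotone_sort f hle
    simp at this
    have := hf u v huv
    omega
  have hmem := Nat.sInf_mem hne
  by_contra! hle
  change sInf _ ≤ _ at hle
  set N := sInf {N : ℕ | ∀ T : Digraph (Fin N), T.IsTournament → T.ContainsCopy G} with hN
  obtain ⟨ι⟩ : Nonempty (Fin N ↪ W) :=
    Function.Embedding.nonempty_of_card_le (by simpa using hle)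
  obtain ⟨φ, h1, h2⟩ := hmem ⟨fun a b => T.Adj (ι a) (ι b)⟩
    ⟨fun v => hT.1 _, fun u v h => hT.2 _ _ (fun e => h (ι.injective e))⟩
  exact hG ⟨ι ∘ φ, ι.injective.comp h1, h2⟩


lemma bits_tail {ι : Type*} [Fintype ι] [DecidableEq ι] (Q : Finset ι) (β : Bool) :
    ((Finset.univ.filter (fun ω : ι → Bool =>
      4 * (Q.filter (fun q => ω q = β)).card ≤ Q.card)).card : ℝ)
      ≤ (9 / 10 : ℝ) ^ Q.card * 2 ^ Fintype.card ι := by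
  set E := Finset.univ.filter (fun ω : ι → Bool =>
      4 * (Q.filter (fun q => ω q = β)).card ≤ Q.card) with hE
  let h : ι → Bool → ℝ := fun q b => if q ∈ Q then (if b = β then 81 / 256 else 1) else 1
  have h0 : ∀ q b, 0 ≤ h q b := by
    intro q b; simp only [h]; split_ifs <;> norm_num
  have hsum : ∑ ω : ι → Bool, ∏ q, h q (ω q) = 2 ^ Fintype.card ι * (337 / 512) ^ Q.card := by
    have e := Finset.prod_univ_sum (fun _ : ι => (Finset.univ : Finset Bool)) h
    rw [Fintype.piFinset_univ] at e
    rw [← e]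
    have e2 : ∀ q : ι, ∑ b : Bool, h q b = 2 * (if q ∈ Q then (337 / 512 : ℝ) else 1) := by
      intro q
      by_cases hq : q ∈ Q <;> cases β <;> simp [h, hq] <;> norm_num
    simp_rw [e2]
    rw [Finset.prod_mul_distrib, Finset.prod_const, Finset.card_univ, Finset.prod_ite_mem,
      Finset.univ_inter, Finset.prod_const]
  have hev : ∀ ω ∈ E, (3 / 4 : ℝ) ^ Q.card ≤ ∏ q, h q (ω q) := by
    intro ω hω
    have hω' : 4 * (Q.filter (fun q => ω q = β)).card ≤ Q.card := by
      simpa [hE] using hω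
    have : ∏ q, h q (ω q) = (81 / 256 : ℝ) ^ (Q.filter (fun q => ω q = β)).card := by
      simp only [h]
      rw [Finset.prod_ite_mem, Finset.univ_inter, ← Finset.prod_filter, Finset.prod_const]
    rw [this, show (81 / 256 : ℝ) = (3 / 4) ^ 4 by norm_num, ← pow_mul]
    exact pow_le_pow_of_le_one (by norm_num) (by norm_num) hω'
  have h1 : (E.card : ℝ) * (3 / 4 : ℝ) ^ Q.card ≤ 2 ^ Fintype.card ι * (337 / 512) ^ Q.card := by
    rw [← hsum, ← nsmul_eq_mul]
    calc _ ≤ ∑ ω ∈ E, ∏ q, h q (ω q) := Finset.card_nsmul_le_sum _ _ _ hev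
      _ ≤ _ := Finset.sum_le_sum_of_subset_of_nonneg (Finset.subset_univ _)
          (fun ω _ _ => Finset.prod_nonneg (fun q _ => h0 _ _))
  have h2 : (337 / 512 : ℝ) ^ Q.card ≤ (9 / 10) ^ Q.card * (3 / 4) ^ Q.card := by
    rw [← mul_pow]
    exact pow_le_pow_left₀ (by norm_num) (by norm_num) _
  have h3 : (0 : ℝ) < (3 / 4 : ℝ) ^ Q.card := by positivity
  have h4 : (0 : ℝ) < 2 ^ Fintype.card ι := by positivity
  refine le_of_mul_le_mul_right ?_ h3
  nlinarith

/-- the set of ordered pairs (as bit positions) used for `A → B`. -/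
def pairSet {k : ℕ} (A B : Finset (Fin k)) (β : Bool) : Finset (Fin k × Fin k) :=
  if β then (B ×ˢ A).filter (fun p => p.1 < p.2) else (A ×ˢ B).filter (fun p => p.1 < p.2)

lemma sum_nonempty_pow {k : ℕ} (ρ : ℝ) :
    ∑ A ∈ (Finset.univ : Finset (Finset (Fin k))).filter (fun A => A.Nonempty), ρ ^ A.card
      = (1 + ρ) ^ k - 1 := by
  have := Fin.sum_pow_mul_eq_add_pow (n := k) ρ 1
  simp only [one_pow, mul_one] at this
  rw [add_comm 1 ρ, ← this, ← Finset.sum_filter_add_sum_filter_not Finset.univ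
    (fun A : Finset (Fin k) => A.Nonempty)]
  have h2 : (Finset.univ : Finset (Finset (Fin k))).filter (fun A => ¬ A.Nonempty) = {∅} := by
    ext A; simp
  rw [h2]; simp

lemma exists_bits (k b : ℕ) (hb : 1 ≤ b) (hk : (4 * k : ℝ) ≤ (10 / 9) ^ b) :
    ∃ ω : Fin k × Fin k → Bool, ∀ A B : Finset (Fin k), 8 * b ≤ A.card → 8 * b ≤ B.card →
      ∀ β : Bool, A.card * B.card ≤ 4 * (pairSet A B β).card →
        (pairSet A B β).card < 4 * ((pairSet A B β).filter (fun q => ω q = β)).card := by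
  classical
  by_contra! hcon
  let I : Finset ((Finset (Fin k) × Finset (Fin k)) × Bool) := Finset.univ.filter (fun p =>
    8 * b ≤ p.1.1.card ∧ 8 * b ≤ p.1.2.card ∧
      p.1.1.card * p.1.2.card ≤ 4 * (pairSet p.1.1 p.1.2 p.2).card)
  let E : (Finset (Fin k) × Finset (Fin k)) × Bool → Finset (Fin k × Fin k → Bool) := fun p =>
    Finset.univ.filter (fun ω => 4 * ((pairSet p.1.1 p.1.2 p.2).filter
      (fun q => ω q = p.2)).card ≤ (pairSet p.1.1 p.1.2 p.2).card)
  have hcov : (Finset.univ : Finset (Fin k × Fin k → Bool)) ⊆ I.biUnion E := by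
    intro ω _
    obtain ⟨A, B, hA, hB, β, h1, h2⟩ := hcon ω
    rw [Finset.mem_biUnion]
    exact ⟨((A, B), β), by simp only [I, Finset.mem_filter, Finset.mem_univ, true_and]; exact ⟨hA, hB, h1⟩,
      by simp only [E, Finset.mem_filter, Finset.mem_univ, true_and]; exact h2⟩
  set ρ : ℝ := (9 / 10) ^ b with hρ
  have hρ0 : 0 < ρ := by positivity
  have hkρ : k * ρ ≤ 1 / 4 := by
    have : (10 / 9 : ℝ) ^ b * ρ = 1 := by rw [hρ, ← mul_pow]; norm_num
    nlinarith
  set P : ℝ := 2 ^ Fintype.card (Fin k × Fin k) with hP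
  have hP0 : 0 < P := by positivity
  have hE : ∀ p ∈ I, ((E p).card : ℝ) ≤ ρ ^ p.1.1.card * ρ ^ p.1.2.card * P := by
    rintro ⟨⟨A, B⟩, β⟩ hp
    simp only [I, Finset.mem_filter, Finset.mem_univ, true_and] at hp
    obtain ⟨hA, hB, hQ⟩ := hp
    refine (bits_tail (pairSet A B β) β).trans ?_
    refine mul_le_mul_of_nonneg_right ?_ hP0.le
    simp only
    rw [← pow_add, hρ, ← pow_mul]
    refine pow_le_pow_of_le_one (by norm_num) (by norm_num) ?_
    nlinarith
  have hc : P ≤ ∑ p ∈ I, ρ ^ p.1.1.card * ρ ^ p.1.2.card * P := by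
    have h1 := (Finset.card_le_card hcov).trans Finset.card_biUnion_le
    have h2 : (Finset.univ : Finset (Fin k × Fin k → Bool)).card
        = 2 ^ Fintype.card (Fin k × Fin k) := by simp
    rw [h2] at h1
    have h3 : P ≤ ∑ p ∈ I, ((E p).card : ℝ) := by rw [hP]; exact_mod_cast h1
    exact h3.trans (Finset.sum_le_sum hE)
  let NE := (Finset.univ : Finset (Finset (Fin k))).filter (fun A => A.Nonempty)
  have hI : I ⊆ (NE ×ˢ NE) ×ˢ (Finset.univ : Finset Bool) := by
    rintro ⟨⟨A, B⟩, β⟩ hp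
    simp only [I, Finset.mem_filter, Finset.mem_univ, true_and] at hp
    simp only [NE, Finset.mem_product, Finset.mem_filter, Finset.mem_univ, true_and, and_true]
    exact ⟨Finset.card_pos.1 (by omega), Finset.card_pos.1 (by omega)⟩
  have hc2 : P ≤ ∑ p ∈ (NE ×ˢ NE) ×ˢ (Finset.univ : Finset Bool),
      ρ ^ p.1.1.card * ρ ^ p.1.2.card * P :=
    hc.trans (Finset.sum_le_sum_of_subset_of_nonneg hI (fun p _ _ => by positivity))
  have hS : ∑ p ∈ (NE ×ˢ NE) ×ˢ (Finset.univ : Finset Bool),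
      ρ ^ p.1.1.card * ρ ^ p.1.2.card * P = 2 * ((1 + ρ) ^ k - 1) ^ 2 * P := by
    rw [Finset.sum_product]
    simp only [Finset.sum_const, Finset.card_univ, Fintype.card_bool, nsmul_eq_mul]
    rw [← sum_nonempty_pow, sq, Finset.sum_mul_sum, Finset.sum_product]
    simp only [Finset.mul_sum, Finset.sum_mul]
    refine Finset.sum_congr rfl (fun A _ => Finset.sum_congr rfl (fun B _ => ?_))
    push_cast; ring
  rw [hS] at hc2
  have h1 : (1 + ρ) ^ k ≤ 3 / 2 := by
    calc (1 + ρ) ^ k ≤ (Real.exp ρ) ^ k :=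
          pow_le_pow_left₀ (by positivity) (by linarith [Real.add_one_le_exp ρ]) _
      _ = Real.exp (k * ρ) := by rw [← Real.exp_nat_mul]
      _ ≤ Real.exp (1 / 4) := Real.exp_le_exp.2 hkρ
      _ ≤ 3 / 2 := by
          have h4 : Real.exp (1 / 4) ^ 4 = Real.exp 1 := by
            rw [← Real.exp_nat_mul]; norm_num
          have := Real.exp_one_lt_d9
          by_contra! hlt
          have := pow_lt_pow_left₀ hlt (by norm_num) (n := 4) (by norm_num)
          rw [h4] at this
          norm_num at this; linarith
  have h2 : 1 ≤ (1 + ρ) ^ k := one_le_pow₀ (by linarith)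
  have h3 : 2 * ((1 + ρ) ^ k - 1) ^ 2 < 1 := by nlinarith
  nlinarith

open Classical in
lemma exists_tournament (k b : ℕ) (hb : 1 ≤ b) (hk : (4 * k : ℝ) ≤ (10 / 9) ^ b) :
    ∃ r : Fin k → Fin k → Prop, (∀ i, ¬ r i i) ∧ (∀ i j, i ≠ j → (r i j ↔ ¬ r j i)) ∧
      ∀ A B : Finset (Fin k), 8 * b ≤ A.card → 8 * b ≤ B.card →
      A.card * B.card ≤ 16 * ((A ×ˢ B).filter (fun p => r p.2 p.1)).card := by
  obtain ⟨ω, hω⟩ := exists_bits k b hb hk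
  refine ⟨fun i j => (i < j ∧ ω (i, j) = true) ∨ (j < i ∧ ω (j, i) = false), by simp, ?_, ?_⟩
  · intro i j hij
    rcases lt_or_gt_of_ne hij with h | h
    · simp [h, not_lt_of_gt h]
    · simp [h, not_lt_of_gt h]
  · intro A B hA hB
    set bad := (A ×ˢ B).filter (fun p => (p.2 < p.1 ∧ ω (p.2, p.1) = true) ∨
      (p.1 < p.2 ∧ ω (p.1, p.2) = false)) with hbad
    by_contra! hlt
    change 16 * bad.card < _ at hlt
    have hf : ((pairSet A B false).filter (fun q => ω q = false)).card ≤ bad.card := by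
      apply Finset.card_le_card
      intro p hp
      simp only [pairSet, Finset.mem_filter, Finset.mem_product, Bool.false_eq_true, if_false,
        hbad] at hp ⊢
      exact ⟨hp.1.1, Or.inr ⟨hp.1.2, hp.2⟩⟩
    have ht : ((pairSet A B true).filter (fun q => ω q = true)).card ≤ bad.card := by
      apply Finset.card_le_card_of_injOn Prod.swap
      · intro p hp
        simp only [pairSet, Finset.coe_filter, Finset.mem_filter, Finset.mem_product, if_true,
          hbad, Set.mem_ofPred_eq] at hp ⊢
        exact ⟨⟨hp.1.1.2, hp.1.1.1⟩, Or.inl ⟨hp.1.2, hp.2⟩⟩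
      · exact Prod.swap_injective.injOn
    have hd : A.card * B.card ≤ (pairSet A B false).card + (pairSet A B true).card + A.card := by
      rw [← Finset.card_product]
      have hsub : A ×ˢ B ⊆ pairSet A B false ∪ (pairSet A B true).image Prod.swap
          ∪ A.image (fun x => (x, x)) := by
        rintro ⟨i, j⟩ hp
        simp only [Finset.mem_product] at hp
        rcases lt_trichotomy i j with h | h | h
        · simp [pairSet, hp, h]
        · subst h; simp [hp]
        · simp [pairSet, hp, h]
      refine (Finset.card_le_card hsub).trans ((Finset.card_union_le _ _).trans ?_)
      refine add_le_add ((Finset.card_union_le _ _).trans ?_) Finset.card_image_le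
      exact add_le_add le_rfl Finset.card_image_le
    have h2 : 2 * A.card ≤ A.card * B.card := by nlinarith
    by_cases hc : A.card * B.card ≤ 4 * (pairSet A B false).card
    · have := hω A B hA hB false hc; omega
    · have := hω A B hA hB true (by omega); omega


lemma prod_bound (d t n : ℕ) (hn : n = 6 * t) (ht : 1 ≤ t) (bad : Fin n → Finset (Fin n))
    (hp : (t * t : ℝ) ≤ 64 * ∑ x, ((bad x).card : ℝ)) :
    ((Fintype.piFinset (fun q : Fin d × Fin n => (bad q.2)ᶜ)).card : ℝ)
      ≤ (n : ℝ) ^ (d * n) * Real.exp (-(d * t / 384)) := by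
  have htR : (1 : ℝ) ≤ t := by exact_mod_cast ht
  have hnR : (n : ℝ) = 6 * t := by rw [hn]; push_cast; ring
  have hn0 : (0 : ℝ) < n := by rw [hnR]; linarith
  rw [Fintype.card_piFinset, Fintype.prod_prod_type]
  simp only [Finset.prod_const, Finset.card_univ, Fintype.card_fin]
  rw [Nat.cast_pow, Nat.cast_prod]
  have hx : ∀ x : Fin n, (((bad x)ᶜ.card : ℕ) : ℝ) ≤ n * Real.exp (-((bad x).card / n)) := by
    intro x
    have e1 : (((bad x)ᶜ.card : ℕ) : ℝ) = n - (bad x).card := by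
      rw [Finset.card_compl, Fintype.card_fin, Nat.cast_sub]
      simpa using Finset.card_le_univ (bad x)
    rw [e1]
    have := Real.add_one_le_exp (-((bad x).card / n : ℝ))
    calc (n - (bad x).card : ℝ) = n * (-((bad x).card / n : ℝ) + 1) := by field_simp; ring
      _ ≤ _ := mul_le_mul_of_nonneg_left this hn0.le
  calc (∏ x, (((bad x)ᶜ.card : ℕ) : ℝ)) ^ d
      ≤ (∏ x, (n * Real.exp (-((bad x).card / n : ℝ)))) ^ d := by
        refine pow_le_pow_left₀ (Finset.prod_nonneg (fun _ _ => by positivity)) ?_ _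
        exact Finset.prod_le_prod (fun _ _ => by positivity) (fun x _ => hx x)
    _ = (n : ℝ) ^ (d * n) * Real.exp (-(d * ((∑ x, ((bad x).card : ℝ)) / n))) := by
        rw [Finset.prod_mul_distrib, Finset.prod_const, ← Real.exp_sum, mul_pow,
          Finset.card_univ, Fintype.card_fin, ← pow_mul, mul_comm n d, ← Real.exp_nat_mul,
          Finset.sum_neg_distrib, Finset.sum_div]
        congr 2; ring
    _ ≤ _ := by
        refine mul_le_mul_of_nonneg_left (Real.exp_le_exp.2 ?_) (by positivity)
        rw [neg_le_neg_iff, mul_div_assoc]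
        refine mul_le_mul_of_nonneg_left ?_ (by positivity)
        rw [le_div_iff₀ hn0, hnR]
        nlinarith

open Classical in
lemma exists_functions (k t d : ℕ) (ht : 1 ≤ t) (hd : (2 * k : ℝ) ^ 4608 < Real.exp d)
    (r : Fin k → Fin k → Prop) :
    ∃ F : Fin d × Fin (6 * t) → Fin (6 * t), ∀ (X Y : Finset (Fin (6 * t)))
      (φ ψ : Fin (6 * t) → Fin k),
      t * t ≤ 64 * ((X ×ˢ Y).filter (fun p => r (ψ p.2) (φ p.1))).card →
      ∃ l x, x ∈ X ∧ F (l, x) ∈ Y ∧ r (ψ (F (l, x))) (φ x) := by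
  by_contra! hcon
  set n := 6 * t with hn
  let Ix := (Finset (Fin n) × Finset (Fin n)) × ((Fin n → Fin k) × (Fin n → Fin k))
  let bad : Ix → Fin n → Finset (Fin n) := fun p x =>
    if x ∈ p.1.1 then p.1.2.filter (fun y => r (p.2.2 y) (p.2.1 x)) else ∅
  let I : Finset Ix := Finset.univ.filter (fun p => t * t ≤ 64 * ∑ x, (bad p x).card)
  let E : Ix → Finset (Fin d × Fin n → Fin n) := fun p =>
    Fintype.piFinset (fun q => (bad p q.2)ᶜ)
  have hcov : (Finset.univ : Finset (Fin d × Fin n → Fin n)) ⊆ I.biUnion E := by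
    intro F _
    obtain ⟨X, Y, φ, ψ, h1, h2⟩ := hcon F
    rw [Finset.mem_biUnion]
    refine ⟨((X, Y), (φ, ψ)), ?_, ?_⟩
    · simp only [I, Finset.mem_filter, Finset.mem_univ, true_and]
      refine h1.trans (le_of_eq ?_)
      congr 1
      simp only [bad]
      rw [Finset.card_filter, Finset.sum_product, ← Finset.sum_filter_add_sum_filter_not
        Finset.univ (fun x => x ∈ X)]
      rw [Finset.sum_congr (s₁ := Finset.univ.filter (fun x => x ∈ X)) rfl
        (g := fun x => ∑ y ∈ Y, if r (ψ y) (φ x) then 1 else 0)]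
      · rw [Finset.sum_eq_zero (s := Finset.univ.filter (fun x => x ∉ X))]
        · simp
        · intro x hx; simp at hx; simp [hx]
      · intro x hx
        simp at hx
        rw [if_pos hx, Finset.card_filter]
    · simp only [E, Fintype.mem_piFinset, Finset.mem_compl]
      rintro ⟨l, x⟩ hmem
      simp only [bad] at hmem
      split_ifs at hmem with hx
      · simp only [Finset.mem_filter] at hmem
        exact h2 l x hx hmem.1 hmem.2
      · simp at hmem
  have hn0 : (0 : ℝ) < n := by rw [hn]; push_cast; have : (1 : ℝ) ≤ t := by exact_mod_cast ht
                               linarith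
  have htR : (1 : ℝ) ≤ t := by exact_mod_cast ht
  have hE : ∀ p ∈ I, ((E p).card : ℝ) ≤ (n : ℝ) ^ (d * n) * Real.exp (-(d * t / 384)) := by
    intro p hp
    simp only [I, Finset.mem_filter, Finset.mem_univ, true_and] at hp
    have hpR : (t * t : ℝ) ≤ 64 * ∑ x, ((bad p x).card : ℝ) := by exact_mod_cast hp
    exact prod_bound d t n hn ht (bad p) hpR
  have hc : (n : ℝ) ^ (d * n) ≤ (Fintype.card Ix : ℝ) *
      ((n : ℝ) ^ (d * n) * Real.exp (-(d * t / 384))) := by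
    have h1 := (Finset.card_le_card hcov).trans Finset.card_biUnion_le
    have h2 : (Finset.univ : Finset (Fin d × Fin n → Fin n)).card = n ^ (d * n) := by simp
    rw [h2] at h1
    have h3 : (n : ℝ) ^ (d * n) ≤ ∑ p ∈ I, ((E p).card : ℝ) := by exact_mod_cast h1
    refine h3.trans ((Finset.sum_le_card_nsmul _ _ _ hE).trans ?_)
    rw [nsmul_eq_mul]
    refine mul_le_mul_of_nonneg_right ?_ (by positivity)
    exact_mod_cast Finset.card_le_univ I
  have hIx : (Fintype.card Ix : ℝ) = (2 * k : ℝ) ^ (12 * t) := by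
    simp only [Ix, Fintype.card_prod, Fintype.card_finset, Fintype.card_fin, Fintype.card_fun]
    push_cast
    rw [hn, mul_pow, show 12 * t = 6 * t + 6 * t by ring, pow_add, pow_add]
  have hpos : (0 : ℝ) < (n : ℝ) ^ (d * n) := by positivity
  have h5 : (1 : ℝ) ≤ (2 * k : ℝ) ^ (12 * t) * Real.exp (-(d * t / 384)) := by
    rw [hIx] at hc
    refine le_of_mul_le_mul_left ?_ hpos
    linarith
  have h6 : Real.exp (d * t / 384) ≤ (2 * k : ℝ) ^ (12 * t) := by
    rw [Real.exp_neg] at h5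
    have := Real.exp_pos (d * t / 384 : ℝ)
    rwa [← div_eq_mul_inv, one_le_div this] at h5
  have h7 := pow_le_pow_left₀ (Real.exp_pos _).le h6 384
  rw [← Real.exp_nat_mul, ← pow_mul, show 12 * t * 384 = 4608 * t by ring, pow_mul] at h7
  have h8 : ((384 : ℕ) : ℝ) * (d * t / 384) = t * d := by push_cast; ring
  rw [h8, Real.exp_nat_mul] at h7
  have h9 := pow_lt_pow_left₀ hd (by positivity) (n := t) (by omega)
  linarith


/-- the layers cannot spread over the blocks -/
lemma block_argument (t H m : ℕ) (ht : 1 ≤ t) (hm : 1 ≤ m) (hH : 2 * m ≤ H)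
    (p : ℕ → Fin (6 * t) → ℕ) (hp : ∀ i, i < H → ∀ x, p i x < m)
    (ha : ∀ i j, i + 1 < H → 2 * t ≤ (Finset.univ.filter (fun x => j ≤ p i x)).card →
      2 * t ≤ (Finset.univ.filter (fun x => p (i + 1) x < j)).card → False)
    (hb : ∀ i j, i + 1 < H → 2 * t ≤ (Finset.univ.filter (fun x => p i x = j)).card →
      2 * t ≤ (Finset.univ.filter (fun x => p (i + 1) x = j)).card → False) : False := by
  have htot : ∀ i j, (Finset.univ.filter (fun x => p i x < j)).card
      + (Finset.univ.filter (fun x => j ≤ p i x)).card = 6 * t := by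
    intro i j
    have := Finset.card_filter_add_card_filter_not (s := Finset.univ) (fun x => p i x < j)
    simpa using this
  have hspl : ∀ i j, (Finset.univ.filter (fun x => j ≤ p i x)).card
      ≤ (Finset.univ.filter (fun x => p i x = j)).card
      + (Finset.univ.filter (fun x => j + 1 ≤ p i x)).card := by
    intro i j
    refine (Finset.card_le_card ?_).trans (Finset.card_union_le _ _)
    intro x hx
    simp only [Finset.mem_filter, Finset.mem_univ, true_and, Finset.mem_union] at hx ⊢
    omega
  have step : ∀ j, j < m → (Finset.univ.filter (fun x => p (2 * j) x < j)).card < 2 * t →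
      2 * t ≤ (Finset.univ.filter (fun x => j + 1 ≤ p (2 * j + 1) x)).card := by
    intro j hj hP
    by_contra! hlt
    have a1 := htot (2 * j) j
    have a2 := htot (2 * j) (j + 1)
    have a3 := htot (2 * j + 1) j
    have a4 := htot (2 * j + 1) (j + 1)
    have a5 := hspl (2 * j) j
    have a6 := hspl (2 * j + 1) j
    have b1 := ha (2 * j) j (by omega)
    have b2 := ha (2 * j) (j + 1) (by omega)
    have b3 := hb (2 * j) j (by omega)
    by_cases c1 : 2 * t ≤ (Finset.univ.filter (fun x => j + 1 ≤ p (2 * j) x)).card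
    · exact b2 c1 (by omega)
    · refine b3 (by omega) ?_
      by_contra! c2
      exact b1 (by omega) (by omega)
  have hP : ∀ j, j < m → (Finset.univ.filter (fun x => p (2 * j) x < j)).card < 2 * t := by
    intro j
    induction j with
    | zero => intro _; simp; omega
    | succ j ih =>
      intro hj
      have h1 := step j (by omega) (ih (by omega))
      by_contra! h2
      exact ha (2 * j + 1) (j + 1) (by omega) h1 h2
  have h1 := step (m - 1) (by omega) (hP (m - 1) (by omega))
  have h2 : (Finset.univ.filter (fun x => m - 1 + 1 ≤ p (2 * (m - 1) + 1) x)) = ∅ := by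
    rw [Finset.filter_eq_empty_iff]
    intro x _
    have := hp (2 * (m - 1) + 1) (by omega) x
    omega
  rw [h2] at h1
  simp at h1
  omega

open Classical in
lemma big_classes {α : Type*} (s a t : ℕ) (h : 2 * (s * a) ≤ t) (X : Finset α) (hX : t ≤ X.card)
    (c : α → Fin s) :
    t ≤ 2 * ∑ b ∈ Finset.univ.filter (fun b => a ≤ (X.filter (fun x => c x = b)).card),
      (X.filter (fun x => c x = b)).card := by
  have h1 : X.card = ∑ b : Fin s, (X.filter (fun x => c x = b)).card :=
    Finset.card_eq_sum_card_fiberwise (fun x _ => Finset.mem_coe.2 (Finset.mem_univ _))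
  rw [← Finset.sum_filter_add_sum_filter_not Finset.univ
    (fun b => a ≤ (X.filter (fun x => c x = b)).card)] at h1
  have h2 : ∑ b ∈ Finset.univ.filter (fun b => ¬ a ≤ (X.filter (fun x => c x = b)).card),
      (X.filter (fun x => c x = b)).card ≤ s * a := by
    refine (Finset.sum_le_card_nsmul _ _ a ?_).trans ?_
    · intro b hb; simp at hb; omega
    · rw [smul_eq_mul]
      refine Nat.mul_le_mul_right _ ?_
      simpa using Finset.card_le_univ
        (Finset.univ.filter (fun b => ¬ a ≤ (X.filter (fun x => c x = b)).card))
  omega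

open Classical in
lemma bad_count {α : Type*} (k s a t : ℕ) (h : 2 * (s * a) ≤ t) (r : Fin k → Fin k → Prop)
    (hr : ∀ A B : Finset (Fin k), a ≤ A.card → a ≤ B.card →
      A.card * B.card ≤ 16 * ((A ×ˢ B).filter (fun p => r p.2 p.1)).card)
    (X Y : Finset α) (hX : t ≤ X.card) (hY : t ≤ Y.card) (Φ Ψ : α → Fin k × Fin s)
    (hΦ : Set.InjOn Φ X) (hΨ : Set.InjOn Ψ Y) :
    t * t ≤ 64 * ((X ×ˢ Y).filter (fun p => r (Ψ p.2).1 (Φ p.1).1)).card := by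
  set Xc : Fin s → Finset α := fun b => X.filter (fun x => (Φ x).2 = b) with hXc
  set Yc : Fin s → Finset α := fun b => Y.filter (fun x => (Ψ x).2 = b) with hYc
  have bX := big_classes s a t h X hX (fun x => (Φ x).2)
  have bY := big_classes s a t h Y hY (fun x => (Ψ x).2)
  set SX := Finset.univ.filter (fun b => a ≤ (Xc b).card) with hSX
  set SY := Finset.univ.filter (fun b => a ≤ (Yc b).card) with hSY
  change t ≤ 2 * ∑ b ∈ SX, (Xc b).card at bX
  change t ≤ 2 * ∑ b ∈ SY, (Yc b).card at bY
  have key : ∀ b ∈ SX, ∀ c ∈ SY, (Xc b).card * (Yc c).card ≤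
      16 * ((Xc b ×ˢ Yc c).filter (fun p => r (Ψ p.2).1 (Φ p.1).1)).card := by
    intro b hb c hc
    simp only [hSX, hSY, Finset.mem_filter, Finset.mem_univ, true_and] at hb hc
    have iX : Set.InjOn (fun x => (Φ x).1) (Xc b) := by
      intro x hx y hy hxy
      simp only [hXc, Finset.coe_filter, Set.mem_ofPred_eq] at hx hy
      exact hΦ hx.1 hy.1 (Prod.ext hxy (hx.2.trans hy.2.symm))
    have iY : Set.InjOn (fun x => (Ψ x).1) (Yc c) := by
      intro x hx y hy hxy
      simp only [hYc, Finset.coe_filter, Set.mem_ofPred_eq] at hx hy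
      exact hΨ hx.1 hy.1 (Prod.ext hxy (hx.2.trans hy.2.symm))
    have cX := Finset.card_image_of_injOn iX
    have cY := Finset.card_image_of_injOn iY
    have := hr ((Xc b).image (fun x => (Φ x).1)) ((Yc c).image (fun x => (Ψ x).1))
      (by rw [cX]; exact hb) (by rw [cY]; exact hc)
    rw [cX, cY] at this
    refine this.trans (Nat.mul_le_mul_left _ ?_)
    refine (Finset.card_le_card ?_).trans (Finset.card_image_le
      (f := fun p : α × α => ((Φ p.1).1, (Ψ p.2).1)))
    rintro ⟨i, j⟩ hp
    simp only [Finset.mem_filter, Finset.mem_product, Finset.mem_image] at hp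
    obtain ⟨⟨⟨x, hx, rfl⟩, ⟨y, hy, rfl⟩⟩, hxy⟩ := hp
    rw [Finset.mem_image]
    exact ⟨(x, y), by simp only [Finset.mem_filter, Finset.mem_product]; exact ⟨⟨hx, hy⟩, hxy⟩, rfl⟩
  have hsum : ∑ q ∈ SX ×ˢ SY,
      ((Xc q.1 ×ˢ Yc q.2).filter (fun p => r (Ψ p.2).1 (Φ p.1).1)).card
      ≤ ((X ×ˢ Y).filter (fun p => r (Ψ p.2).1 (Φ p.1).1)).card := by
    rw [← Finset.card_biUnion]
    · apply Finset.card_le_card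
      intro p hp
      simp only [Finset.mem_biUnion, Finset.mem_filter, Finset.mem_product, hXc, hYc] at hp ⊢
      obtain ⟨q, -, ⟨⟨h1, -⟩, ⟨h2, -⟩⟩, h3⟩ := hp
      exact ⟨⟨h1, h2⟩, h3⟩
    · intro q _ q' _ hne
      rw [Function.onFun, Finset.disjoint_left]
      intro p hp hp'
      simp only [Finset.mem_filter, Finset.mem_product, hXc, hYc] at hp hp'
      exact hne (Prod.ext (hp.1.1.2.symm.trans hp'.1.1.2) (hp.1.2.2.symm.trans hp'.1.2.2))
  have hk : (∑ b ∈ SX, (Xc b).card) * (∑ b ∈ SY, (Yc b).card) ≤ 16 * ∑ q ∈ SX ×ˢ SY,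
      ((Xc q.1 ×ˢ Yc q.2).filter (fun p => r (Ψ p.2).1 (Φ p.1).1)).card := by
    rw [Finset.sum_mul_sum, ← Finset.sum_product', Finset.mul_sum]
    refine Finset.sum_le_sum ?_
    intro q hq
    rw [Finset.mem_product] at hq
    exact key q.1 hq.1 q.2 hq.2
  have := Nat.mul_le_mul bX bY
  nlinarith

open Classical in
lemma heavy_count (d t : ℕ) (F : Fin d × Fin (6 * t) → Fin (6 * t)) :
    (Finset.univ.filter (fun y => 6 * d < (Finset.univ.filter (fun q => F q = y)).card)).card
      ≤ t := by
  set Hv := Finset.univ.filter (fun y => 6 * d < (Finset.univ.filter (fun q => F q = y)).card)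
  have h1 : ∑ y : Fin (6 * t), (Finset.univ.filter (fun q => F q = y)).card = d * (6 * t) := by
    have := Finset.card_eq_sum_card_fiberwise (f := F) (s := Finset.univ) (t := Finset.univ)
      (fun x _ => Finset.mem_coe.2 (Finset.mem_univ _))
    rw [← this]; simp
  have h2 : Hv.card * (6 * d + 1) ≤ ∑ y ∈ Hv, (Finset.univ.filter (fun q => F q = y)).card := by
    rw [← smul_eq_mul]
    refine Finset.card_nsmul_le_sum _ _ _ ?_
    intro y hy
    simp only [Hv, Finset.mem_filter, Finset.mem_univ, true_and] at hy
    exact hy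
  have h3 : ∑ y ∈ Hv, (Finset.univ.filter (fun q => F q = y)).card ≤ d * (6 * t) := by
    rw [← h1]; exact Finset.sum_le_sum_of_subset (Finset.subset_univ _)
  by_contra! hlt
  nlinarith


open Classical in
lemma core (k b s t d : ℕ) (hb : 1 ≤ b) (hk : (4 * k : ℝ) ≤ (10 / 9) ^ b)
    (hd : (2 * k : ℝ) ^ 4608 < Real.exp d) (ht : 1 ≤ t) (hs : 2 * (s * (8 * b)) ≤ t) :
    ∃ B : Fin (6 * t) → Fin (6 * t) → Prop, (∀ x, {y | B x y}.ncard ≤ d) ∧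
      (∀ y, {x | B x y}.ncard ≤ 6 * d) ∧
      ∃ D : Digraph (Fin k × Fin s), D.IsTournament ∧
        ∀ X Y : Finset (Fin (6 * t)), 2 * t ≤ X.card → 2 * t ≤ Y.card →
        ∀ Φ Ψ : Fin (6 * t) → Fin k × Fin s, Set.InjOn Φ X → Set.InjOn Ψ Y →
        ∃ x ∈ X, ∃ y ∈ Y, B x y ∧ ¬ D.Adj (Φ x) (Ψ y) := by
  obtain ⟨r, hr1, hr2, hr3⟩ := exists_tournament k b hb hk
  obtain ⟨F, hF⟩ := exists_functions k t d ht hd r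
  refine ⟨fun x y => (∃ l, F (l, x) = y) ∧
    (Finset.univ.filter (fun q => F q = y)).card ≤ 6 * d, ?_, ?_,
    ⟨fun u v => r u.1 v.1 ∨ (u.1 = v.1 ∧ u.2 < v.2)⟩, ⟨?_, ?_⟩, ?_⟩
  · intro x
    have h1 : {y | (∃ l, F (l, x) = y) ∧ (Finset.univ.filter (fun q => F q = y)).card ≤ 6 * d}
        ⊆ ((Finset.univ.image (fun l => F (l, x)) : Finset _) : Set (Fin (6 * t))) := by
      rintro y ⟨⟨l, hl⟩, -⟩
      simp only [Finset.coe_image, Finset.coe_univ, Set.image_univ, Set.mem_range]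
      exact ⟨l, hl⟩
    refine (Set.ncard_le_ncard h1 (Finset.finite_toSet _)).trans ?_
    rw [Set.ncard_coe_finset]
    exact Finset.card_image_le.trans (by simp)
  · intro y
    by_cases hy : (Finset.univ.filter (fun q => F q = y)).card ≤ 6 * d
    · have h1 : {x | (∃ l, F (l, x) = y) ∧ (Finset.univ.filter (fun q => F q = y)).card ≤ 6 * d}
          ⊆ (((Finset.univ.filter (fun q => F q = y)).image Prod.snd : Finset _) :
            Set (Fin (6 * t))) := by
        rintro x ⟨⟨l, hl⟩, -⟩
        rw [Finset.mem_coe, Finset.mem_image]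
        exact ⟨(l, x), by simpa using hl, rfl⟩
      refine (Set.ncard_le_ncard h1 (Finset.finite_toSet _)).trans ?_
      rw [Set.ncard_coe_finset]
      exact Finset.card_image_le.trans hy
    · have : {x | (∃ l, F (l, x) = y) ∧
          (Finset.univ.filter (fun q => F q = y)).card ≤ 6 * d} = ∅ := by
        ext x; simp only [Set.mem_ofPred_eq, Set.mem_empty_iff_false, iff_false]
        exact fun h => hy h.2
      rw [this]; simp
  · rintro ⟨i, a⟩; simp [hr1]
  · rintro ⟨i, a⟩ ⟨j, c⟩ hne
    by_cases hij : i = j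
    · subst hij
      have : a ≠ c := fun h => hne (by rw [h])
      simp only [hr1, true_and, false_or]
      rw [not_lt]
      exact ⟨fun h => h.le, fun h => lt_of_le_of_ne h this⟩
    · have := hr2 i j hij
      simp only [hij, Ne.symm hij, false_and, or_false, this]
  · intro X Y hX hY Φ Ψ hΦ hΨ
    set Y' := Y.filter (fun y => (Finset.univ.filter (fun q => F q = y)).card ≤ 6 * d) with hY'
    have hheavy := heavy_count d t F
    have hY'c : t ≤ Y'.card := by
      have h1 : Y ⊆ Y' ∪ Finset.univ.filter
          (fun y => 6 * d < (Finset.univ.filter (fun q => F q = y)).card) := by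
        intro y hy
        simp only [hY', Finset.mem_union, Finset.mem_filter, Finset.mem_univ, true_and, hy]
        exact le_or_gt _ _
      have := (Finset.card_le_card h1).trans (Finset.card_union_le _ _)
      omega
    have hbad := bad_count k s (8 * b) t hs r hr3 X Y' (by omega) hY'c Φ Ψ hΦ
      (hΨ.mono (by intro y hy; rw [Finset.mem_coe] at hy ⊢; exact (Finset.mem_filter.1 hy).1))
    obtain ⟨l, x, hx, hy, hrr⟩ := hF X Y' (fun x => (Φ x).1) (fun y => (Ψ y).1) hbad
    obtain ⟨hy1, hy2⟩ := Finset.mem_filter.1 hy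
    refine ⟨x, hx, F (l, x), hy1, ⟨⟨l, rfl⟩, hy2⟩, ?_⟩
    rintro (h | ⟨h, -⟩)
    · have hne : (Φ x).1 ≠ (Ψ (F (l, x))).1 := by
        intro e; rw [e] at h; exact hr1 _ h
      exact (hr2 _ _ hne).1 h hrr
    · rw [h] at hrr
      exact hr1 _ hrr

open Classical in
lemma assemble (k b s t d H m : ℕ) (hb : 1 ≤ b) (hk : (4 * k : ℝ) ≤ (10 / 9) ^ b)
    (hd : (2 * k : ℝ) ^ 4608 < Real.exp d) (ht : 1 ≤ t) (hs : 2 * (s * (8 * b)) ≤ t)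
    (hks : 6 * t ≤ k * s) (hm : 1 ≤ m) (hH : 2 * m ≤ H) :
    ∃ (G : Digraph (Fin (H * (6 * t)))) (f : Fin (H * (6 * t)) → ℕ),
      (∀ v, 1 ≤ f v ∧ f v ≤ H) ∧
      (∀ u v, G.Adj u v → f v = f u + 1) ∧
      (∀ i : ℕ, 1 ≤ i → i ≤ H → Nat.card {v | f v = i} ≤ 6 * t) ∧
      (∀ v, G.degree v ≤ 7 * d) ∧
      m * (k * s) < orientedRamsey G := by
  obtain ⟨B, hB1, hB2, D, hD, hcore⟩ := core k b s t d hb hk hd ht hs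
  let e : Fin (H * (6 * t)) ≃ Fin H × Fin (6 * t) := finProdFinEquiv.symm
  let G : Digraph (Fin (H * (6 * t))) :=
    ⟨fun u v => ((e v).1 : ℕ) = (e u).1 + 1 ∧ B (e u).2 (e v).2⟩
  let f : Fin (H * (6 * t)) → ℕ := fun v => (e v).1 + 1
  refine ⟨G, f, ?_, ?_, ?_, ?_, ?_⟩
  · intro v
    have := (e v).1.2
    simp only [f]; omega
  · rintro u v ⟨h, -⟩
    simp only [f]; omega
  · intro i _ _
    rw [Nat.card_coe_set_eq]
    have h := Set.ncard_le_ncard_of_injOn (s := {v | f v = i}) (t := Set.univ)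
      (fun v => (e v).2) (fun _ _ => Set.mem_univ _) (by
        intro u hu v hv huv
        simp only [Set.mem_ofPred_eq, f] at hu hv
        exact e.injective (Prod.ext (Fin.ext (by omega)) huv)) (Set.toFinite _)
    refine h.trans ?_
    rw [Set.ncard_univ]; simp
  · intro v
    unfold Digraph.degree
    rw [Nat.card_coe_set_eq]
    have hu : {u | G.Adj v u ∨ G.Adj u v} = {u | G.Adj v u} ∪ {u | G.Adj u v} := rfl
    rw [hu]
    refine (Set.ncard_union_le _ _).trans ?_
    have h1 : {u | G.Adj v u}.ncard ≤ d := by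
      refine le_trans (Set.ncard_le_ncard_of_injOn (fun u => (e u).2) ?_ ?_ (Set.toFinite _))
        (hB1 (e v).2)
      · rintro u ⟨-, h⟩; exact h
      · rintro u ⟨hu, -⟩ w ⟨hw, -⟩ huw
        exact e.injective (Prod.ext (Fin.ext (by omega)) huw)
    have h2 : {u | G.Adj u v}.ncard ≤ 6 * d := by
      refine le_trans (Set.ncard_le_ncard_of_injOn (fun u => (e u).2) ?_ ?_ (Set.toFinite _))
        (hB2 (e v).2)
      · rintro u ⟨-, h⟩; exact h
      · rintro u ⟨hu, -⟩ w ⟨hw, -⟩ huw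
        exact e.injective (Prod.ext (Fin.ext (by omega)) huw)
    omega
  · let T : Digraph (Fin m × (Fin k × Fin s)) :=
      ⟨fun u v => u.1 < v.1 ∨ (u.1 = v.1 ∧ D.Adj u.2 v.2)⟩
    have hT : T.IsTournament := by
      refine ⟨?_, ?_⟩
      · rintro ⟨i, a⟩ (h | ⟨-, h⟩)
        · exact lt_irrefl _ h
        · exact hD.1 _ h
      · rintro ⟨i, a⟩ ⟨j, c⟩ hne
        simp only [T]
        rcases lt_trichotomy i j with h | h | h
        · simp [h, not_lt_of_gt h, h.ne']
        · subst h
          have : a ≠ c := fun h => hne (by rw [h])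
          simpa using hD.2 a c this
        · simp [h, not_lt_of_gt h, h.ne']
    have hcard : Fintype.card (Fin m × (Fin k × Fin s)) = m * (k * s) := by simp
    rw [← hcard]
    refine ramsey_gt G f ?_ T hT ?_
    · rintro u v ⟨h, -⟩
      simp only [f]; omega
    rintro ⟨φ, hφ, hφG⟩
    have hH0 : 0 < H := by omega
    let Λ : ℕ → Fin (6 * t) → Fin m × (Fin k × Fin s) := fun i x =>
      if h : i < H then φ (e.symm (⟨i, h⟩, x)) else φ (e.symm (⟨0, hH0⟩, x))
    have hΛinj : ∀ i, Function.Injective (Λ i) := by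
      intro i x y hxy
      simp only [Λ] at hxy
      split_ifs at hxy
      · have := e.symm.injective (hφ hxy); simpa using this
      · have := e.symm.injective (hφ hxy); simpa using this
    have hΛadj : ∀ i, i + 1 < H → ∀ x y, B x y → T.Adj (Λ i x) (Λ (i + 1) y) := by
      intro i hi x y hxy
      have hi' : i < H := by omega
      simp only [Λ, hi, hi', dif_pos]
      apply hφG
      refine ⟨?_, ?_⟩ <;> simp [hxy]
    obtain ⟨ι⟩ : Nonempty (Fin (6 * t) ↪ Fin k × Fin s) :=
      Function.Embedding.nonempty_of_card_le (by simpa using hks)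
    refine block_argument t H m ht hm hH (fun i x => ((Λ i x).1 : ℕ)) (fun i _ x => (Λ i x).1.2)
      ?_ ?_
    · intro i j hi hX hY
      obtain ⟨x, hx, y, hy, hxy, -⟩ := hcore _ _ hX hY ι ι ι.injective.injOn ι.injective.injOn
      simp only [Finset.mem_filter, Finset.mem_univ, true_and] at hx hy
      rcases hΛadj i hi x y hxy with h | ⟨h, -⟩
      · rw [Fin.lt_def] at h; omega
      · rw [Fin.ext_iff] at h; omega
    · intro i j hi hX hY
      have hinj : ∀ i', Set.InjOn (fun x => (Λ i' x).2)
          ((Finset.univ.filter (fun x => ((Λ i' x).1 : ℕ) = j) : Finset _) :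
            Set (Fin (6 * t))) := by
        intro i' x hx y hy hxy
        rw [Finset.mem_coe, Finset.mem_filter] at hx hy
        exact hΛinj i' (Prod.ext (Fin.ext (hx.2.trans hy.2.symm)) hxy)
      obtain ⟨x, hx, y, hy, hxy, hn⟩ := hcore _ _ hX hY _ _ (hinj i) (hinj (i + 1))
      simp only [Finset.mem_filter, Finset.mem_univ, true_and] at hx hy
      rcases hΛadj i hi x y hxy with h | ⟨-, h⟩
      · rw [Fin.lt_def] at h; omega
      · exact hn h

/-- There are constants `c > 1` and `Δ₀` such that for all `Δ ≥ Δ₀`,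
`n ≥ Δ` and `H ≥ 2` there is a graded digraph `G` of maximum degree at most `Δ`, with a
graded partition into `H` parts each of size at most `n` (the part of `v` being `f v`),
whose oriented Ramsey number exceeds `c^Δ · H · n`; in particular it exceeds
`c^Δ · |V(G)|`. -/
theorem graded_oriented_ramsey_lower :
    ∃ c : ℝ, 1 < c ∧ ∃ Δ₀ : ℕ, ∀ Δ : ℕ, Δ₀ ≤ Δ → ∀ n : ℕ, Δ ≤ n → ∀ H : ℕ, 2 ≤ H →
      ∃ (M : ℕ) (G : Digraph (Fin M)) (f : Fin M → ℕ),
        (∀ v : Fin M, 1 ≤ f v ∧ f v ≤ H) ∧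
        (∀ u v : Fin M, G.Adj u v → f v = f u + 1) ∧
        (∀ i : ℕ, 1 ≤ i → i ≤ H → Nat.card {v : Fin M | f v = i} ≤ n) ∧
        (∀ v : Fin M, G.degree v ≤ Δ) ∧
        c ^ Δ * H * n < (orientedRamsey G : ℝ) ∧
        c ^ Δ * M < (orientedRamsey G : ℝ) := by
  have hc0 : ∃ c : ℝ, 1 < c ∧ c ^ 200000 = 2 := by
    refine ⟨(2 : ℝ) ^ ((200000 : ℕ) : ℝ)⁻¹, Real.one_lt_rpow (by norm_num) (by positivity), ?_⟩
    exact Real.rpow_inv_natCast_pow (by norm_num) (by norm_num)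
  obtain ⟨c, hc1, hc2⟩ := hc0
  refine ⟨c, hc1, 4000000, ?_⟩
  intro Δ hΔ n hn H hH
  obtain ⟨g, hg⟩ : ∃ g, g = Δ / 200000 := ⟨_, rfl⟩
  have hg20 : 20 ≤ g := by omega
  obtain ⟨t, htd⟩ : ∃ t, t = n / 6 := ⟨_, rfl⟩
  obtain ⟨b, hbd⟩ : ∃ b, b = 14 * (g + 1) := ⟨_, rfl⟩
  obtain ⟨s, hsd⟩ : ∃ s, s = t / (16 * b) := ⟨_, rfl⟩
  obtain ⟨m, hmd⟩ : ∃ m, m = H / 2 := ⟨_, rfl⟩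
  obtain ⟨k, hkd⟩ : ∃ k, k = 4 ^ g := ⟨_, rfl⟩
  obtain ⟨d, hdd⟩ : ∃ d, d = 4608 * (2 * g + 1) := ⟨_, rfl⟩
  have hpow : 2 ^ g ≥ 32256 * (g + 1) + 1 := by
    clear hg hbd hkd hdd
    induction g, hg20 using Nat.le_induction with
    | base => norm_num
    | succ g hg ih => rw [pow_succ]; omega
  have hts : t ≤ s * (32 * b) := by
    have h1 : 16 * b ≤ t := by omega
    have h2 : 1 ≤ s := by
      rw [hsd]; exact (Nat.one_le_div_iff (by omega)).2 h1
    have h3 := Nat.lt_div_mul_add (a := t) (b := 16 * b) (by omega)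
    rw [← hsd] at h3
    nlinarith
  have hk4 : k = 2 ^ g * 2 ^ g := by rw [hkd, ← mul_pow]; norm_num
  have hb1 : 1 ≤ b := by omega
  have hK : (4 * k : ℝ) ≤ (10 / 9) ^ b := by
    rw [hbd, hkd, show 14 * (g + 1) = 14 * g + 14 by ring, pow_add, pow_mul]
    push_cast
    have h1 : (4 : ℝ) ^ g ≤ ((10 / 9) ^ 14) ^ g := pow_le_pow_left₀ (by norm_num) (by norm_num) _
    have h2 : (4 : ℝ) ≤ (10 / 9) ^ 14 := by norm_num
    have h3 : (0 : ℝ) ≤ 4 ^ g := by positivity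
    nlinarith
  have hd1 : (2 * k : ℝ) ^ 4608 < Real.exp d := by
    have h1 : (2 * k : ℝ) = 2 ^ (2 * g + 1) := by
      rw [hkd, pow_succ, pow_mul]; push_cast; norm_num; ring
    rw [h1, ← pow_mul, hdd]
    have h2 : Real.exp ((4608 * (2 * g + 1) : ℕ) : ℝ) = Real.exp 1 ^ (4608 * (2 * g + 1)) := by
      rw [← Real.exp_nat_mul, mul_one]
    rw [h2, mul_comm (2 * g + 1) 4608]
    have := Real.exp_one_gt_d9
    exact pow_lt_pow_left₀ (by linarith) (by norm_num) (by omega)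
  have ht1 : 1 ≤ t := by omega
  have hs1 : 2 * (s * (8 * b)) ≤ t := by
    have := Nat.div_mul_le_self t (16 * b)
    rw [← hsd] at this
    nlinarith
  have hkb : 2 ^ g * (2304 * b) ≤ k := by
    rw [hk4]; exact Nat.mul_le_mul_left _ (by omega)
  have h2g : 1 ≤ 2 ^ g := Nat.one_le_two_pow
  have hks : 6 * t ≤ k * s := by
    have h1 : 2304 * b ≤ k := (Nat.le_mul_of_pos_left _ h2g).trans hkb
    have h2 := Nat.mul_le_mul_right s h1
    nlinarith
  have hm1 : 1 ≤ m := by omega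
  have h7d : 7 * d ≤ Δ := by omega
  have h6t : 6 * t ≤ n := by omega
  have hn12 : n ≤ 12 * t := by omega
  have hH3 : H ≤ 3 * m := by omega
  obtain ⟨G, f, h1, h2, h3, h4, h5⟩ :=
    assemble k b s t d H m hb1 hK hd1 ht1 hs1 hks hm1 (by omega)
  have hfin : 2 ^ (g + 1) * H * n ≤ m * (k * s) := by
    calc 2 ^ (g + 1) * H * n ≤ 2 ^ (g + 1) * (3 * m) * (12 * (s * (32 * b))) := by
          gcongr
          exact hn12.trans (Nat.mul_le_mul_left _ hts)
      _ = m * ((2 ^ g * (2304 * b)) * s) := by rw [pow_succ]; ring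
      _ ≤ m * (k * s) := by gcongr
  have hcΔ : c ^ Δ ≤ 2 ^ (g + 1) := by
    rw [← hc2, ← pow_mul]
    exact pow_le_pow_right₀ hc1.le (by omega)
  have hmain : c ^ Δ * H * n < (orientedRamsey G : ℝ) := by
    have e1 : c ^ Δ * H * n ≤ 2 ^ (g + 1) * H * n := by gcongr
    have e2 : (2 : ℝ) ^ (g + 1) * H * n ≤ ((m * (k * s) : ℕ) : ℝ) := by exact_mod_cast hfin
    have e3 : ((m * (k * s) : ℕ) : ℝ) < (orientedRamsey G : ℝ) := by exact_mod_cast h5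
    exact (e1.trans e2).trans_lt e3
  refine ⟨H * (6 * t), G, f, h1, h2, fun i hi hi' => (h3 i hi hi').trans h6t,
    fun v => (h4 v).trans h7d, hmain, lt_of_le_of_lt ?_ hmain⟩
  rw [mul_assoc]
  have e4 : ((H * (6 * t) : ℕ) : ℝ) ≤ H * n := by exact_mod_cast Nat.mul_le_mul_left H h6t
  exact mul_le_mul_of_nonneg_left e4 (by positivity)
end

section
/- Let Δ ≥ 1 and w ≥ 1 be integers and let G be a digraph with maximum degree at most Δ and graded bandwidth at most w. Then r⃗(G) ≤ 3^(57Δw) · |V(G)|. -/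
/-- `G` has graded bandwidth at most `w`: its vertices can be assigned levels so that
every edge goes from a level `i` to a level `j` with `1 ≤ j - i ≤ w`. -/
def Digraph.GradedBandwidthAtMost {V : Type*} (G : Digraph V) (w : ℕ) : Prop :=
  ∃ f : V → ℕ, ∀ u v : V, G.Adj u v → f u + 1 ≤ f v ∧ f v ≤ f u + w

namespace GBR
open Classical Finset

/-- Power mean. -/
lemma power_mean {α : Type*} (s : Finset α) (f : α → ℝ) (hf : ∀ a ∈ s, 0 ≤ f a) (c : ℝ)
    (hc : 0 ≤ c) (h : c * #s ≤ ∑ a ∈ s, f a) (n : ℕ) : c ^ n * #s ≤ ∑ a ∈ s, f a ^ n := by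
  rcases n with _ | n
  · simp
  · rcases s.eq_empty_or_nonempty with rfl | hs
    · simp
    have hpos : (0 : ℝ) < #s := by exact_mod_cast hs.card_pos
    have h2 : (∑ a ∈ s, f a) ^ (n + 1) / (#s : ℝ) ^ n ≤ ∑ a ∈ s, f a ^ (n + 1) :=
      pow_sum_div_card_le_sum_pow hf n
    refine le_trans ?_ h2
    rw [le_div_iff₀ (by positivity)]
    calc c ^ (n + 1) * #s * (#s : ℝ) ^ n = (c * #s) ^ (n + 1) := by ring
      _ ≤ _ := pow_le_pow_left₀ (by positivity) h _

/-- Double counting of tuples. -/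
lemma dcount {α W : Type*} (A : Finset α) (D : Finset W) (q : ℕ) (r : α → W → Prop)
    (wt : α → ℝ) :
    ∑ S ∈ Fintype.piFinset (fun _ : Fin q => D), ∑ a ∈ A with ∀ i, r a (S i), wt a
      = ∑ a ∈ A, wt a * (#{d ∈ D | r a d} : ℝ) ^ q := by
  simp_rw [Finset.sum_filter]
  rw [Finset.sum_comm]
  refine Finset.sum_congr rfl fun a _ => ?_
  rw [← Finset.sum_filter, Finset.sum_const, nsmul_eq_mul, mul_comm]
  congr 1
  have : ({S ∈ Fintype.piFinset (fun _ : Fin q => D) | ∀ i, r a (S i)} : Finset (Fin q → W))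
      = Fintype.piFinset (fun _ : Fin q => {d ∈ D | r a d}) := by
    ext S
    simp only [mem_filter, Fintype.mem_piFinset]
    exact ⟨fun h i => ⟨h.1 i, h.2 i⟩, fun h => ⟨fun i => (h i).1, fun i => (h i).2⟩⟩
  rw [this, Fintype.card_piFinset_const]
  push_cast; rfl

lemma stepA {W : Type*} (R : W → W → Prop) (P Y : Finset W) (q m : ℕ) (hm : 1 ≤ m)
    (hY : Y.Nonempty) (y K : ℝ) (hy : 0 ≤ y) (hK : 0 ≤ K)
    (hd : (#P * #Y : ℝ) ≤ 3 * ∑ x ∈ P, (#{v ∈ Y | R x v} : ℝ))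
    (hKy : K * y ^ q * (2 * 3 ^ (q * m)) ≤ 1) :
    ∃ P' ⊆ P, (#P : ℝ) ≤ 2 * 3 ^ q * #P' ∧
      K * (#{S ∈ Fintype.piFinset (fun _ : Fin m => P') |
        (#{v ∈ Y | ∀ i, R (S i) v} : ℝ) < y * #Y} : ℝ) ≤ (#P' : ℝ) ^ m := by
  set Z := Fintype.piFinset (fun _ : Fin q => Y) with hZ
  have hZc : (#Z : ℝ) = (#Y : ℝ) ^ q := by
    rw [hZ, Fintype.card_piFinset_const]; push_cast; rfl
  set Pz : (Fin q → W) → Finset W := fun z => {x ∈ P | ∀ i, R x (z i)} with hPz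
  set few : (Fin m → W) → Prop := fun S => (#{v ∈ Y | ∀ i, R (S i) v} : ℝ) < y * #Y with hfew
  set Bad : (Fin q → W) → ℝ := fun z =>
    (#{S ∈ Fintype.piFinset (fun _ : Fin m => Pz z) | few S} : ℝ) with hBad
  have hYpos : (0 : ℝ) < #Y := by exact_mod_cast hY.card_pos
  -- sizes
  have h1 : ((#Y : ℝ) / 3) ^ q * #P ≤ ∑ z ∈ Z, (#(Pz z) : ℝ) := by
    have := dcount P Y q (fun x v => R x v) (fun _ => (1 : ℝ))
    simp only [Finset.sum_const, nsmul_eq_mul, mul_one, one_mul] at this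
    rw [hZ, this]
    refine power_mean P (fun x => (#{v ∈ Y | R x v} : ℝ)) (fun _ _ => by positivity) _
      (by positivity) ?_ q
    linarith
  have h2 : (((1 : ℝ) / 3) ^ q * #P) ^ m * #Z ≤ ∑ z ∈ Z, (#(Pz z) : ℝ) ^ m := by
    refine power_mean Z (fun z => (#(Pz z) : ℝ)) (fun _ _ => by positivity) _
      (by positivity) ?_ m
    rw [hZc]
    refine le_trans (le_of_eq ?_) h1
    rw [div_pow, div_pow]; ring
  have h3 : ∑ z ∈ Z, Bad z ≤ (#P : ℝ) ^ m * (y * #Y) ^ q := by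
    have := dcount ({S ∈ Fintype.piFinset (fun _ : Fin m => P) | few S}) Y q
      (fun S v => ∀ i, R (S i) v) (fun _ => (1 : ℝ))
    simp only [Finset.sum_const, nsmul_eq_mul, mul_one, one_mul] at this
    have h4 : ∑ z ∈ Z, Bad z = ∑ S ∈ {S ∈ Fintype.piFinset (fun _ : Fin m => P) | few S},
        (#{v ∈ Y | ∀ i, R (S i) v} : ℝ) ^ q := by
      refine Eq.trans ?_ (this.trans (Finset.sum_congr rfl fun S _ => by congr!))
      refine Finset.sum_congr rfl fun z _ => ?_
      simp only [hBad, hPz]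
      congr 2
      ext S
      simp only [mem_filter, Fintype.mem_piFinset]
      constructor
      · rintro ⟨h, h'⟩
        exact ⟨⟨fun i => (h i).1, h'⟩, fun j i => (h i).2 j⟩
      · rintro ⟨⟨h, h'⟩, h''⟩
        exact ⟨fun i => ⟨h i, fun j => h'' j i⟩, h'⟩
    rw [h4]
    calc _ ≤ ∑ S ∈ {S ∈ Fintype.piFinset (fun _ : Fin m => P) | few S}, (y * #Y) ^ q := by
          refine Finset.sum_le_sum fun S hS => ?_
          have := (mem_filter.1 hS).2
          exact pow_le_pow_left₀ (by positivity) (le_of_lt this) _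
      _ ≤ _ := by
          rw [Finset.sum_const, nsmul_eq_mul]
          refine mul_le_mul_of_nonneg_right ?_ (by positivity)
          have : #{S ∈ Fintype.piFinset (fun _ : Fin m => P) | few S} ≤ #P ^ m := by
            refine (card_filter_le _ _).trans ?_
            rw [Fintype.card_piFinset_const]
          exact_mod_cast this
  have hT : ((1 : ℝ) / 3) ^ (q * m) * 3 ^ (q * m) = 1 := by
    rw [← mul_pow]; norm_num
  have h5 : ∑ z ∈ Z, (0 : ℝ) ≤ ∑ z ∈ Z, ((#(Pz z) : ℝ) ^ m - K * Bad z
      - (1 / 2) * ((1 : ℝ) / 3) ^ (q * m) * (#P : ℝ) ^ m) := by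
    rw [Finset.sum_sub_distrib, Finset.sum_sub_distrib, ← Finset.mul_sum, Finset.sum_const,
      Finset.sum_const, nsmul_eq_mul, nsmul_eq_mul, hZc]
    rw [hZc] at h2
    have h6 : K * ∑ z ∈ Z, Bad z ≤ K * ((#P : ℝ) ^ m * (y * #Y) ^ q) :=
      mul_le_mul_of_nonneg_left h3 hK
    have h7 : K * y ^ q ≤ (1 / 2) * ((1 : ℝ) / 3) ^ (q * m) := by
      have : K * y ^ q * 3 ^ (q * m) ≤ 1 / 2 := by linarith
      calc K * y ^ q = (K * y ^ q * 3 ^ (q * m)) * ((1 : ℝ) / 3) ^ (q * m) := by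
            rw [mul_assoc, mul_comm (3 ^ (q * m) : ℝ), hT, mul_one]
        _ ≤ _ := mul_le_mul_of_nonneg_right this (by positivity)
    have h8 : K * ((#P : ℝ) ^ m * (y * #Y) ^ q)
        ≤ (1 / 2) * ((1 : ℝ) / 3) ^ (q * m) * ((#P : ℝ) ^ m * (#Y : ℝ) ^ q) := by
      calc _ = (K * y ^ q) * ((#P : ℝ) ^ m * (#Y : ℝ) ^ q) := by rw [mul_pow]; ring
        _ ≤ _ := mul_le_mul_of_nonneg_right h7 (by positivity)
    have h9 : (((1 : ℝ) / 3) ^ q * #P) ^ m = ((1 : ℝ) / 3) ^ (q * m) * (#P : ℝ) ^ m := by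
      rw [mul_pow, pow_mul]
    rw [h9] at h2
    linarith
  have hZne : Z.Nonempty := by
    rw [hZ, Fintype.piFinset_nonempty]; exact fun _ => hY
  obtain ⟨z, hz, h10⟩ := Finset.exists_le_of_sum_le hZne h5
  have hB : 0 ≤ K * Bad z := mul_nonneg hK (by positivity)
  refine ⟨Pz z, filter_subset _ _, ?_, ?_⟩
  · by_contra hcon
    push Not at hcon
    have h11 : (#(Pz z) : ℝ) < (1 / 2) * (1 / 3) ^ q * #P := by
      have : ((1 : ℝ) / 3) ^ q * 3 ^ q = 1 := by rw [← mul_pow]; norm_num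
      calc (#(Pz z) : ℝ) = (1 / 2) * (1 / 3) ^ q * (2 * 3 ^ q * #(Pz z)) := by
            linear_combination (-(#(Pz z) : ℝ)) * this
        _ < _ := mul_lt_mul_of_pos_left hcon (by positivity)
    have h12 : (#(Pz z) : ℝ) ^ m < ((1 / 2) * (1 / 3) ^ q * #P) ^ m :=
      pow_lt_pow_left₀ h11 (by positivity) (by omega)
    have h13 : ((1 / 2 : ℝ) * (1 / 3) ^ q * #P) ^ m
        ≤ (1 / 2) * ((1 : ℝ) / 3) ^ (q * m) * (#P : ℝ) ^ m := by
      rw [mul_pow, mul_pow, ← pow_mul]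
      have : (1 / 2 : ℝ) ^ m ≤ 1 / 2 := by
        calc (1 / 2 : ℝ) ^ m ≤ (1 / 2) ^ 1 :=
              pow_le_pow_of_le_one (by norm_num) (by norm_num) hm
          _ = _ := by norm_num
      gcongr
    linarith
  · have : 0 ≤ (1 / 2) * ((1 : ℝ) / 3) ^ (q * m) * (#P : ℝ) ^ m := by positivity
    change K * Bad z ≤ _
    linarith
end GBR

namespace GBR
open Classical Finset

/-- Common out-neighbours of the tuple `S` in `D`. -/
noncomputable def co {W : Type*} (R : W → W → Prop) {t : ℕ} (S : Fin t → W) (D : Finset W) :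
    Finset W := {v ∈ D | ∀ i, R (S i) v}

/-- Common in-neighbours in `D` of the partial tuple `ψ`. -/
noncomputable def cin {W : Type*} (R : W → W → Prop) (D : Finset W) {Δ : ℕ}
    (ψ : Fin Δ → Option W) : Finset W := {y ∈ D | ∀ i a, ψ i = some a → R y a}

/-- The reference weight. -/
noncomputable def mu {W : Type*} (P Y : Finset W) : Option W → ℝ
  | none => 1
  | some a => (if a ∈ P then 1 / (#P : ℝ) else 0) + (if a ∈ Y then 1 / (#Y : ℝ) else 0)

lemma mu_nonneg {W : Type*} (P Y : Finset W) (a : Option W) : 0 ≤ mu P Y a := by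
  rcases a with _ | a
  · simp [mu]
  · simp only [mu]
    positivity

/-- Total weight of the bad partial tuples contained in `A`. -/
noncomputable def badW {W : Type*} (R : W → W → Prop) (P Y : Finset W) (Δ : ℕ) (x : ℝ)
    (D A : Finset W) : ℝ :=
  ∑ ψ ∈ Fintype.piFinset (fun _ : Fin Δ => insertNone (P ∪ Y)) with
    ((#(cin R D ψ) : ℝ) < x * #D ∧ ∀ i a, ψ i = some a → a ∈ A), ∏ i, mu P Y (ψ i)

/-- Number of tuples with few common out-neighbours. -/
noncomputable def few {W : Type*} (R : W → W → Prop) (P' Y' : Finset W) (θ : ℝ) (t : ℕ) : ℝ :=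
  (#{S ∈ Fintype.piFinset (fun _ : Fin t => P') | (#(co R S Y') : ℝ) < θ} : ℝ)

lemma badW_mono {W : Type*} (R : W → W → Prop) (P Y : Finset W) (Δ : ℕ) (x : ℝ)
    (D A A' : Finset W) (h : A ⊆ A') : badW R P Y Δ x D A ≤ badW R P Y Δ x D A' := by
  unfold badW
  refine Finset.sum_le_sum_of_subset_of_nonneg ?_ ?_
  · intro ψ
    simp only [mem_filter]
    rintro ⟨h1, h2, h3⟩
    exact ⟨h1, h2, fun i a hia => h (h3 i a hia)⟩
  · intro ψ _ _
    exact Finset.prod_nonneg fun i _ => mu_nonneg _ _ _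

lemma badW_nonneg {W : Type*} (R : W → W → Prop) (P Y : Finset W) (Δ : ℕ) (x : ℝ)
    (D A : Finset W) : 0 ≤ badW R P Y Δ x D A :=
  Finset.sum_nonneg fun _ _ => Finset.prod_nonneg fun _ _ => mu_nonneg _ _ _

lemma few_nonneg {W : Type*} (R : W → W → Prop) (P' Y' : Finset W) (θ : ℝ) (t : ℕ) :
    0 ≤ few R P' Y' θ t := by unfold few; positivity

lemma sum_mu_le {W : Type*} (P Y : Finset W) :
    ∑ a ∈ insertNone (P ∪ Y), mu P Y a ≤ 3 := by
  rw [Finset.sum_insertNone]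
  simp only [mu]
  rw [Finset.sum_add_distrib, ← Finset.sum_filter, ← Finset.sum_filter, Finset.sum_const,
    Finset.sum_const, nsmul_eq_mul, nsmul_eq_mul]
  have h : ∀ (s t : Finset W), (#{a ∈ s | a ∈ t} : ℝ) * (1 / #t) ≤ 1 := by
    intro s t
    rw [mul_one_div]
    refine div_le_one_of_le₀ ?_ (by positivity)
    have : #{a ∈ s | a ∈ t} ≤ #t := card_le_card fun a ha => (mem_filter.1 ha).2
    exact_mod_cast this
  have h1 := h (P ∪ Y) P
  have h2 := h (P ∪ Y) Y
  linarith

lemma sum_badW_le {W : Type*} (R : W → W → Prop) (P Y D U : Finset W) (Δ p : ℕ) (x : ℝ)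
    (hx : 0 ≤ x) :
    ∑ S ∈ Fintype.piFinset (fun _ : Fin p => D), badW R P Y Δ x D (co R S U)
      ≤ (x * #D) ^ p * 3 ^ Δ := by
  set Ψ := Fintype.piFinset (fun _ : Fin Δ => insertNone (P ∪ Y)) with hΨ
  have hd := dcount ({ψ ∈ Ψ | (#(cin R D ψ) : ℝ) < x * #D}) D p
    (fun ψ s => ∀ i a, ψ i = some a → R s a) (fun ψ => ∏ i, mu P Y (ψ i))
  have hnn : ∀ ψ : Fin Δ → Option W, 0 ≤ ∏ i, mu P Y (ψ i) :=
    fun ψ => Finset.prod_nonneg fun i _ => mu_nonneg _ _ _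
  calc _ ≤ _ := by
        refine Finset.sum_le_sum fun S _ => ?_
        unfold badW
        refine Finset.sum_le_sum_of_subset_of_nonneg ?_ (fun ψ _ _ => hnn ψ)
        intro ψ
        simp only [mem_filter]
        rintro ⟨h1, h2, h3⟩
        refine ⟨⟨h1, h2⟩, fun j i a hia => ?_⟩
        exact (mem_filter.1 (h3 i a hia)).2 j
    _ = _ := hd
    _ ≤ ∑ ψ ∈ {ψ ∈ Ψ | (#(cin R D ψ) : ℝ) < x * #D}, (x * #D) ^ p * ∏ i, mu P Y (ψ i) := by
        refine Finset.sum_le_sum fun ψ hψ => ?_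
        rw [mul_comm]
        refine mul_le_mul_of_nonneg_right ?_ (hnn _)
        refine pow_le_pow_left₀ (by positivity) ?_ _
        refine le_trans (le_of_eq ?_) (mem_filter.1 hψ).2.le
        unfold cin
        congr!
    _ ≤ ∑ ψ ∈ Ψ, (x * #D) ^ p * ∏ i, mu P Y (ψ i) := by
        refine Finset.sum_le_sum_of_subset_of_nonneg (filter_subset _ _) fun ψ _ _ => ?_
        exact mul_nonneg (by positivity) (hnn _)
    _ = (x * #D) ^ p * (∑ a ∈ insertNone (P ∪ Y), mu P Y a) ^ Δ := by
        rw [← Finset.mul_sum, hΨ, ← Finset.prod_univ_sum]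
        simp
    _ ≤ _ := by
        refine mul_le_mul_of_nonneg_left ?_ (by positivity)
        exact pow_le_pow_left₀ (Finset.sum_nonneg fun _ _ => mu_nonneg _ _ _) (sum_mu_le P Y) _

lemma few_split {W : Type*} (R : W → W → Prop) (P' Y' : Finset W) (θ : ℝ) (p t : ℕ) :
    ∑ S ∈ Fintype.piFinset (fun _ : Fin p => P'), few R P' (co R S Y') θ t
      ≤ few R P' Y' θ (p + t) := by
  unfold few
  rw [← Nat.cast_sum, ← Finset.card_sigma]
  norm_cast
  refine Finset.card_le_card_of_injOn (fun a => Fin.append a.1 a.2) ?_ ?_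
  · rintro ⟨S, S'⟩ h
    simp only [coe_sigma, Set.mem_sigma_iff, mem_coe, mem_filter, Fintype.mem_piFinset] at h ⊢
    obtain ⟨h1, h2, h3⟩ := h
    refine ⟨?_, ?_⟩
    · intro i
      refine Fin.addCases (fun i => ?_) (fun i => ?_) i
      · rw [Fin.append_left]; exact h1 i
      · rw [Fin.append_right]; exact h2 i
    · convert h3 using 3
      ext v
      simp only [co, mem_filter]
      constructor
      · rintro ⟨h4, h5⟩
        refine ⟨⟨h4, fun i => ?_⟩, fun i => ?_⟩
        · have := h5 (Fin.castAdd t i); rwa [Fin.append_left] at this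
        · have := h5 (Fin.natAdd p i); rwa [Fin.append_right] at this
      · rintro ⟨⟨h4, h5⟩, h6⟩
        refine ⟨h4, fun i => ?_⟩
        refine Fin.addCases (fun i => ?_) (fun i => ?_) i
        · rw [Fin.append_left]; exact h5 i
        · rw [Fin.append_right]; exact h6 i
  · rintro ⟨S, S'⟩ _ ⟨U, U'⟩ _ h
    simp only at h
    have h1 : S = U := by
      funext i
      have := congrFun h (Fin.castAdd t i)
      simpa [Fin.append_left] using this
    have h2 : S' = U' := by
      funext i
      have := congrFun h (Fin.natAdd p i)
      simpa [Fin.append_right] using this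
    subst h1; subst h2; rfl

lemma stepB {W : Type*} (R : W → W → Prop) (D : Finset W) (hcard : 3 ≤ #D)
    (htot : ∀ x ∈ D, ∀ y ∈ D, x ≠ y → R x y ∨ R y x) (p : ℕ) (h : (Fin p → W) → ℝ)
    (hh : ∑ S ∈ Fintype.piFinset (fun _ : Fin p => D), h S
      ≤ 1 / 2 * (1 / 3) ^ p * (#D : ℝ) ^ p) :
    ∃ S ∈ Fintype.piFinset (fun _ : Fin p => D),
      (1 / 2 * (1 / 3) ^ p + h S) * #D ≤ (#(co R S D) : ℝ) := by
  have hc : (3 : ℝ) ≤ #D := by exact_mod_cast hcard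
  have e1 : ∑ x ∈ D, (#{s ∈ D | R s x} : ℝ) = ∑ x ∈ D, (#{s ∈ D | R x s} : ℝ) := by
    have : ∀ x, ((#{s ∈ D | R s x} : ℕ) : ℝ) = ∑ s ∈ D, if R s x then 1 else 0 := by
      intro x; rw [Finset.card_filter]; push_cast; rfl
    have h' : ∀ x, ((#{s ∈ D | R x s} : ℕ) : ℝ) = ∑ s ∈ D, if R x s then 1 else 0 := by
      intro x; rw [Finset.card_filter]; push_cast; rfl
    simp_rw [this, h']
    rw [Finset.sum_comm]
  have e2 : (#D : ℝ) * (#D - 1) ≤ ∑ x ∈ D, ((#{s ∈ D | R s x} : ℝ) + #{s ∈ D | R x s}) := by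
    rw [← nsmul_eq_mul, ← Finset.sum_const]
    refine Finset.sum_le_sum fun x hx => ?_
    have : #(D.erase x) ≤ #{s ∈ D | R s x} + #{s ∈ D | R x s} := by
      refine le_trans (card_le_card ?_) (card_union_le _ _)
      intro y hy
      rw [mem_erase] at hy
      simp only [mem_union, mem_filter]
      rcases htot y hy.2 x hx hy.1 with h | h
      · exact Or.inl ⟨hy.2, h⟩
      · exact Or.inr ⟨hy.2, h⟩
    rw [card_erase_of_mem hx] at this
    have h4 : #D ≤ #{s ∈ D | R s x} + #{s ∈ D | R x s} + 1 := by omega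
    have h5 : (#D : ℝ) ≤ #{s ∈ D | R s x} + #{s ∈ D | R x s} + 1 := by exact_mod_cast h4
    linarith
  rw [Finset.sum_add_distrib, ← e1] at e2
  have e3 : (#D : ℝ) / 3 * #D ≤ ∑ x ∈ D, (#{s ∈ D | R s x} : ℝ) := by nlinarith
  have e4 := power_mean D (fun x => (#{s ∈ D | R s x} : ℝ)) (fun _ _ => by positivity) _
    (by positivity) e3 p
  have e5 : ∑ S ∈ Fintype.piFinset (fun _ : Fin p => D), (#(co R S D) : ℝ)
      = ∑ x ∈ D, (#{s ∈ D | R s x} : ℝ) ^ p := by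
    have := dcount D D p (fun x s => R s x) (fun _ => (1 : ℝ))
    simp only [Finset.sum_const, nsmul_eq_mul, mul_one, one_mul] at this
    exact this
  have hne : (Fintype.piFinset (fun _ : Fin p => D)).Nonempty := by
    rw [Fintype.piFinset_nonempty]
    exact fun _ => card_pos.1 (by omega)
  refine Finset.exists_le_of_sum_le hne ?_
  rw [e5, ← Finset.sum_mul, Finset.sum_add_distrib, Finset.sum_const, nsmul_eq_mul,
    Fintype.card_piFinset_const]
  refine le_trans ?_ e4
  rw [show ((#D : ℝ) / 3) ^ p = (#D : ℝ) ^ p * (1 / 3) ^ p by rw [← mul_pow]; ring]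
  push_cast
  calc _ ≤ ((#D : ℝ) ^ p * (1 / 2 * (1 / 3) ^ p) + 1 / 2 * (1 / 3) ^ p * (#D : ℝ) ^ p) * #D := by
        gcongr
    _ = _ := by ring

lemma chain {W : Type*} (R : W → W → Prop) (P Y P' : Finset W) (Δ p : ℕ)
    (x θ lam Γ δ σ : ℝ) (hx : 0 ≤ x) (hlam : 0 < lam) (hΓ : 0 < Γ) (hδ : 0 < δ)
    (hσ0 : 0 < σ) (hσ : σ ≤ 1 / 2 * (1 / 3) ^ p)
    (hxl : x ^ p * 3 ^ Δ ≤ 1 / 4 * (1 / 3) ^ p * lam)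
    (hΓδ : 1 ≤ 1 / 4 * (1 / 3) ^ p * (Γ * δ ^ p))
    (hbig : 3 ≤ δ * #P')
    (htot : ∀ x ∈ P', ∀ y ∈ P', x ≠ y → R x y ∨ R y x) (t : ℕ) :
    ∀ (D Y' : Finset W), D ⊆ P' → δ * #P' ≤ σ ^ t * #D →
      few R P' Y' θ (p * t) * Γ ^ t < (#P' : ℝ) ^ (p * t) →
      ∃ (E : ℕ → Finset W) (Q : Finset W), Q ⊆ Y' ∧ E 0 = D ∧ (∀ j < t, E (j + 1) ⊆ E j) ∧
        (∀ j ≤ t, δ * #P' ≤ #(E j)) ∧ θ ≤ #Q ∧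
        ∀ j < t, badW R P Y Δ x (E j) (E (j + 1) ∪ Q) ≤ lam := by
  have hσ1 : σ ≤ 1 := by
    refine hσ.trans ?_
    have : ((1 : ℝ) / 3) ^ p ≤ 1 := pow_le_one₀ (by norm_num) (by norm_num)
    linarith
  induction t with
  | zero =>
    intro D Y' hD h1 h2
    refine ⟨fun _ => D, Y', subset_rfl, rfl, by simp, ?_, ?_, by simp⟩
    · intro j _; simpa using h1
    · by_contra hcon
      push Not at hcon
      have : few R P' Y' θ (p * 0) = 1 := by
        have : p * 0 = 0 := rfl
        rw [this]
        unfold few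
        rw [Finset.filter_true_of_mem]
        · simp
        · intro S _
          simpa [co] using hcon
      rw [this] at h2
      simp at h2
  | succ t ih =>
    intro D Y' hD h1 h2
    have hP'pos : (0 : ℝ) < #P' := by
      by_contra hcon
      have : (#P' : ℝ) ≤ 0 := not_lt.1 hcon
      nlinarith
    have hDδ : δ * #P' ≤ #D := by
      refine h1.trans ?_
      have : σ ^ (t + 1) ≤ 1 := pow_le_one₀ hσ0.le hσ1
      calc _ ≤ 1 * (#D : ℝ) := mul_le_mul_of_nonneg_right this (by positivity)
        _ = _ := one_mul _
    have hD3 : 3 ≤ #D := by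
      have : (3 : ℝ) ≤ #D := hbig.trans hDδ
      exact_mod_cast this
    set h : (Fin p → W) → ℝ := fun S => badW R P Y Δ x D (co R S (D ∪ Y')) / lam
      + few R P' (co R S Y') θ (p * t) * (Γ ^ t / (#P' : ℝ) ^ (p * t)) with hh
    have hsum : ∑ S ∈ Fintype.piFinset (fun _ : Fin p => D), h S
        ≤ 1 / 2 * (1 / 3) ^ p * (#D : ℝ) ^ p := by
      simp only [hh]
      rw [Finset.sum_add_distrib, ← Finset.sum_div, ← Finset.sum_mul]
      have s1 : (∑ S ∈ Fintype.piFinset (fun _ : Fin p => D),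
          badW R P Y Δ x D (co R S (D ∪ Y'))) / lam ≤ 1 / 4 * (1 / 3) ^ p * (#D : ℝ) ^ p := by
        rw [div_le_iff₀ hlam]
        refine (sum_badW_le R P Y D (D ∪ Y') Δ p x hx).trans ?_
        calc (x * #D) ^ p * 3 ^ Δ = (x ^ p * 3 ^ Δ) * (#D : ℝ) ^ p := by rw [mul_pow]; ring
          _ ≤ (1 / 4 * (1 / 3) ^ p * lam) * (#D : ℝ) ^ p :=
            mul_le_mul_of_nonneg_right hxl (by positivity)
          _ = _ := by ring
      have s2 : ∑ S ∈ Fintype.piFinset (fun _ : Fin p => D), few R P' (co R S Y') θ (p * t)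
          ≤ few R P' Y' θ (p * (t + 1)) := by
        rw [show p * (t + 1) = p + p * t by ring]
        refine le_trans ?_ (few_split R P' Y' θ p (p * t))
        refine Finset.sum_le_sum_of_subset_of_nonneg ?_ (fun _ _ _ => few_nonneg _ _ _ _ _)
        exact Fintype.piFinset_subset _ _ (fun _ => hD)
      have s3 : few R P' Y' θ (p * (t + 1)) * (Γ ^ t / (#P' : ℝ) ^ (p * t))
          ≤ (#P' : ℝ) ^ p / Γ := by
        rw [le_div_iff₀ hΓ, mul_div_assoc', div_mul_eq_mul_div, div_le_iff₀ (by positivity)]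
        calc few R P' Y' θ (p * (t + 1)) * Γ ^ t * Γ
            = few R P' Y' θ (p * (t + 1)) * Γ ^ (t + 1) := by ring
          _ ≤ _ := h2.le
          _ = _ := by rw [← pow_add]; congr 1; ring
      have s4 : (#P' : ℝ) ^ p / Γ ≤ 1 / 4 * (1 / 3) ^ p * (#D : ℝ) ^ p := by
        rw [div_le_iff₀ hΓ]
        calc (#P' : ℝ) ^ p = 1 * (#P' : ℝ) ^ p := by ring
          _ ≤ (1 / 4 * (1 / 3) ^ p * (Γ * δ ^ p)) * (#P' : ℝ) ^ p :=
            mul_le_mul_of_nonneg_right hΓδ (by positivity)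
          _ = 1 / 4 * (1 / 3) ^ p * (δ * #P') ^ p * Γ := by rw [mul_pow]; ring
          _ ≤ _ := by gcongr
      have s5 : (∑ S ∈ Fintype.piFinset (fun _ : Fin p => D), few R P' (co R S Y') θ (p * t))
          * (Γ ^ t / (#P' : ℝ) ^ (p * t))
          ≤ few R P' Y' θ (p * (t + 1)) * (Γ ^ t / (#P' : ℝ) ^ (p * t)) :=
        mul_le_mul_of_nonneg_right s2 (by positivity)
      linarith
    obtain ⟨S, hS, hSle⟩ := stepB R D hD3
      (fun a ha b hb => htot a (hD ha) b (hD hb)) p h hsum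
    have hDpos : (0 : ℝ) < #D := by
      have : (3 : ℝ) ≤ #D := by exact_mod_cast hD3
      linarith
    have hnb : 0 ≤ badW R P Y Δ x D (co R S (D ∪ Y')) / lam :=
      div_nonneg (badW_nonneg _ _ _ _ _ _ _) hlam.le
    have hnf : 0 ≤ few R P' (co R S Y') θ (p * t) * (Γ ^ t / (#P' : ℝ) ^ (p * t)) :=
      mul_nonneg (few_nonneg _ _ _ _ _) (by positivity)
    have hlt : h S < 1 := by
      have c1 : (#(co R S D) : ℝ) ≤ #D := by exact_mod_cast card_filter_le _ _
      have c2 : (1 / 2 * (1 / 3) ^ p + h S) * #D ≤ 1 * (#D : ℝ) := by linarith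
      have c3 := le_of_mul_le_mul_right c2 hDpos
      have : (0 : ℝ) < 1 / 2 * (1 / 3) ^ p := by positivity
      linarith
    have hcoD : co R S D ⊆ D := filter_subset _ _
    obtain ⟨E, Q, hQ, hE0, hE1, hE2, hθ, hE3⟩ := ih (co R S D) (co R S Y')
      (hcoD.trans hD) (by
        refine h1.trans ?_
        rw [pow_succ, mul_assoc]
        refine mul_le_mul_of_nonneg_left ?_ (by positivity)
        refine le_trans ?_ hSle
        refine mul_le_mul_of_nonneg_right ?_ hDpos.le
        have : 0 ≤ h S := by simp only [hh]; linarith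
        linarith) (by
        have : few R P' (co R S Y') θ (p * t) * (Γ ^ t / (#P' : ℝ) ^ (p * t)) < 1 := by
          have h' : h S = badW R P Y Δ x D (co R S (D ∪ Y')) / lam
            + few R P' (co R S Y') θ (p * t) * (Γ ^ t / (#P' : ℝ) ^ (p * t)) := rfl
          linarith
        rwa [mul_div_assoc', div_lt_one (by positivity)] at this)
    refine ⟨fun j => Nat.casesOn j D E, Q, hQ.trans (filter_subset _ _), rfl, ?_, ?_, hθ, ?_⟩
    · rintro (_ | j) hj
      · change E 0 ⊆ D
        rw [hE0]; exact hcoD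
      · exact hE1 j (by omega)
    · rintro (_ | j) hj
      · exact hDδ
      · exact hE2 j (by omega)
    · rintro (_ | j) hj
      · change badW R P Y Δ x D (E 0 ∪ Q) ≤ lam
        have : badW R P Y Δ x D (co R S (D ∪ Y')) / lam < 1 := by
          have h' : h S = badW R P Y Δ x D (co R S (D ∪ Y')) / lam
            + few R P' (co R S Y') θ (p * t) * (Γ ^ t / (#P' : ℝ) ^ (p * t)) := rfl
          linarith
        rw [div_lt_one hlam] at this
        refine le_trans (badW_mono R P Y Δ x D _ _ ?_) this.le
        rw [hE0]
        intro v hv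
        rcases mem_union.1 hv with hv | hv
        · have := mem_filter.1 hv
          exact mem_filter.2 ⟨mem_union_left _ this.1, this.2⟩
        · have := mem_filter.1 (hQ hv)
          exact mem_filter.2 ⟨mem_union_right _ this.1, this.2⟩
      · exact hE3 j (by omega)
end GBR

namespace GBR
open Classical Finset

lemma wcount {W : Type*} (R : W → W → Prop) (P Y : Finset W) (Δ : ℕ) (x : ℝ)
    (D A : Finset W) (lam : ℝ) (h : badW R P Y Δ x D A ≤ lam)
    {ι : Type*} [Fintype ι] (hι : Fintype.card ι ≤ Δ) (X : ι → Finset W) (ρ : ℝ) (hρ : 1 ≤ ρ)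
    (hX : ∀ c, X c ⊆ A ∧ ((X c ⊆ P ∧ (#P : ℝ) ≤ ρ * #(X c)) ∨ (X c ⊆ Y ∧ (#Y : ℝ) ≤ ρ * #(X c))))
    (hne : ∀ c, (X c).Nonempty) :
    (#{ψ ∈ Fintype.piFinset X | (#{y ∈ D | ∀ c, R y (ψ c)} : ℝ) < x * #D} : ℝ)
      ≤ lam * ρ ^ Δ * ∏ c, (#(X c) : ℝ) := by
  have hlam : 0 ≤ lam := (badW_nonneg _ _ _ _ _ _ _).trans h
  obtain ⟨e⟩ : Nonempty (ι ↪ Fin Δ) := by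
    apply Function.Embedding.nonempty_of_card_le
    simpa using hι
  set F : (ι → W) → (Fin Δ → Option W) :=
    fun ψ => Function.extend e (fun c => some (ψ c)) (fun _ => none) with hF
  have hFe : ∀ ψ c, F ψ (e c) = some (ψ c) := fun ψ c => e.injective.extend_apply _ _ _
  have hFn : ∀ ψ i, i ∉ Set.range e → F ψ i = none := fun ψ i hi =>
    Function.extend_apply' _ _ _ (by simpa using hi)
  have hFs : ∀ ψ i a, F ψ i = some a → ∃ c, e c = i ∧ ψ c = a := by
    intro ψ i a hia
    by_cases hi : i ∈ Set.range e
    · obtain ⟨c, rfl⟩ := hi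
      rw [hFe] at hia
      exact ⟨c, rfl, Option.some_injective _ hia⟩
    · rw [hFn ψ i hi] at hia
      cases hia
  have hFinj : Function.Injective F := by
    intro ψ ψ' hh
    funext c
    have := congrFun hh (e c)
    rw [hFe, hFe] at this
    exact Option.some_injective _ this
  set B : Finset (ι → W) :=
    {ψ ∈ Fintype.piFinset X | (#{y ∈ D | ∀ c, R y (ψ c)} : ℝ) < x * #D} with hB
  have hXpos : ∀ c, (0 : ℝ) < #(X c) := fun c => by exact_mod_cast (hne c).card_pos
  have hw : ∀ ψ ∈ B, ∏ c, (ρ * #(X c) : ℝ)⁻¹ ≤ ∏ i, mu P Y (F ψ i) := by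
    intro ψ hψ
    have hmem := Fintype.mem_piFinset.1 (mem_filter.1 hψ).1
    have h1 : ∏ c, mu P Y (some (ψ c)) = ∏ i, mu P Y (F ψ i) := by
      refine Fintype.prod_of_injective e e.injective _ _ ?_ ?_
      · intro i hi
        rw [hFn ψ i hi]; rfl
      · intro c
        rw [hFe]
    rw [← h1]
    refine Finset.prod_le_prod (fun c _ => ?_) (fun c _ => ?_)
    · have := hXpos c
      positivity
    · simp only [mu]
      have hc := hXpos c
      have key : ∀ Z : Finset W, X c ⊆ Z → (#Z : ℝ) ≤ ρ * #(X c) →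
          (ρ * #(X c) : ℝ)⁻¹ ≤ (if ψ c ∈ Z then 1 / (#Z : ℝ) else 0) := by
        intro Z h1 h2
        rw [if_pos (h1 (hmem c)), one_div]
        have : (0 : ℝ) < #Z := by exact_mod_cast card_pos.2 ⟨_, h1 (hmem c)⟩
        exact inv_anti₀ this h2
      have n1 : 0 ≤ (if ψ c ∈ P then 1 / (#P : ℝ) else 0) := by positivity
      have n2 : 0 ≤ (if ψ c ∈ Y then 1 / (#Y : ℝ) else 0) := by positivity
      rcases (hX c).2 with ⟨h1, h2⟩ | ⟨h1, h2⟩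
      · have := key P h1 h2
        linarith
      · have := key Y h1 h2
        linarith
  have h1 : (#B : ℝ) * ∏ c, (ρ * #(X c) : ℝ)⁻¹ ≤ lam := by
    calc (#B : ℝ) * ∏ c, (ρ * #(X c) : ℝ)⁻¹ = ∑ ψ ∈ B, ∏ c, (ρ * #(X c) : ℝ)⁻¹ := by
          rw [Finset.sum_const, nsmul_eq_mul]
      _ ≤ ∑ ψ ∈ B, ∏ i, mu P Y (F ψ i) := Finset.sum_le_sum hw
      _ = ∑ ψ ∈ B.image F, ∏ i, mu P Y (ψ i) := by
          rw [Finset.sum_image fun a _ b _ hab => hFinj hab]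
      _ ≤ badW R P Y Δ x D A := by
          unfold badW
          refine Finset.sum_le_sum_of_subset_of_nonneg ?_
            (fun ψ _ _ => Finset.prod_nonneg fun i _ => mu_nonneg _ _ _)
          intro ψ' hψ'
          obtain ⟨ψ, hψ, rfl⟩ := mem_image.1 hψ'
          obtain ⟨h2, h3⟩ := mem_filter.1 hψ
          have hmem := Fintype.mem_piFinset.1 h2
          refine mem_filter.2 ⟨?_, ?_, ?_⟩
          · rw [Fintype.mem_piFinset]
            intro i
            by_cases hi : i ∈ Set.range e
            · obtain ⟨c, rfl⟩ := hi
              rw [hFe, some_mem_insertNone, mem_union]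
              rcases (hX c).2 with ⟨h4, _⟩ | ⟨h4, _⟩
              · exact Or.inl (h4 (hmem c))
              · exact Or.inr (h4 (hmem c))
            · rw [hFn ψ i hi]; exact none_mem_insertNone
          · convert h3 using 3
            unfold cin
            ext y
            simp only [mem_filter]
            refine and_congr_right fun _ => ⟨fun h5 c => h5 (e c) _ (hFe ψ c), ?_⟩
            intro h5 i a hia
            obtain ⟨c, _, rfl⟩ := hFs ψ i a hia
            exact h5 c
          · intro i a hia
            obtain ⟨c, _, rfl⟩ := hFs ψ i a hia
            exact (hX c).1 (hmem c)
      _ ≤ lam := h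
  rw [Finset.prod_inv_distrib, ← div_eq_mul_inv, div_le_iff₀
    (Finset.prod_pos fun c _ => mul_pos (by linarith) (hXpos c)), Finset.prod_mul_distrib,
    Finset.prod_const, Finset.card_univ, ← mul_assoc] at h1
  refine h1.trans ?_
  refine mul_le_mul_of_nonneg_right ?_ (Finset.prod_nonneg fun c _ => (hXpos c).le)
  exact mul_le_mul_of_nonneg_left (pow_le_pow_right₀ hρ hι) hlam

lemma third_mul (n : ℕ) : ((1 : ℝ) / 3) ^ n * 3 ^ n = 1 := by
  rw [← mul_pow]; norm_num

lemma block {W : Type*} (R : W → W → Prop) (P Y : Finset W) (Δ w : ℕ) (hΔ : 1 ≤ Δ) (hw : 1 ≤ w)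
    (hY : Y.Nonempty)
    (hd : (#P * #Y : ℝ) ≤ 3 * ∑ x ∈ P, (#{v ∈ Y | R x v} : ℝ))
    (hP : (3 : ℝ) ^ (7 * (Δ * w)) ≤ #P)
    (htot : ∀ x ∈ P, ∀ y ∈ P, x ≠ y → R x y ∨ R y x) :
    ∃ (E : ℕ → Finset W) (Q : Finset W), Q ⊆ Y ∧ (∀ j ≤ w, E j ⊆ P) ∧
      (∀ j < w, E (j + 1) ⊆ E j) ∧
      (∀ j ≤ w, (#P : ℝ) ≤ 3 ^ (6 * (Δ * w)) * #(E j)) ∧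
      (#Y : ℝ) ≤ 3 ^ (8 * (Δ * w)) * #Q ∧
      ∀ j < w, badW R P Y Δ ((1 / 3) ^ (20 * (Δ * w))) (E j) (E (j + 1) ∪ Q)
        ≤ 4 * 3 ^ (2 * Δ) * ((1 / 3) ^ (20 * (Δ * w))) ^ (2 * Δ) * 3 ^ Δ := by
  obtain ⟨e, he⟩ : ∃ e, e = Δ * w := ⟨_, rfl⟩
  have he1 : 1 ≤ e := by rw [he]; exact Nat.mul_pos hΔ hw
  have hwe : w ≤ e := by rw [he]; exact Nat.le_mul_of_pos_left _ hΔ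
  rw [← he] at hP ⊢
  set p := 2 * Δ with hp
  have hpw : p * w = 2 * e := by rw [hp, he]; ring
  set Γ : ℝ := 4 * 3 ^ p * 3 ^ (3 * e * p) with hΓ
  have hΓpos : 0 < Γ := by positivity
  have hΓw : 4 * Γ ^ w ≤ 3 ^ (12 * e * e) := by
    have h1 : Γ ^ w = 4 ^ w * 3 ^ (2 * e + 6 * e * e) := by
      rw [hΓ, mul_pow, mul_pow, mul_assoc, ← pow_mul, ← pow_mul, ← pow_add]
      congr 2
      rw [hpw, mul_assoc (3 * e), hpw]; ring
    have h2 : (4 : ℝ) * 4 ^ w ≤ 3 ^ (3 * e) := by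
      calc (4 : ℝ) * 4 ^ w ≤ 4 ^ e * 4 ^ e := by
            refine mul_le_mul ?_ (pow_le_pow_right₀ (by norm_num) hwe) (by positivity)
              (by positivity)
            exact le_self_pow₀ (by norm_num) (by omega)
        _ = 16 ^ e := by rw [← mul_pow]; norm_num
        _ ≤ 27 ^ e := pow_le_pow_left₀ (by norm_num) (by norm_num) _
        _ = _ := by rw [pow_mul]; norm_num
    calc 4 * Γ ^ w = (4 * 4 ^ w) * 3 ^ (2 * e + 6 * e * e) := by rw [h1]; ring
      _ ≤ 3 ^ (3 * e) * 3 ^ (2 * e + 6 * e * e) :=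
        mul_le_mul_of_nonneg_right h2 (by positivity)
      _ = 3 ^ (3 * e + (2 * e + 6 * e * e)) := by rw [← pow_add]
      _ ≤ _ := pow_le_pow_right₀ (by norm_num) (by nlinarith)
  obtain ⟨P', hP'P, hP'1, hP'2⟩ := stepA R P Y (2 * e) (p * w) (by omega) hY
    ((1 / 3) ^ (8 * e)) (2 * Γ ^ w) (by positivity) (by positivity) hd (by
      have h1 : 2 * Γ ^ w * ((1 / 3) ^ (8 * e)) ^ (2 * e) * (2 * 3 ^ (2 * e * (p * w)))
          = (4 * Γ ^ w) * ((1 / 3) ^ (16 * e * e) * 3 ^ (4 * e * e)) := by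
        rw [← pow_mul, show 8 * e * (2 * e) = 16 * e * e by ring, hpw,
          show 2 * e * (2 * e) = 4 * e * e by ring]
        ring
      rw [h1]
      calc _ ≤ 3 ^ (12 * e * e) * (((1 : ℝ) / 3) ^ (16 * e * e) * 3 ^ (4 * e * e)) :=
            mul_le_mul_of_nonneg_right hΓw (by positivity)
        _ = ((1 : ℝ) / 3) ^ (16 * e * e) * 3 ^ (16 * e * e) := by
            rw [show 16 * e * e = 12 * e * e + 4 * e * e by ring, pow_add, pow_add]; ring
        _ ≤ 1 := (third_mul _).le)
  have hPP' : (#P : ℝ) ≤ 3 ^ (3 * e) * #P' := by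
    refine hP'1.trans (mul_le_mul_of_nonneg_right ?_ (by positivity))
    calc (2 : ℝ) * 3 ^ (2 * e) ≤ 3 ^ e * 3 ^ (2 * e) := by
          refine mul_le_mul_of_nonneg_right ?_ (by positivity)
          calc (2 : ℝ) ≤ 3 := by norm_num
            _ ≤ 3 ^ e := le_self_pow₀ (by norm_num) (by omega)
      _ = _ := by rw [← pow_add]; congr 1; ring
  have hP'big : (3 : ℝ) ^ (4 * e) ≤ #P' := by
    have : (3 : ℝ) ^ (3 * e) * 3 ^ (4 * e) ≤ 3 ^ (3 * e) * #P' := by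
      rw [← pow_add, show 3 * e + 4 * e = 7 * e by ring]
      exact hP.trans hPP'
    exact le_of_mul_le_mul_left this (by positivity)
  have hP'pos : (0 : ℝ) < #P' := lt_of_lt_of_le (by positivity) hP'big
  obtain ⟨E, Q, hQ, hE0, hE1, hE2, hθ, hE3⟩ := chain R P Y P' Δ p ((1 / 3) ^ (20 * e))
    ((1 / 3) ^ (8 * e) * #Y) (4 * 3 ^ p * ((1 / 3) ^ (20 * e)) ^ p * 3 ^ Δ) Γ
    ((1 / 3) ^ (3 * e)) ((1 / 3) ^ (3 * Δ)) (by positivity) (by positivity) hΓpos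
    (by positivity) (by positivity) (by
      rw [show 3 * Δ = Δ + p by omega, pow_add]
      refine mul_le_mul_of_nonneg_right ?_ (by positivity)
      calc ((1 : ℝ) / 3) ^ Δ ≤ (1 / 3) ^ 1 :=
            pow_le_pow_of_le_one (by norm_num) (by norm_num) hΔ
        _ ≤ _ := by norm_num) (by
      refine le_of_eq ?_
      have := third_mul p
      linear_combination (-(((1 : ℝ) / 3) ^ (20 * e)) ^ p * 3 ^ Δ) * this) (by
      refine le_of_eq ?_
      have h1 := third_mul p
      have h2 : (3 : ℝ) ^ (3 * e * p) * ((1 / 3) ^ (3 * e)) ^ p = 1 := by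
        rw [← pow_mul, mul_comm]; exact third_mul _
      calc (1 : ℝ) = ((1 / 3) ^ p * 3 ^ p) * (3 ^ (3 * e * p) * ((1 / 3) ^ (3 * e)) ^ p) := by
            rw [h1, h2]; norm_num
        _ = _ := by rw [hΓ]; ring) (by
      calc (3 : ℝ) ≤ 3 ^ e := le_self_pow₀ (by norm_num) (by omega)
        _ = (((1 : ℝ) / 3) ^ (3 * e) * 3 ^ (3 * e)) * 3 ^ e := by rw [third_mul, one_mul]
        _ = (1 / 3) ^ (3 * e) * 3 ^ (4 * e) := by
            rw [mul_assoc, ← pow_add, show 3 * e + e = 4 * e by ring]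
        _ ≤ _ := mul_le_mul_of_nonneg_left hP'big (by positivity))
    (fun a ha b hb => htot a (hP'P ha) b (hP'P hb)) w P' Y subset_rfl (by
      rw [← pow_mul, show 3 * Δ * w = 3 * e by rw [he]; ring]) (by
      have h1 : (2 * Γ ^ w) * few R P' Y ((1 / 3) ^ (8 * e) * #Y) (p * w)
          ≤ (#P' : ℝ) ^ (p * w) := by
        refine le_trans (le_of_eq ?_) hP'2
        unfold few co
        congr!
      have h2 := few_nonneg R P' Y ((1 / 3) ^ (8 * e) * #Y) (p * w)
      have h3 : (0 : ℝ) < (#P' : ℝ) ^ (p * w) := by positivity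
      have h4 : 0 ≤ few R P' Y ((1 / 3) ^ (8 * e) * #Y) (p * w) * Γ ^ w := by positivity
      by_contra hcon
      push Not at hcon
      nlinarith)
  have hsub : ∀ j ≤ w, E j ⊆ P' := by
    intro j
    induction j with
    | zero => intro _; rw [hE0]
    | succ j ih => intro hj; exact (hE1 j (by omega)).trans (ih (by omega))
  refine ⟨E, Q, hQ, fun j hj => (hsub j hj).trans hP'P, hE1, ?_, ?_, hE3⟩
  · intro j hj
    have h1 := hE2 j hj
    have h2 : (#P' : ℝ) ≤ 3 ^ (3 * e) * #(E j) := by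
      calc (#P' : ℝ) = (((1 : ℝ) / 3) ^ (3 * e) * 3 ^ (3 * e)) * #P' := by rw [third_mul, one_mul]
        _ = 3 ^ (3 * e) * ((1 / 3) ^ (3 * e) * #P') := by ring
        _ ≤ _ := mul_le_mul_of_nonneg_left h1 (by positivity)
    calc (#P : ℝ) ≤ 3 ^ (3 * e) * #P' := hPP'
      _ ≤ 3 ^ (3 * e) * (3 ^ (3 * e) * #(E j)) := mul_le_mul_of_nonneg_left h2 (by positivity)
      _ = _ := by rw [← mul_assoc, ← pow_add]; congr 2; ring
  · calc (#Y : ℝ) = (((1 : ℝ) / 3) ^ (8 * e) * 3 ^ (8 * e)) * #Y := by rw [third_mul, one_mul]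
      _ = 3 ^ (8 * e) * ((1 / 3) ^ (8 * e) * #Y) := by ring
      _ ≤ _ := mul_le_mul_of_nonneg_left hθ (by positivity)
end GBR

namespace GBR
open Classical Finset

lemma markov {α : Type*} (s : Finset α) (F : α → ℝ) (hF : ∀ x ∈ s, 0 ≤ F x) (b M : ℝ)
    (hb : 0 ≤ b) (hM : 0 < M) (h : ∑ x ∈ s, F x ≤ b) :
    (#{x ∈ s | M * b < F x * #s} : ℝ) ≤ #s / M := by
  rcases hb.eq_or_lt with rfl | hb
  · have : ({x ∈ s | M * 0 < F x * #s} : Finset α) = ∅ := by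
      rw [filter_eq_empty_iff]
      intro x hx
      have h1 : F x ≤ ∑ x ∈ s, F x := single_le_sum hF hx
      have h2 : F x = 0 := le_antisymm (h1.trans h) (hF x hx)
      simp [h2]
    rw [this]
    simp only [card_empty, Nat.cast_zero]
    positivity
  · rw [le_div_iff₀ hM]
    have h1 : (#{x ∈ s | M * b < F x * #s} : ℝ) * (M * b) ≤ b * #s := by
      calc _ = ∑ x ∈ s with M * b < F x * #s, M * b := by rw [sum_const, nsmul_eq_mul]
        _ ≤ ∑ x ∈ s with M * b < F x * #s, F x * #s :=
          sum_le_sum fun x hx => (mem_filter.1 hx).2.le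
        _ ≤ ∑ x ∈ s, F x * #s :=
          sum_le_sum_of_subset_of_nonneg (filter_subset _ _)
            fun x hx _ => mul_nonneg (hF x hx) (by positivity)
        _ = (∑ x ∈ s, F x) * #s := by rw [sum_mul]
        _ ≤ _ := mul_le_mul_of_nonneg_right h (by positivity)
    have h2 : ((#{x ∈ s | M * b < F x * #s} : ℝ) * M) * b ≤ #s * b := by linarith
    exact le_of_mul_le_mul_right h2 hb

lemma pi_split {ι W : Type*} [Fintype ι] (X : ι → Finset W) (c : ι) (r : (ι → W) → Prop) :
    ∑ x ∈ X c, (#{ψ ∈ Fintype.piFinset (Function.update X c {x}) | r ψ} : ℝ)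
      = (#{ψ ∈ Fintype.piFinset X | r ψ} : ℝ) := by
  rw [card_eq_sum_card_fiberwise (f := fun ψ => ψ c) (t := X c)]
  · push_cast
    refine sum_congr rfl fun x hx => ?_
    congr 2
    ext ψ
    simp only [mem_filter, Fintype.mem_piFinset]
    constructor
    · rintro ⟨h1, h2⟩
      have h3 : ψ c = x := by simpa using h1 c
      refine ⟨⟨fun i => ?_, h2⟩, h3⟩
      by_cases hi : i = c
      · subst hi; rw [h3]; exact hx
      · have := h1 i
        rwa [Function.update_of_ne hi] at this
    · rintro ⟨⟨h1, h2⟩, h3⟩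
      refine ⟨fun i => ?_, h2⟩
      by_cases hi : i = c
      · subst hi; simp [h3]
      · rw [Function.update_of_ne hi]; exact h1 i
  · intro ψ hψ
    have hψ : ψ ∈ {ψ ∈ Fintype.piFinset X | r ψ} := hψ
    exact Fintype.mem_piFinset.1 (mem_filter.1 hψ).1 c

/-- Current candidate sets. -/
noncomputable def cur {V W : Type*} (D : V → Finset W) (s : Finset V) (φ : V → W) (v : V) :
    Finset W := if v ∈ s then {φ v} else D v

set_option maxHeartbeats 2000000 in
lemma embed {V W : Type*} [Fintype V] (g : V → V → Prop) (f : V → ℕ)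
    (hf : ∀ u v, g u v → f u < f v) (R : W → W → Prop) (D : V → Finset W) (Δ : ℕ)
    (hout : ∀ u, Fintype.card {v // g u v} ≤ Δ) (hin : ∀ v, #{u | g u v} ≤ Δ)
    (hne : ∀ v, (D v).Nonempty) (θ : V → ℝ) (M β : ℝ) (hM : 1 ≤ M) (hβ : 0 ≤ β) (hβM : β * M ^ Δ < 1)
    (hbad : ∀ u, (#{ψ ∈ Fintype.piFinset (fun c : {v // g u v} => D c) |
      (#{y ∈ D u | ∀ c, R y (ψ c)} : ℝ) < θ u} : ℝ) ≤ β * ∏ c : {v // g u v}, (#(D c) : ℝ))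
    (hθ : ∀ u, Δ * (#(D u) / M) + #{v | ¬ Disjoint (D v) (D u)} < θ u) :
    ∃ φ : V → W, (∀ v, φ v ∈ D v) ∧ Function.Injective φ ∧ ∀ u v, g u v → R (φ u) (φ v) := by
  have hM0 : 0 < M := by linarith
  set bad : (u : V) → ({v // g u v} → W) → Prop :=
    fun u ψ => (#{y ∈ D u | ∀ c, R y (ψ c)} : ℝ) < θ u with hbaddef
  have main : ∀ k ≤ Fintype.card V, ∃ (s : Finset V) (φ : V → W), #s = k ∧
      (∀ v ∈ s, φ v ∈ D v) ∧ (∀ u ∈ s, ∀ v ∈ s, φ u = φ v → u = v) ∧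
      (∀ u ∈ s, ∀ v, g u v → v ∈ s ∧ R (φ u) (φ v)) ∧
      ∀ u ∉ s, (#{ψ ∈ Fintype.piFinset (fun c : {v // g u v} => cur D s φ c) | bad u ψ} : ℝ)
        ≤ β * M ^ (#{c : {v // g u v} | c.1 ∈ s}) *
          ∏ c : {v // g u v}, (#(cur D s φ c) : ℝ) := by
    intro k
    induction k with
    | zero =>
      intro _
      have : Nonempty (V → W) := ⟨fun u => (hne u).choose⟩
      obtain ⟨φ⟩ := this
      refine ⟨∅, φ, rfl, by simp, by simp, by simp, ?_⟩
      intro u _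
      have := hbad u
      have hc : ∀ c : V, cur D ∅ φ c = D c := fun c => if_neg (notMem_empty c)
      have he : #{c : {v // g u v} | c.1 ∈ (∅ : Finset V)} = 0 := by
        rw [card_eq_zero, filter_eq_empty_iff]
        exact fun c _ => notMem_empty _
      simp only [hc]
      rw [he, pow_zero, mul_one]
      exact this
    | succ k ih =>
      intro hk
      obtain ⟨s, φ, hs, hD, hinj, hadj, hinv⟩ := ih (by omega)
      have hex : (sᶜ : Finset V).Nonempty := by
        rw [← card_pos, card_compl]; omega
      obtain ⟨v₀, hv₀, hmax⟩ := exists_max_image (sᶜ : Finset V) f hex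
      rw [mem_compl] at hv₀
      have hch : ∀ v, g v₀ v → v ∈ s := by
        intro v hv
        by_contra hcon
        have := hmax v (mem_compl.2 hcon)
        have := hf _ _ hv
        omega
      -- candidates
      have hcand : θ v₀ ≤ (#{y ∈ D v₀ | ∀ c : {v // g v₀ v}, R y (φ c)} : ℝ) := by
        by_contra hcon
        push Not at hcon
        have h1 := hinv v₀ hv₀
        have h2 : ∀ c : {v // g v₀ v}, cur D s φ c = {φ c} := fun c => by
          simp [cur, hch c.1 c.2]
        simp only [h2] at h1
        have h3 : (1 : ℝ) ≤ (#{ψ ∈ Fintype.piFinset (fun c : {v // g v₀ v} => ({φ c} : Finset W)) |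
            bad v₀ ψ} : ℝ) := by
          have : 0 < #{ψ ∈ Fintype.piFinset (fun c : {v // g v₀ v} => ({φ c} : Finset W)) |
            bad v₀ ψ} := by
            rw [card_pos]
            refine ⟨fun c => φ c, mem_filter.2 ⟨by simp, hcon⟩⟩
          exact_mod_cast this
        simp only [card_singleton, Nat.cast_one, prod_const_one, mul_one] at h1
        have h4 : M ^ (#{c : {v // g v₀ v} | c.1 ∈ s}) ≤ M ^ Δ := by
          refine pow_le_pow_right₀ hM ?_
          exact (card_le_univ _).trans (hout v₀)
        have h5 := mul_le_mul_of_nonneg_left h4 hβ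
        linarith
      -- choices bad for a parent
      set F : V → W → ℝ := fun u x =>
        (#{ψ ∈ Fintype.piFinset (fun c : {v // g u v} =>
          cur D (insert v₀ s) (Function.update φ v₀ x) c) | bad u ψ} : ℝ) with hFdef
      set b : V → ℝ := fun u => β * M ^ (#{c : {v // g u v} | c.1 ∈ s}) *
          ∏ c : {v // g u v}, (#(cur D s φ c) : ℝ) with hbdef
      have hcurv₀ : cur D s φ v₀ = D v₀ := by simp [cur, hv₀]
      have hcur : ∀ x v, v ≠ v₀ → cur D (insert v₀ s) (Function.update φ v₀ x) v
          = cur D s φ v := by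
        intro x v hv
        simp [cur, mem_insert, hv]
      have hcur0 : ∀ x, cur D (insert v₀ s) (Function.update φ v₀ x) v₀ = {x} := by
        intro x
        simp [cur]
      have hupd : ∀ u (hu : g u v₀) x, (fun c : {v // g u v} =>
          cur D (insert v₀ s) (Function.update φ v₀ x) c)
          = Function.update (fun c : {v // g u v} => cur D s φ c) ⟨v₀, hu⟩ {x} := by
        intro u hu x
        funext c
        by_cases hc : c = ⟨v₀, hu⟩
        · subst hc
          rw [Function.update_self]; exact hcur0 x
        · rw [Function.update_of_ne hc]
          exact hcur x c fun h => hc (Subtype.ext h)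
      have hus : ∀ u, g u v₀ → u ∉ s := fun u hu hus => hv₀ (hadj u hus v₀ hu).1
      have hmk : ∀ u, g u v₀ → (#{x ∈ D v₀ | M * b u < F u x * #(D v₀)} : ℝ) ≤ #(D v₀) / M := by
        intro u hu
        refine markov (D v₀) (F u) (fun x _ => Nat.cast_nonneg _) (b u) M
          (mul_nonneg (mul_nonneg hβ (pow_nonneg hM0.le _)) (prod_nonneg fun _ _ => Nat.cast_nonneg _)) hM0 ?_
        refine le_trans (le_of_eq ?_) (hinv u (hus u hu))
        refine Eq.trans ?_ ((pi_split (fun c : {v // g u v} => cur D s φ c) ⟨v₀, hu⟩ (bad u)).trans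
          (by congr!))
        simp only [hcurv₀]
        refine sum_congr rfl fun x _ => ?_
        simp only [hFdef]
        rw [hupd u hu x]
        congr!
      -- choose x
      obtain ⟨x, hx1, hx2, hx3⟩ : ∃ x ∈ ({y ∈ D v₀ | ∀ c : {v // g v₀ v}, R y (φ c)} : Finset W),
          x ∉ s.image φ ∧ ∀ u, g u v₀ → ¬ (M * b u < F u x * #(D v₀)) := by
        by_contra hcon
        push Not at hcon
        have hsub : ({y ∈ D v₀ | ∀ c : {v // g v₀ v}, R y (φ c)} : Finset W) ⊆
            ({v | ¬ Disjoint (D v) (D v₀)} : Finset V).image φ ∪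
            ({u | g u v₀} : Finset V).biUnion
              fun u => {x ∈ D v₀ | M * b u < F u x * #(D v₀)} := by
          intro x hx
          have hxD := (mem_filter.1 hx).1
          rw [mem_union]
          by_cases hxs : x ∈ s.image φ
          · left
            obtain ⟨v, hv, rfl⟩ := mem_image.1 hxs
            refine mem_image_of_mem _ (mem_filter.2 ⟨mem_univ _, ?_⟩)
            rw [not_disjoint_iff]
            exact ⟨φ v, hD v hv, hxD⟩
          · right
            obtain ⟨u, hu, hux⟩ := hcon x hx hxs
            exact mem_biUnion.2 ⟨u, mem_filter.2 ⟨mem_univ _, hu⟩, mem_filter.2 ⟨hxD, hux⟩⟩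
        have h1 := (card_le_card hsub).trans ((card_union_le _ _).trans
          (add_le_add card_image_le card_biUnion_le))
        have h2 : (#{y ∈ D v₀ | ∀ c : {v // g v₀ v}, R y (φ c)} : ℝ) ≤
            #{v | ¬ Disjoint (D v) (D v₀)} +
            ∑ u ∈ ({u | g u v₀} : Finset V), (#{x ∈ D v₀ | M * b u < F u x * #(D v₀)} : ℝ) := by
          exact_mod_cast h1
        have h3 : ∑ u ∈ ({u | g u v₀} : Finset V),
            (#{x ∈ D v₀ | M * b u < F u x * #(D v₀)} : ℝ) ≤ Δ * (#(D v₀) / M) := by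
          calc _ ≤ ∑ u ∈ ({u | g u v₀} : Finset V), ((#(D v₀) : ℝ) / M) :=
                sum_le_sum fun u hu => hmk u (mem_filter.1 hu).2
            _ = (#({u | g u v₀} : Finset V) : ℝ) * ((#(D v₀) : ℝ) / M) := by
                rw [sum_const, nsmul_eq_mul]
            _ ≤ _ := by
                refine mul_le_mul_of_nonneg_right ?_ (by positivity)
                exact_mod_cast hin v₀
        have h4 := hθ v₀
        linarith
      obtain ⟨hxD, hxR⟩ := mem_filter.1 hx1
      have hnv : ∀ v ∈ s, v ≠ v₀ := fun v hv h => hv₀ (h ▸ hv)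
      have hφ' : ∀ v ∈ s, Function.update φ v₀ x v = φ v := fun v hv =>
        Function.update_of_ne (hnv v hv) _ _
      have hφ0 : Function.update φ v₀ x v₀ = x := Function.update_self _ _ _
      refine ⟨insert v₀ s, Function.update φ v₀ x, ?_, ?_, ?_, ?_, ?_⟩
      · rw [card_insert_of_notMem hv₀, hs]
      · intro v hv
        rcases mem_insert.1 hv with rfl | hv
        · rw [hφ0]; exact hxD
        · rw [hφ' v hv]; exact hD v hv
      · intro u hu v hv huv
        rcases mem_insert.1 hu with hu' | hu' <;> rcases mem_insert.1 hv with hv' | hv'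
        · rw [hu', hv']
        · rw [hu', hφ0, hφ' v hv'] at huv
          exact (hx2 (huv ▸ mem_image_of_mem φ hv')).elim
        · rw [hv', hφ0, hφ' u hu'] at huv
          exact (hx2 (huv ▸ mem_image_of_mem φ hu')).elim
        · rw [hφ' u hu', hφ' v hv'] at huv
          exact hinj u hu' v hv' huv
      · intro u hu v huv
        rcases mem_insert.1 hu with rfl | hu
        · have hv := hch v huv
          refine ⟨mem_insert_of_mem hv, ?_⟩
          rw [hφ0, hφ' v hv]
          exact hxR ⟨v, huv⟩
        · obtain ⟨h1, h2⟩ := hadj u hu v huv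
          refine ⟨mem_insert_of_mem h1, ?_⟩
          rw [hφ' u hu, hφ' v h1]; exact h2
      · intro u hu
        have hu1 : u ∉ s := fun h => hu (mem_insert_of_mem h)
        by_cases hg : g u v₀
        · have h1 := not_lt.1 (hx3 u hg)
          have hDpos : (0 : ℝ) < #(D v₀) := by exact_mod_cast card_pos.2 ⟨x, hxD⟩
          have hcard : #{c : {v // g u v} | c.1 ∈ insert v₀ s}
              = #{c : {v // g u v} | c.1 ∈ s} + 1 := by
            have : ({c : {v // g u v} | c.1 ∈ insert v₀ s} : Finset {v // g u v})
                = insert ⟨v₀, hg⟩ ({c : {v // g u v} | c.1 ∈ s} : Finset {v // g u v}) := by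
              ext c
              simp [Subtype.ext_iff]
            rw [this, card_insert_of_notMem]
            simp [hv₀]
          have hprod : (∏ c : {v // g u v}, (#(cur D s φ c) : ℝ)) = #(D v₀) *
              ∏ c : {v // g u v}, (#(cur D (insert v₀ s) (Function.update φ v₀ x) c) : ℝ) := by
            rw [← mul_prod_erase univ _ (mem_univ (⟨v₀, hg⟩ : {v // g u v})),
              ← mul_prod_erase univ
                (fun c : {v // g u v} =>
                  (#(cur D (insert v₀ s) (Function.update φ v₀ x) c) : ℝ))
                (mem_univ (⟨v₀, hg⟩ : {v // g u v}))]
            simp only [hcurv₀, hcur0, card_singleton, Nat.cast_one, one_mul]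
            congr 1
            refine prod_congr rfl fun c hc => ?_
            rw [hcur x c fun h => (mem_erase.1 hc).1 (Subtype.ext h)]
          rw [hcard]
          simp only [hbdef] at h1
          rw [hprod] at h1
          have h2 : F u x * #(D v₀) ≤ (β * M ^ (#{c : {v // g u v} | c.1 ∈ s} + 1) *
              ∏ c : {v // g u v}, (#(cur D (insert v₀ s) (Function.update φ v₀ x) c) : ℝ))
              * #(D v₀) := by
            refine h1.trans (le_of_eq ?_)
            ring
          exact le_of_mul_le_mul_right h2 hDpos
        · have hc : ∀ c : {v // g u v}, cur D (insert v₀ s) (Function.update φ v₀ x) c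
              = cur D s φ c := fun c => hcur x c fun h => hg (h ▸ c.2)
          have hcard : ({c : {v // g u v} | c.1 ∈ insert v₀ s} : Finset {v // g u v})
              = ({c : {v // g u v} | c.1 ∈ s} : Finset {v // g u v}) := by
            ext c
            have : c.1 ≠ v₀ := fun h => hg (h ▸ c.2)
            simp [this]
          rw [hcard]
          simp only [hc]
          exact hinv u hu1
  obtain ⟨s, φ, hs, hD, hinj, hadj, -⟩ := main _ le_rfl
  have hsu : s = univ := (card_eq_iff_eq_univ s).1 hs
  subst hsu
  exact ⟨φ, fun v => hD v (mem_univ _), fun u v huv => hinj u (mem_univ _) v (mem_univ _) huv,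
    fun u v huv => (hadj u (mem_univ _) v huv).2⟩
end GBR

namespace GBR
open Classical Finset

/-- Number of forward arcs along a list. -/
noncomputable def fwd {α : Type*} (r : α → α → Prop) : List α → ℕ
  | [] => 0
  | x :: l => l.countP (fun y => decide (r x y)) + fwd r l

lemma fwd_pre {α : Type*} (r : α → α → Prop) (a l l' : List α) (h : l.Perm l') :
    fwd r (a ++ l) + fwd r l' = fwd r (a ++ l') + fwd r l := by
  induction a with
  | nil => simp [Nat.add_comm]
  | cons x a ih =>
    simp only [List.cons_append, fwd, List.countP_append]
    rw [h.countP_eq]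
    omega

lemma fwd_ins {α : Type*} (r : α → α → Prop) (x : α) (b c : List α) :
    fwd r (b ++ x :: c) = fwd r (b ++ c) + b.countP (fun y => decide (r y x))
      + c.countP (fun y => decide (r x y)) := by
  induction b with
  | nil => simp [fwd]; omega
  | cons z b ih =>
    simp only [List.cons_append, fwd, List.countP_append, List.countP_cons]
    rw [ih]
    omega

lemma median {N : ℕ} (T : Digraph (Fin N)) :
    ∃ l : List (Fin N), l.Perm (List.finRange N) ∧
      ∀ l', l'.Perm (List.finRange N) → fwd T.Adj l' ≤ fwd T.Adj l := by
  obtain ⟨l, h1, h2⟩ := exists_max_image ((List.finRange N).permutations.toFinset) (fwd T.Adj)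
    ⟨List.finRange N, by simp⟩
  refine ⟨l, by simpa using h1, fun l' h => h2 l' (by simpa using h)⟩

lemma median_fwd {N : ℕ} (T : Digraph (Fin N)) (hT : T.IsTournament) (l : List (Fin N))
    (hl : l.Perm (List.finRange N))
    (hmax : ∀ l', l'.Perm (List.finRange N) → fwd T.Adj l' ≤ fwd T.Adj l)
    (a b c : List (Fin N)) (x : Fin N) (h : l = a ++ x :: (b ++ c)) :
    b.length ≤ 2 * b.countP (fun y => decide (T.Adj x y)) := by
  have hp : (b ++ x :: c).Perm (x :: (b ++ c)) := List.perm_middle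
  have h1 : fwd T.Adj (a ++ (b ++ x :: c)) ≤ fwd T.Adj l := by
    refine hmax _ (List.Perm.trans ?_ hl)
    rw [h]
    exact hp.append_left a
  rw [h] at h1
  have h2 := fwd_pre T.Adj a _ _ hp
  have h3 := fwd_ins T.Adj x b c
  have h4 : fwd T.Adj (x :: (b ++ c)) = b.countP (fun y => decide (T.Adj x y)) +
    c.countP (fun y => decide (T.Adj x y)) + fwd T.Adj (b ++ c) := by
    simp [fwd, List.countP_append]
  have h5 : b.length = b.countP (fun y => decide (T.Adj x y)) +
      b.countP (fun y => decide (T.Adj y x)) := by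
    rw [List.length_eq_countP_add_countP (fun y => decide (T.Adj x y))]
    congr 1
    refine List.countP_congr fun y hy => ?_
    have hnd : l.Nodup := hl.nodup_iff.2 (List.nodup_finRange N)
    rw [h] at hnd
    have hxy : x ≠ y := by
      rintro rfl
      have := (List.nodup_append.1 hnd).2.1
      simp [hy] at this
    have := hT.2 y x hxy.symm
    simp only [decide_eq_true_eq, this]
  omega

lemma countP_Ico {α : Type*} (l : List α) (p : α → Prop) (a m : ℕ) (h : a + m ≤ l.length) :
    ((l.drop a).take m).countP (fun y => decide (p y))
      = #{t ∈ Ico a (a + m) | ∃ ht : t < l.length, p (l[t])} := by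
  induction m with
  | zero => simp
  | succ m ih =>
    have ham : a + m < l.length := by omega
    rw [List.take_add_one, List.countP_append, ih (by omega), ← Nat.add_assoc,
      Nat.Ico_succ_right_eq_insert_Ico (by omega), filter_insert]
    have hget : (List.drop a l)[m]? = some l[a+m] := by
      rw [List.getElem?_drop, List.getElem?_eq_getElem ham]
    rw [hget]
    by_cases hp : p l[a+m]
    · rw [if_pos ⟨ham, hp⟩, card_insert_of_notMem (by simp)]
      simp [hp]
    · rw [if_neg (by rintro ⟨_, h⟩; exact hp h)]
      simp [hp]

/-- Median order on positions. -/
lemma median_pos {N : ℕ} (T : Digraph (Fin N)) (hT : T.IsTournament) :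
    ∃ (R : ℕ → ℕ → Prop) (e : ℕ → Fin N ⊕ Unit), 
      (∀ i < N, ∃ v, e i = Sum.inl v) ∧
      (∀ i < N, ∀ j < N, e i = e j → i = j) ∧
      (∀ i < N, ∀ j < N, ∀ u v, e i = Sum.inl u → e j = Sum.inl v → R i j → T.Adj u v) ∧
      (∀ i < N, ∀ j < N, i ≠ j → R i j ∨ R j i) ∧
      ∀ i m, i + 1 + m ≤ N → m ≤ 2 * #{t ∈ Ico (i + 1) (i + 1 + m) | R i t} := by
  obtain ⟨l, hl, hmax⟩ := median T
  have hlen : l.length = N := by simpa using hl.length_eq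
  have hnd : l.Nodup := hl.nodup_iff.2 (List.nodup_finRange N)
  obtain ⟨R, hR⟩ : ∃ R : ℕ → ℕ → Prop, ∀ i j, R i j ↔
      ∃ (hi : i < l.length) (hj : j < l.length), T.Adj l[i] l[j] := ⟨_, fun _ _ => Iff.rfl⟩
  refine ⟨R,
    fun i => if h : i < l.length then Sum.inl l[i] else Sum.inr (), ?_, ?_, ?_, ?_, ?_⟩
  · intro i hi
    exact ⟨l[i], by simp [hlen, hi]⟩
  · intro i hi j hj h
    simp only [hlen, hi, hj, dite_true, Sum.inl.injEq] at h
    exact (hnd.getElem_inj_iff).1 h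
  · intro i hi j hj u v hu hv h
    obtain ⟨_, _, h⟩ := (hR i j).1 h
    simp only [hlen, hi, hj, dite_true, Sum.inl.injEq] at hu hv
    subst hu hv
    exact h
  · intro i hi j hj hij
    have hne : l[i] ≠ l[j] := fun h => hij (hnd.getElem_inj_iff.1 h)
    have := hT.2 _ _ hne
    by_cases h : T.Adj l[i] l[j]
    · exact Or.inl ((hR _ _).2 ⟨by omega, by omega, h⟩)
    · refine Or.inr ((hR _ _).2 ⟨by omega, by omega, ?_⟩)
      tauto
  · intro i m him
    have hi : i < l.length := by omega
    have h1 := median_fwd T hT l hl hmax (l.take i) ((l.drop (i+1)).take m)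
      ((l.drop (i+1)).drop m) l[i] (by
        rw [List.take_append_drop, ← List.drop_eq_getElem_cons, List.take_append_drop])
    rw [countP_Ico _ _ _ _ (by omega)] at h1
    have h2 : ((l.drop (i+1)).take m).length = m := by
      rw [List.length_take, List.length_drop]; omega
    rw [h2] at h1
    refine h1.trans (Nat.mul_le_mul_left _ (card_le_card (fun t ht => ?_)))
    rw [mem_filter] at ht ⊢
    obtain ⟨h3, h4, h5⟩ := ht
    exact ⟨h3, (hR _ _).2 ⟨hi, h4, h5⟩⟩
end GBR

namespace GBR
open Classical Finset

lemma density (R : ℕ → ℕ → Prop) (N : ℕ)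
    (hmed : ∀ i m, i + 1 + m ≤ N → m ≤ 2 * #{t ∈ Ico (i + 1) (i + 1 + m) | R i t})
    (P : Finset ℕ) (a L L' : ℕ) (hP : P ⊆ Ico a (a + L)) (hL : L ≤ 2 * L')
    (h : a + L + 6 * L' ≤ N) :
    ∃ q, a + L ≤ q ∧ q + L' ≤ a + L + 6 * L' ∧
      #P * L' ≤ 3 * ∑ x ∈ P, #{v ∈ Ico q (q + L') | R x v} := by
  set b := a + L with hb
  have h1 : ∀ x ∈ P, 2 * L' ≤ ∑ i ∈ range 6, #{v ∈ Ico (b + i * L') (b + i * L' + L') | R x v} := by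
    intro x hx
    have hx' := mem_Ico.1 (hP hx)
    have h2 := hmed x (b + 6 * L' - (x + 1)) (by omega)
    rw [show x + 1 + (b + 6 * L' - (x + 1)) = b + 6 * L' by omega] at h2
    have hsub : ({t ∈ Ico (x + 1) (b + 6 * L') | R x t} : Finset ℕ) ⊆ Ico (x + 1) b ∪
        (range 6).biUnion fun i => {v ∈ Ico (b + i * L') (b + i * L' + L') | R x v} := by
      intro t ht
      obtain ⟨ht1, ht2⟩ := mem_filter.1 ht
      rw [mem_Ico] at ht1
      rw [mem_union]
      by_cases htb : t < b
      · left; exact mem_Ico.2 ⟨ht1.1, htb⟩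
      · right
        have hL' : 0 < L' := by omega
        have h3 := Nat.div_add_mod (t - b) L'
        have h4 := Nat.mod_lt (t - b) hL'
        refine mem_biUnion.2 ⟨(t - b) / L', ?_, mem_filter.2 ⟨mem_Ico.2 ?_, ht2⟩⟩
        · rw [mem_range, Nat.div_lt_iff_lt_mul hL']; omega
        · rw [Nat.mul_comm] at h3
          omega
    have h5 := (card_le_card hsub).trans ((card_union_le _ _).trans
      (Nat.add_le_add_left card_biUnion_le _))
    rw [Nat.card_Ico] at h5
    omega
  by_contra hcon
  push Not at hcon
  have h2 : ∀ i ∈ range 6, 3 * ∑ x ∈ P, #{v ∈ Ico (b + i * L') (b + i * L' + L') | R x v}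
      < #P * L' := by
    intro i hi
    rw [mem_range] at hi
    refine hcon _ (by omega) ?_
    have : (i + 1) * L' ≤ 6 * L' := Nat.mul_le_mul_right _ (by omega)
    linarith
  have h3 := sum_lt_sum_of_nonempty (s := range 6) ⟨0, by simp⟩ h2
  rw [← mul_sum, sum_comm, sum_const, card_range, smul_eq_mul] at h3
  have h4 := sum_le_sum h1
  rw [sum_const, smul_eq_mul] at h4
  nlinarith

/-- Data produced at each block. -/
def Rel {W : Type*} (R : W → W → Prop) (Δ w : ℕ) (P Q : Finset W) (E : ℕ → Finset W) (Y : Finset W) : Prop :=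
  Q ⊆ Y ∧ (∀ j ≤ w, E j ⊆ P) ∧ (∀ j < w, E (j+1) ⊆ E j) ∧
    (∀ j ≤ w, (#P:ℝ) ≤ 3^(6*(Δ*w)) * #(E j)) ∧ (#Y:ℝ) ≤ 3^(8*(Δ*w)) * #Q ∧
    ∀ j < w, badW R P Y Δ ((1/3)^(20*(Δ*w))) (E j) (E (j+1) ∪ Q) ≤
      4 * 3^(2*Δ) * ((1/3)^(20*(Δ*w)))^(2*Δ) * 3^Δ

lemma states (R : ℕ → ℕ → Prop) (N : ℕ)
    (hmed : ∀ i m, i + 1 + m ≤ N → m ≤ 2 * #{t ∈ Ico (i + 1) (i + 1 + m) | R i t})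
    (htot : ∀ i < N, ∀ j < N, i ≠ j → R i j ∨ R j i) (Δ w : ℕ) (hΔ : 1 ≤ Δ) (hw : 1 ≤ w)
    (ℓ : ℕ → ℕ) (hℓ : ∀ k, 1 ≤ ℓ k) (h2 : ∀ k, ℓ k ≤ 2 * ℓ (k + 1)) (n : ℕ)
    (hN : ∑ k ∈ range (n + 1), 6 * (3 ^ (35 * (Δ * w)) * ℓ k) ≤ N) :
    ∃ (P : ℕ → Finset ℕ) (pos : ℕ → ℕ),
      (∀ k ≤ n, P k ⊆ Ico (pos k) (pos k + 3 ^ (35 * (Δ * w)) * ℓ k) ∧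
        ((3 : ℝ) ^ (35 * (Δ * w)) * ℓ k) ≤ 3 ^ (8 * (Δ * w)) * #(P k) ∧
        pos k + 3 ^ (35 * (Δ * w)) * ℓ k ≤ N) ∧
      ∀ k < n, pos k + 3 ^ (35 * (Δ * w)) * ℓ k ≤ pos (k + 1) ∧
        ∃ E Y, Rel R Δ w (P k) (P (k + 1)) E Y := by
  set L : ℕ → ℕ := fun k => 3 ^ (35 * (Δ * w)) * ℓ k with hLdef
  let Valid : ℕ → Finset ℕ × ℕ → Prop := fun k s =>
    s.1 ⊆ Ico s.2 (s.2 + L k) ∧ ((3 : ℝ) ^ (35 * (Δ * w)) * ℓ k) ≤ 3 ^ (8 * (Δ * w)) * #s.1 ∧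
      s.2 + L k ≤ ∑ j ∈ range (k + 1), 6 * L j
  have hmono : ∀ k ≤ n, ∑ j ∈ range (k + 1), 6 * L j ≤ N := fun k hk =>
    le_trans (sum_le_sum_of_subset (range_subset_range.2 (by omega))) hN
  have step : ∀ k s, ∃ s' : Finset ℕ × ℕ, k < n → Valid k s → Valid (k + 1) s' ∧
      s.2 + L k ≤ s'.2 ∧ ∃ E Y, Rel R Δ w s.1 s'.1 E Y := by
    intro k s
    by_cases hk : k < n
    swap
    · exact ⟨s, fun h => absurd h hk⟩
    by_cases hs : Valid k s
    swap
    · exact ⟨s, fun _ h => absurd h hs⟩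
    obtain ⟨hs1, hs2, hs3⟩ := hs
    have hk1 := hmono (k + 1) (by omega)
    rw [sum_range_succ] at hk1
    obtain ⟨q, hq1, hq2, hq3⟩ := density R N hmed s.1 s.2 (L k) (L (k + 1)) hs1
      (by
        simp only [hLdef]
        calc _ ≤ 3 ^ (35 * (Δ * w)) * (2 * ℓ (k + 1)) := Nat.mul_le_mul_left _ (h2 k)
          _ = _ := by ring) (by omega)
    have hLpos : 0 < L (k + 1) := by
      simp only [hLdef]
      have := hℓ (k + 1)
      positivity
    have hcard : #(Ico q (q + L (k + 1))) = L (k + 1) := by simp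
    have hbig : (3 : ℝ) ^ (7 * (Δ * w)) ≤ #s.1 := by
      have h1 : (1 : ℝ) ≤ ℓ k := by exact_mod_cast hℓ k
      have h3 : (3 : ℝ) ^ (35 * (Δ * w)) ≤ 3 ^ (8 * (Δ * w)) * #s.1 := by
        refine le_trans ?_ hs2
        exact le_mul_of_one_le_right (by positivity) h1
      have h4 : (3 : ℝ) ^ (8 * (Δ * w)) * 3 ^ (7 * (Δ * w)) ≤ 3 ^ (35 * (Δ * w)) := by
        rw [← pow_add]
        exact pow_le_pow_right₀ (by norm_num) (by omega)
      exact le_of_mul_le_mul_left (h4.trans h3) (by positivity)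
    obtain ⟨E, Q, hQ, hE1, hE2, hE3, hQ2, hE4⟩ := block R s.1 (Ico q (q + L (k + 1))) Δ w hΔ hw
      ⟨q, by simp [hLpos]⟩ (by rw [hcard]; exact_mod_cast hq3) hbig (by
        intro x hx y hy hxy
        have hx' := mem_Ico.1 (hs1 hx)
        have hy' := mem_Ico.1 (hs1 hy)
        have := hmono k (by omega)
        exact htot x (by omega) y (by omega) hxy)
    refine ⟨(Q, q), fun _ _ => ⟨⟨hQ, ?_, ?_⟩, hq1, E, _, hQ, hE1, hE2, hE3, hQ2, hE4⟩⟩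
    · rw [hcard] at hQ2
      simp only [hLdef] at hQ2
      push_cast at hQ2
      exact hQ2
    · rw [sum_range_succ]
      show q + L (k + 1) ≤ _
      omega
  choose nxt hnxt using step
  let st : ℕ → Finset ℕ × ℕ := fun k => Nat.rec (Ico 0 (L 0), 0) nxt k
  have hst : ∀ k ≤ n, Valid k (st k) := by
    intro k
    induction k with
    | zero =>
      intro _
      have st0 : st 0 = (Ico 0 (L 0), 0) := rfl
      rw [st0]
      refine ⟨by simp, ?_, ?_⟩
      · simp only [Nat.card_Ico, Nat.sub_zero, hLdef]
        push_cast
        refine le_mul_of_one_le_left (by positivity) (one_le_pow₀ (by norm_num))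
      · simp only [zero_add, range_one, sum_singleton]; omega
    | succ k ih =>
      intro hk
      exact (hnxt k (st k) (by omega) (ih (by omega))).1
  refine ⟨fun k => (st k).1, fun k => (st k).2, fun k hk => ?_, fun k hk => ?_⟩
  · exact ⟨(hst k hk).1, (hst k hk).2.1, (hst k hk).2.2.trans (hmono k hk)⟩
  · exact (hnxt k (st k) hk (hst k (by omega))).2
end GBR

namespace GBR
open Classical Finset

lemma levels {V : Type*} [Fintype V] (g : V → V → Prop) (f : V → ℕ) (w : ℕ)
    (h : ∀ u v, g u v → f u + 1 ≤ f v ∧ f v ≤ f u + w) :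
    ∃ f' : V → ℕ, (∀ u v, g u v → f' u + 1 ≤ f' v ∧ f' v ≤ f' u + w) ∧
      ∀ v, f' v < Fintype.card V := by
  refine ⟨fun v => #{x ∈ univ.image f | x < f v}, fun u v huv => ?_, fun v => ?_⟩
  · obtain ⟨h1, h2⟩ := h u v huv
    constructor
    · refine Nat.succ_le_of_lt (card_lt_card ?_)
      rw [ssubset_iff_of_subset]
      · exact ⟨f u, mem_filter.2 ⟨mem_image_of_mem _ (mem_univ _), by omega⟩,
          fun hh => lt_irrefl _ (mem_filter.1 hh).2⟩
      · intro x hx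
        obtain ⟨hx1, hx2⟩ := mem_filter.1 hx
        exact mem_filter.2 ⟨hx1, by omega⟩
    · have hsub : ({x ∈ univ.image f | x < f v} : Finset ℕ) ⊆
          ({x ∈ univ.image f | x < f u} : Finset ℕ) ∪ Ico (f u) (f v) := by
        intro x hx
        obtain ⟨hx1, hx2⟩ := mem_filter.1 hx
        rw [mem_union, mem_filter, mem_Ico]
        by_cases hxu : x < f u
        · exact Or.inl ⟨hx1, hxu⟩
        · exact Or.inr ⟨by omega, hx2⟩
      have := (card_le_card hsub).trans (card_union_le _ _)
      rw [Nat.card_Ico] at this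
      show #{x ∈ univ.image f | x < f v} ≤ #{x ∈ univ.image f | x < f u} + w
      omega
  · refine lt_of_lt_of_le (card_lt_card (t := univ.image f) ?_) card_image_le
    rw [ssubset_iff_of_subset (filter_subset _ _)]
    exact ⟨f v, mem_image_of_mem _ (mem_univ _), fun hh => lt_irrefl _ (mem_filter.1 hh).2⟩

lemma lens (c : ℕ → ℕ) : ∃ ℓ : ℕ → ℕ, (∀ k, c k < ℓ k) ∧ (∀ k, ℓ k ≤ 2 * ℓ (k + 1)) ∧
    ∀ K, ∑ k ∈ range (K + 1), ℓ k + ℓ K ≤ 2 * ∑ k ∈ range (K + 1), (c k + 1) := by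
  let ℓ : ℕ → ℕ := fun k => Nat.rec (c 0 + 1) (fun k r => r / 2 + (c (k + 1) + 1)) k
  have h0 : ℓ 0 = c 0 + 1 := rfl
  have hs : ∀ k, ℓ (k + 1) = ℓ k / 2 + (c (k + 1) + 1) := fun k => rfl
  refine ⟨ℓ, fun k => ?_, fun k => ?_, fun K => ?_⟩
  · cases k with
    | zero => omega
    | succ k => have := hs k; omega
  · have := hs k; omega
  · induction K with
    | zero => simp [h0]; omega
    | succ K ih =>
      rw [sum_range_succ, sum_range_succ _ (K + 1)]
      have := hs K
      omega

lemma sul {W : Type*} (s t : Finset W) : s ⊆ s ∪ t := subset_union_left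

lemma sur {W : Type*} (s t : Finset W) : t ⊆ s ∪ t := subset_union_right

lemma numeric (Δ w : ℕ) (hΔ : 1 ≤ Δ) (hw : 1 ≤ w) (x : ℝ) (hx0 : 0 < x)
    (hx : x * 3 ^ (20 * (Δ * w)) = 1) :
    4 * 3 ^ (2 * Δ) * x ^ (2 * Δ) * 3 ^ Δ * (3 ^ (14 * (Δ * w))) ^ Δ * (2 * Δ / x) ^ Δ < 1 := by
  set e := Δ * w with he
  have hΔe : Δ ≤ e := Nat.le_mul_of_pos_right _ hw
  have he1 : 1 ≤ e := hΔ.trans hΔe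
  have h1 : (2 * Δ : ℝ) < 3 ^ e := by
    have hb : (1 : ℝ) + Δ * 2 ≤ (1 + 2) ^ Δ := one_add_mul_le_pow (by norm_num) Δ
    have h2 : (3 : ℝ) ^ Δ ≤ 3 ^ e := pow_le_pow_right₀ (by norm_num) hΔe
    norm_num at hb
    linarith
  have h2 : (108 : ℝ) ≤ 3 ^ (5 * e) := by
    calc (108 : ℝ) ≤ 3 ^ 5 := by norm_num
      _ ≤ _ := pow_le_pow_right₀ (by norm_num) (by omega)
  have hbase : 108 * x * 3 ^ (14 * e) * (2 * Δ) < 1 := by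
    have hpos : (0 : ℝ) < 2 * Δ := by
      have : (1 : ℝ) ≤ Δ := by exact_mod_cast hΔ
      linarith
    calc 108 * x * 3 ^ (14 * e) * (2 * Δ) ≤ 3 ^ (5 * e) * x * 3 ^ (14 * e) * (2 * Δ) := by gcongr
      _ < 3 ^ (5 * e) * x * 3 ^ (14 * e) * 3 ^ e := by gcongr
      _ = x * 3 ^ (20 * e) := by ring
      _ = 1 := hx
  calc 4 * 3 ^ (2 * Δ) * x ^ (2 * Δ) * 3 ^ Δ * (3 ^ (14 * e)) ^ Δ * (2 * Δ / x) ^ Δ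
      ≤ 4 ^ Δ * 3 ^ (2 * Δ) * x ^ (2 * Δ) * 3 ^ Δ * (3 ^ (14 * e)) ^ Δ * (2 * Δ / x) ^ Δ := by
        gcongr
        exact le_self_pow₀ (by norm_num) (by omega)
    _ = (108 * x * 3 ^ (14 * e) * (2 * Δ)) ^ Δ := by
        rw [pow_mul 3 2, pow_mul x 2, ← mul_pow, ← mul_pow, ← mul_pow, ← mul_pow, ← mul_pow]
        congr 1
        field_simp
        norm_num
    _ < 1 := pow_lt_one₀ (by positivity) hbase (by omega)

set_option maxHeartbeats 1000000 in
lemma main {V : Type*} [Fintype V] (g : V → V → Prop) (Δ w : ℕ) (hΔ : 1 ≤ Δ) (hw : 1 ≤ w)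
    (hout : ∀ u, Fintype.card {v // g u v} ≤ Δ) (hin : ∀ v, #{u | g u v} ≤ Δ)
    (f₀ : V → ℕ) (hf₀ : ∀ u v, g u v → f₀ u + 1 ≤ f₀ v ∧ f₀ v ≤ f₀ u + w)
    (N : ℕ) (hN : 3 ^ (39 * (Δ * w)) * Fintype.card V ≤ N) (hn : 1 ≤ Fintype.card V)
    (R : ℕ → ℕ → Prop)
    (hmed : ∀ i m, i + 1 + m ≤ N → m ≤ 2 * #{t ∈ Ico (i + 1) (i + 1 + m) | R i t})
    (htot : ∀ i < N, ∀ j < N, i ≠ j → R i j ∨ R j i) :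
    ∃ φ : V → ℕ, (∀ v, φ v < N) ∧ Function.Injective φ ∧ ∀ u v, g u v → R (φ u) (φ v) := by
  obtain ⟨f, hf, hfn⟩ := levels g f₀ w hf₀
  set n := Fintype.card V with hndef
  set e := Δ * w with he
  have he1 : 1 ≤ e := Nat.mul_pos hΔ hw
  obtain ⟨ℓ, hℓ1, hℓ2, hℓ3⟩ := lens fun k => #{v | f v / w = k}
  have hsum : ∑ k ∈ range (n + 1), ℓ k ≤ 6 * n := by
    have h1 := hℓ3 n
    rw [sum_add_distrib, sum_const, card_range, smul_eq_mul, mul_one] at h1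
    have h2 : ∑ k ∈ range (n + 1), #{v | f v / w = k} = n := by
      rw [hndef, ← card_univ]
      refine (card_eq_sum_card_fiberwise fun v _ => ?_).symm
      have := Nat.div_le_self (f v) w
      have := hfn v
      simp
      omega
    omega
  have hN' : ∑ k ∈ range (n + 1), 6 * (3 ^ (35 * e) * ℓ k) ≤ N := by
    rw [← mul_sum, ← mul_sum]
    calc 6 * (3 ^ (35 * e) * ∑ k ∈ range (n + 1), ℓ k) ≤ 6 * (3 ^ (35 * e) * (6 * n)) := by gcongr
      _ = 36 * 3 ^ (35 * e) * n := by ring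
      _ ≤ 3 ^ (4 * e) * 3 ^ (35 * e) * n := by
        gcongr
        calc 36 ≤ 3 ^ 4 := by norm_num
          _ ≤ _ := Nat.pow_le_pow_right (by norm_num) (by omega)
      _ = 3 ^ (39 * e) * n := by ring
      _ ≤ N := hN
  obtain ⟨P, pos, hP, hst⟩ := states R N hmed htot Δ w hΔ hw ℓ
    (fun k => by have := hℓ1 k; omega) hℓ2 n hN'
  rw [← he] at hP hst
  have hrel0 : ∀ k, ∃ E Y, k < n → Rel R Δ w (P k) (P (k + 1)) E Y := by
    intro k
    by_cases hk : k < n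
    · obtain ⟨E, Y, h⟩ := (hst k hk).2
      exact ⟨E, Y, fun _ => h⟩
    · exact ⟨fun _ => ∅, ∅, fun h => absurd h hk⟩
  choose E Y hrel using hrel0
  have hkn : ∀ v, f v / w < n := fun v => (Nat.div_le_self _ _).trans_lt (hfn v)
  have hjw : ∀ v, f v % w < w := fun v => Nat.mod_lt _ hw
  set D : V → Finset ℕ := fun v => E (f v / w) (f v % w) with hDdef
  have hanti : ∀ k < n, ∀ j' ≤ w, ∀ j ≤ j', E k j' ⊆ E k j := by
    intro k hk j' hj' j hj
    induction j', hj using Nat.le_induction with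
    | base => exact Subset.refl _
    | succ m hm ih => exact ((hrel k hk).2.2.1 m (by omega)).trans (ih (by omega))
  have hDP : ∀ v, D v ⊆ P (f v / w) := fun v => (hrel _ (hkn v)).2.1 _ (hjw v).le
  have hDI : ∀ v, D v ⊆ Ico (pos (f v / w)) (pos (f v / w) + 3 ^ (35 * e) * ℓ (f v / w)) :=
    fun v => (hDP v).trans (hP _ (hkn v).le).1
  have hDcard : ∀ v, (#(P (f v / w)) : ℝ) ≤ 3 ^ (6 * e) * #(D v) := fun v =>
    (hrel _ (hkn v)).2.2.2.1 _ (hjw v).le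
  have hDbig : ∀ v, (3 : ℝ) ^ (21 * e) * ℓ (f v / w) ≤ #(D v) := by
    intro v
    have h1 := (hP _ (hkn v).le).2.1
    have h2 := mul_le_mul_of_nonneg_left (hDcard v) (by positivity : (0 : ℝ) ≤ 3 ^ (8 * e))
    have h3 : (3 : ℝ) ^ (14 * e) * (3 ^ (21 * e) * ℓ (f v / w)) ≤ 3 ^ (14 * e) * #(D v) := by
      calc _ = (3 : ℝ) ^ (35 * e) * ℓ (f v / w) := by ring
        _ ≤ _ := h1
        _ ≤ _ := h2
        _ = _ := by ring
    exact le_of_mul_le_mul_left h3 (by positivity)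
  have hℓpos : ∀ k, (0 : ℝ) < ℓ k := fun k => by
    have := hℓ1 k
    exact_mod_cast (by omega : 0 < ℓ k)
  have hDpos : ∀ v, (0 : ℝ) < #(D v) := fun v =>
    lt_of_lt_of_le (mul_pos (by positivity) (hℓpos _)) (hDbig v)
  have hne : ∀ v, (D v).Nonempty := fun v => by
    rw [← card_pos]; exact_mod_cast hDpos v
  have hposmono : ∀ k k', k < k' → k' ≤ n → pos k + 3 ^ (35 * e) * ℓ k ≤ pos k' := by
    intro k k' hkk'
    induction k', hkk' using Nat.le_induction with
    | base => intro h; exact (hst k (by omega)).1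
    | succ m hm ih =>
      intro h
      have h1 := ih (by omega)
      have h2 := (hst m (by omega)).1
      omega
  have hdisj : ∀ u v, ¬ Disjoint (D v) (D u) → f v / w = f u / w := by
    intro u v h
    rw [not_disjoint_iff] at h
    obtain ⟨a, ha1, ha2⟩ := h
    have h1 := mem_Ico.1 (hDI v ha1)
    have h2 := mem_Ico.1 (hDI u ha2)
    rcases lt_trichotomy (f v / w) (f u / w) with h3 | h3 | h3
    · have := hposmono _ _ h3 (hkn u).le
      omega
    · exact h3
    · have := hposmono _ _ h3 (hkn v).le
      omega
  set x : ℝ := (1 / 3) ^ (20 * e) with hxdef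
  have hx0 : 0 < x := by positivity
  have hx : x * 3 ^ (20 * e) = 1 := third_mul _
  have hx1 : x ≤ 1 := pow_le_one₀ (by norm_num) (by norm_num)
  have hΔR : (1 : ℝ) ≤ Δ := by exact_mod_cast hΔ
  have hM : 1 ≤ 2 * Δ / x := by
    rw [le_div_iff₀ hx0]; linarith
  set lam : ℝ := 4 * 3^(2*Δ) * x^(2*Δ) * 3^Δ with hlam
  have hlam0 : 0 ≤ lam := by positivity
  have hρ : (1 : ℝ) ≤ 3 ^ (14 * e) := one_le_pow₀ (by norm_num)
  have hbad : ∀ u, (#{ψ ∈ Fintype.piFinset (fun c : {v // g u v} => D c) |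
      (#{y ∈ D u | ∀ c, R y (ψ c)} : ℝ) < x * #(D u)} : ℝ) ≤
      lam * (3 ^ (14 * e)) ^ Δ * ∏ c : {v // g u v}, (#(D c) : ℝ) := by
    intro u
    have hr := hrel _ (hkn u)
    have hbw := hr.2.2.2.2.2 _ (hjw u)
    have key := wcount R (P (f u / w)) (Y (f u / w)) Δ x (D u) _ lam hbw
      (ι := {v // g u v}) (hout u) (fun c => D c) (3 ^ (14 * e)) hρ ?_ (fun c => hne c)
    · refine le_trans (le_of_eq ?_) key
      congr!
    · intro c
      obtain ⟨hc1, hc2⟩ := hf u c c.2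
      have hd1 := Nat.div_add_mod (f u) w
      have hd2 := Nat.div_add_mod (f c) w
      have hle : f u / w ≤ f c / w := Nat.div_le_div_right (by omega)
      have hle2 : f c / w ≤ f u / w + 1 := by
        rw [← Nat.add_div_right _ hw]
        exact Nat.div_le_div_right hc2
      rcases hle.eq_or_lt with heq | hlt
      · have hsub : D c ⊆ E (f u / w) (f u % w + 1) := by
          simp only [hDdef, ← heq]
          refine hanti _ (hkn u) _ (hjw c).le _ ?_
          rw [← heq] at hd2
          omega
        refine ⟨hsub.trans (sul _ _), Or.inl ⟨?_, ?_⟩⟩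
        · rw [heq]; exact hDP c
        · rw [heq]
          refine (hDcard c).trans ?_
          gcongr
          · norm_num
          · norm_num
      · have heq : f u / w + 1 = f c / w := by omega
        have hsub : D c ⊆ P (f u / w + 1) := by rw [heq]; exact hDP c
        refine ⟨hsub.trans (sur _ _), Or.inr ⟨hsub.trans hr.1, ?_⟩⟩
        refine hr.2.2.2.2.1.trans ?_
        have h4 := hDcard c
        rw [← heq] at h4
        calc _ ≤ (3 : ℝ) ^ (8 * e) * (3 ^ (6 * e) * #(D c)) := by gcongr
          _ = _ := by ring
  have hθ : ∀ u, Δ * (#(D u) / (2 * Δ / x)) + #{v | ¬ Disjoint (D v) (D u)} < x * #(D u) := by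
    intro u
    have h1 : (#{v | ¬ Disjoint (D v) (D u)} : ℝ) < ℓ (f u / w) := by
      have h2 : #{v | ¬ Disjoint (D v) (D u)} ≤ #{v | f v / w = f u / w} := by
        refine card_le_card fun v hv => ?_
        exact mem_filter.2 ⟨mem_univ _, hdisj u v (mem_filter.1 hv).2⟩
      have h3 := hℓ1 (f u / w)
      exact_mod_cast lt_of_le_of_lt h2 h3
    have h2 : (Δ : ℝ) * (#(D u) / (2 * Δ / x)) = x * #(D u) / 2 := by
      field_simp
    have h3 : 3 ^ e * (ℓ (f u / w) : ℝ) ≤ x * #(D u) := by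
      calc 3 ^ e * (ℓ (f u / w) : ℝ) = (x * 3 ^ (20 * e)) * (3 ^ e * (ℓ (f u / w) : ℝ)) := by
            rw [hx, one_mul]
        _ = x * (3 ^ (21 * e) * ℓ (f u / w)) := by ring
        _ ≤ _ := mul_le_mul_of_nonneg_left (hDbig u) hx0.le
    have h4 : (3 : ℝ) ≤ 3 ^ e := le_self_pow₀ (by norm_num) (by omega)
    have h5 := mul_le_mul_of_nonneg_right h4 (hℓpos (f u / w)).le
    have h6 := hℓpos (f u / w)
    show (Δ : ℝ) * (#(D u) / (2 * Δ / x)) + _ < x * #(D u)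
    rw [h2]
    linarith
  obtain ⟨φ, h1, h2, h3⟩ := embed g f (fun u v h => (hf u v h).1) R D Δ hout hin hne
    (fun u => x * #(D u)) (2 * Δ / x) (lam * (3 ^ (14 * e)) ^ Δ) hM (by positivity)
    (numeric Δ w hΔ hw x hx0 hx) hbad (fun u => by convert hθ u)
  refine ⟨φ, fun v => ?_, h2, h3⟩
  have h4 := mem_Ico.1 (hDI v (h1 v))
  have h5 := (hP _ (hkn v).le).2.2
  omega
end GBR

namespace GBR
open Classical Finset

lemma final {V : Type} [Fintype V] (G : Digraph V)
    (Δ w : ℕ) (hΔ : 1 ≤ Δ) (hw : 1 ≤ w)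
    (hdeg : ∀ v : V, G.degree v ≤ Δ)
    (hband : G.GradedBandwidthAtMost w) :
    orientedRamsey G ≤ 3 ^ (57 * Δ * w) * Fintype.card V := by
  refine Nat.sInf_le ?_
  intro T hT
  obtain ⟨f, hf⟩ := hband
  rcases Nat.eq_zero_or_pos (Fintype.card V) with h0 | hpos
  · have : IsEmpty V := Fintype.card_eq_zero_iff.1 h0
    exact ⟨fun v => isEmptyElim v, fun v => isEmptyElim v, fun v => isEmptyElim v⟩
  obtain ⟨R, e, he1, he2, he3, htot, hmed⟩ := median_pos T hT
  have hout : ∀ u, Fintype.card {v // G.Adj u v} ≤ Δ := by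
    intro u
    refine le_trans ?_ (hdeg u)
    rw [Digraph.degree, ← Nat.card_eq_fintype_card]
    exact Nat.card_mono (Set.toFinite {v | G.Adj u v ∨ G.Adj v u}) fun v hv => Or.inl hv
  have hin : ∀ v, #{u | G.Adj u v} ≤ Δ := by
    intro v
    refine le_trans ?_ (hdeg v)
    have h1 : #{u | G.Adj u v} = Nat.card {u | G.Adj u v} := by
      rw [Nat.card_eq_fintype_card, Fintype.card_subtype]
      rfl
    rw [Digraph.degree, h1]
    exact Nat.card_mono (Set.toFinite {u | G.Adj v u ∨ G.Adj u v}) fun u hu => Or.inr hu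
  obtain ⟨φ, h1, h2, h3⟩ := main G.Adj Δ w hΔ hw hout hin f hf _
    (Nat.mul_le_mul_right _ (Nat.pow_le_pow_right (by norm_num)
      (by rw [Nat.mul_assoc]; exact Nat.mul_le_mul_right _ (by norm_num)))) hpos R hmed htot
  choose ψ hψ using fun v => he1 (φ v) (h1 v)
  refine ⟨ψ, fun u v huv => h2 (he2 _ (h1 u) _ (h1 v) ?_), fun u v huv => ?_⟩
  · rw [hψ u, hψ v, huv]
  · exact he3 _ (h1 u) _ (h1 v) _ _ (hψ u) (hψ v) (h3 u v huv)
end GBR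

/-- If `G` has maximum degree at most `Δ ≥ 1` and graded bandwidth at most
`w ≥ 1`, then `r⃗(G) ≤ 3^(57Δw) · |V(G)|`. -/
theorem graded_bandwidth_oriented_ramsey {V : Type} [Fintype V] (G : Digraph V)
    (Δ w : ℕ) (hΔ : 1 ≤ Δ) (hw : 1 ≤ w)
    (hdeg : ∀ v : V, G.degree v ≤ Δ)
    (hband : G.GradedBandwidthAtMost w) :
    orientedRamsey G ≤ 3 ^ (57 * Δ * w) * Fintype.card V := by
  exact GBR.final G Δ w hΔ hw hdeg hband
end
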